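/- (PRV component) Let λ and μ be dominant weights of a semisimple complex Lie group G, and let w be any element of the Weyl group. Then the irreducible representation whose highest weight is the dominant representative of λ + wμ occurs in V(λ) ⊗ V(μ). -/

import Mathlib

/-!
(PRV component.)  Let `λ` and `μ` be dominant weights of a semisimple complex Lie group `G`,
and let `w` be any element of the Weyl group.  Then the irreducible representation whose highest
weight is the dominant representative `ν` of `λ + wμ` occurs in `V(λ) ⊗ V(μ)`.

Occurrence of `V(ν)` in the (completely reducible) tensor product is rendered as the existence
of a highest weight vector of weight `ν`; `ν` is the dominant representative of `λ + wμ`: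
it is dominant (`⟨ν, α∨⟩` is a non-negative integer for positive `α`) and Weyl-conjugate
to `λ + wμ`.
-/

open scoped TensorProduct
open scoped TensorProduct Pointwise

section LieFramework

variable {L : Type*} [LieRing L] [LieAlgebra ℂ L] [FiniteDimensional ℂ L]
  [LieAlgebra.IsKilling ℂ L] (H : LieSubalgebra ℂ L) [H.IsCartanSubalgebra]

/-- `α` is a root of `L` with respect to the Cartan subalgebra `H`. -/
def IsRootOf (α : H → ℂ) : Prop := α ≠ 0 ∧ LieAlgebra.rootSpace H α ≠ ⊥

/-- `P` is a system of positive roots: every root or its negative is in `P`, never both, `P`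
consists of roots, and `P` is closed under addition (when the sum is a root). -/
def IsPositiveSystem (P : Set (H → ℂ)) : Prop :=
  (∀ α ∈ P, IsRootOf H α) ∧
  (∀ α : H → ℂ, IsRootOf H α → (α ∈ P ∨ -α ∈ P)) ∧
  (∀ α ∈ P, -α ∉ P) ∧
  (∀ α ∈ P, ∀ β ∈ P, IsRootOf H (α + β) → α + β ∈ P)

variable {V : Type*} [AddCommGroup V] [Module ℂ V] [LieRingModule L V] [LieModule ℂ L V]

/-- `v` is a highest weight vector of weight `λ`, for the positive system `P`: it is a nonzero
vector of weight `λ` annihilated by all positive root spaces. -/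
def IsHWVec (P : Set (H → ℂ)) (lam : H → ℂ) (v : V) : Prop :=
  v ≠ 0 ∧ v ∈ LieModule.genWeightSpace V lam ∧
    ∀ α ∈ P, ∀ x ∈ LieAlgebra.rootSpace H α, ⁅(x : L), v⁆ = 0

/-- `V` is (a model of) the irreducible module `V(λ)` of highest weight `λ`. -/
def IsHWModule (P : Set (H → ℂ)) (lam : H → ℂ) (V : Type*) [AddCommGroup V] [Module ℂ V]
    [LieRingModule L V] [LieModule ℂ L V] : Prop :=
  LieModule.IsIrreducible ℂ L V ∧ ∃ v : V, IsHWVec H P lam v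

/-- The reflection in the root `α`, acting on weights: `χ ↦ χ - χ(α∨) α`. -/
noncomputable def rootRefl (α : LieModule.Weight ℂ H L) : (H → ℂ) →ₗ[ℂ] (H → ℂ) :=
  LinearMap.id - LinearMap.smulRight (LinearMap.proj (LieAlgebra.IsKilling.coroot α)) (α : H → ℂ)

/-- The Weyl group (as a monoid of linear endomorphisms of the weight space, generated by the
root reflections; reflections are involutions, so this is a group). -/
noncomputable def WeylMonoid : Submonoid ((H → ℂ) →ₗ[ℂ] (H → ℂ)) :=
  Submonoid.closure { f | ∃ α : LieModule.Weight ℂ H L, α.IsNonZero ∧ f = rootRefl H α }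

/-- The subspace of highest weight vectors of weight `λ` (together with `0`). -/
noncomputable def hwVectorSubmodule (P : Set (H → ℂ)) (lam : H → ℂ) : Submodule ℂ V :=
  (LieModule.genWeightSpace V lam : LieSubmodule ℂ H V).toSubmodule ⊓
    ⨅ (α : H → ℂ) (_ : α ∈ P) (x : L) (_ : x ∈ LieAlgebra.rootSpace H α),
      LinearMap.ker (LieModule.toEnd ℂ L V x)

end LieFramework


/-!
Since only the occurrence of `V(ν)` is at stake, the argument compares formal characters. Call the
character of a representation times the Weyl denominator `e^ρ ∏ (1 - e^{-β})` its numerator; it is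
skew under the Weyl group.

The trace of the Casimir operator, which acts on numerators as a shifted Laplacian, shows that a
dominant weight `ν` with nonzero coefficient at `ν + ρ` in the numerator is the weight of a highest
weight vector. In particular the numerator of `V(λ)` is determined up to a scalar: it is skew, and
`λ + ρ` is its only strictly dominant exponent.

Littelmann's path model provides another function with this property, the sum of `e^{π(1)}` over
the Lakshmibai–Seshadri paths `π` of shape `μ`: reflecting strings of root operators proves it to be
symmetric, and cancels, in its product with the numerator of `V(λ)`, all paths which started at `λ`
leave the dominant chamber. The multiplicity of `V(ν)` in `V(λ) ⊗ V(μ)` is thus, up to a nonzero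
scalar, the number of paths from `λ` to `ν` which stay dominant (here in the equivalent form of the
number of dual paths from `ν` to `λ`). When `ν` is conjugate to `λ + wμ` such a path exists: start
from `ν` in the direction of the conjugate of `-wμ`, and whenever a wall is met, continue with the
direction reflected in it. The directions then ascend in the Bruhat order, so this is a
Lakshmibai–Seshadri path; it stays dominant, and it ends at the dominant conjugate of its
unreflected end point, which is `λ`.

Paths are cut into `N` equal segments and multiplied by `N`, so that only integral weights occur.
-/

/-- A system of positive roots, indexed by `ι`, inside a lattice `Λ` of integral weights.
`halfSqLen β` is half of the squared length of `β` in the invariant form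
`(χ, ψ) ↦ ∑ α, (χ, α) (ψ, α)`, the sum running over the roots of both signs; the field
`sum_coroot_mul_coroot` is the resulting relation `(χ, β) = halfSqLen β * ⟨χ, β∨⟩`. -/
structure PosRootDatum (ι Λ : Type*) [Fintype ι] [AddCommGroup Λ] where
  root : ι → Λ
  coroot : ι → Module.Dual ℤ Λ
  halfSqLen : ι → ℚ
  halfSqLen_pos : ∀ β, 0 < halfSqLen β
  coroot_root_self : ∀ β, coroot β (root β) = 2
  sum_coroot_mul_coroot : ∀ χ β,
    2 * ∑ γ, halfSqLen γ ^ 2 * coroot γ χ * coroot γ (root β) = halfSqLen β * coroot β χ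
  exists_reflection_root : ∀ β γ, ∃ δ, root γ - coroot β (root γ) • root β = root δ ∨
    root γ - coroot β (root γ) • root β = -root δ
  exists_root_add : ∀ β γ, coroot β (root γ) < 0 → ∃ δ, root δ = root β + root γ
  exists_root_sub : ∀ β γ, 0 < coroot β (root γ) → γ ≠ β →
    ∃ δ, root γ - root β = root δ ∨ root γ - root β = -root δ
  root_ne_add_self : ∀ β γ, root β ≠ root γ + root γ
  root_ne_neg : ∀ β γ, root β ≠ -root γ
  root_injective : Function.Injective root
  eq_zero_of_coroot_eq_zero : ∀ χ, (∀ β, coroot β χ = 0) → χ = 0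

namespace PosRootDatum

variable {ι Λ : Type*} [Fintype ι] [AddCommGroup Λ] (D : PosRootDatum ι Λ)

/-! ## Reflections and the invariant form -/

/-- The Weyl-invariant bilinear form. -/
def form : Λ →ₗ[ℤ] Λ →ₗ[ℤ] ℚ :=
  LinearMap.mk₂ ℤ (fun χ ψ => 2 * ∑ γ, D.halfSqLen γ ^ 2 * D.coroot γ χ * D.coroot γ ψ)
    (fun χ χ' ψ => by
      simp only [map_add, Int.cast_add, mul_add, add_mul, Finset.sum_add_distrib])
    (fun n χ ψ => by
      simp only [map_zsmul, zsmul_eq_mul, Int.cast_mul, Int.cast_eq, Finset.mul_sum]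
      exact Finset.sum_congr rfl fun _ _ => by ring)
    (fun χ ψ ψ' => by
      simp only [map_add, Int.cast_add, mul_add, Finset.sum_add_distrib])
    (fun n χ ψ => by
      simp only [map_zsmul, zsmul_eq_mul, Int.cast_mul, Int.cast_eq, Finset.mul_sum]
      exact Finset.sum_congr rfl fun _ _ => by ring)

lemma form_apply (χ ψ : Λ) :
    D.form χ ψ = 2 * ∑ γ, D.halfSqLen γ ^ 2 * D.coroot γ χ * D.coroot γ ψ := rfl

lemma form_comm (χ ψ : Λ) : D.form χ ψ = D.form ψ χ := by
  simp only [form_apply, mul_right_comm]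

lemma form_root (χ : Λ) (β : ι) : D.form χ (D.root β) = D.halfSqLen β * D.coroot β χ :=
  D.sum_coroot_mul_coroot χ β

lemma form_root_self (β : ι) : D.form (D.root β) (D.root β) = 2 * D.halfSqLen β := by
  rw [form_root, D.coroot_root_self, mul_comm, Int.cast_ofNat]

lemma eq_zero_of_form_self (χ : Λ) (h : D.form χ χ ≤ 0) : χ = 0 := by
  have hnonneg (γ : ι) : 0 ≤ D.halfSqLen γ ^ 2 * D.coroot γ χ * D.coroot γ χ := by
    rw [mul_assoc]; exact mul_nonneg (sq_nonneg _) (mul_self_nonneg _)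
  have hsum : ∑ γ, D.halfSqLen γ ^ 2 * D.coroot γ χ * D.coroot γ χ = 0 :=
    le_antisymm (by rw [form_apply] at h; linarith) (Finset.sum_nonneg fun γ _ => hnonneg γ)
  rw [Finset.sum_eq_zero_iff_of_nonneg fun γ _ => hnonneg γ] at hsum
  exact D.eq_zero_of_coroot_eq_zero χ fun β => by
    simpa [(D.halfSqLen_pos β).ne'] using hsum β (Finset.mem_univ β)

lemma coroot_neg_iff (β : ι) (χ : Λ) : D.coroot β χ < 0 ↔ D.form χ (D.root β) < 0 := by
  rw [← not_le, ← not_le, form_root, mul_nonneg_iff_of_pos_left (D.halfSqLen_pos β),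
    Int.cast_nonneg_iff]

lemma coroot_pos_iff (β : ι) (χ : Λ) : 0 < D.coroot β χ ↔ 0 < D.form χ (D.root β) := by
  rw [form_root, mul_pos_iff_of_pos_left (D.halfSqLen_pos β), Int.cast_pos]

lemma root_ne_zero (β : ι) : D.root β ≠ 0 := fun h => by
  simpa [h] using D.coroot_root_self β

lemma eq_zero_of_zsmul (D : PosRootDatum ι Λ) {n : ℤ} (hn : n ≠ 0) {χ : Λ} (h : n • χ = 0) :
    χ = 0 :=
  D.eq_zero_of_coroot_eq_zero χ fun β => by simpa [hn] using congrArg (D.coroot β) h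

lemma eq_of_zsmul_eq (D : PosRootDatum ι Λ) {n : ℤ} (hn : n ≠ 0) {χ ψ : Λ}
    (h : n • χ = n • ψ) : χ = ψ :=
  sub_eq_zero.1 (D.eq_zero_of_zsmul hn (by rw [smul_sub, h, sub_self]))

/-- The reflection in the root `β`. -/
def refl (β : ι) : Λ ≃ₗ[ℤ] Λ := Module.reflection (D.coroot_root_self β)

lemma refl_apply (β : ι) (χ : Λ) : D.refl β χ = χ - D.coroot β χ • D.root β :=
  Module.reflection_apply χ _

@[simp] lemma refl_refl (β : ι) (χ : Λ) : D.refl β (D.refl β χ) = χ :=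
  Module.involutive_reflection _ χ

lemma refl_root_self (β : ι) : D.refl β (D.root β) = -D.root β :=
  Module.reflection_apply_self _

lemma coroot_refl_self (β : ι) (χ : Λ) : D.coroot β (D.refl β χ) = -D.coroot β χ := by
  rw [refl_apply, map_sub, map_zsmul, D.coroot_root_self, smul_eq_mul]; ring

lemma form_refl_left (β : ι) (χ ψ : Λ) : D.form (D.refl β χ) ψ = D.form χ (D.refl β ψ) := by
  simp only [refl_apply, map_sub, map_zsmul, LinearMap.sub_apply, LinearMap.smul_apply,
    D.form_comm (D.root β), form_root, zsmul_eq_mul]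
  ring

lemma form_refl_refl (β : ι) (χ ψ : Λ) : D.form (D.refl β χ) (D.refl β ψ) = D.form χ ψ := by
  rw [form_refl_left, refl_refl]

lemma coroot_eq_of_refl_eq {β γ δ : ι} (h : D.refl β (D.root γ) = D.root δ) (χ : Λ) :
    D.coroot δ χ = D.coroot γ (D.refl β χ) := by
  have hlen : D.halfSqLen δ = D.halfSqLen γ := by
    have := D.form_refl_refl β (D.root γ) (D.root γ)
    rw [h, form_root_self, form_root_self] at this; linarith
  have hform := D.form_refl_left β χ (D.root γ)
  rw [h, form_root, form_root, hlen] at hform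
  exact_mod_cast (mul_left_cancel₀ (D.halfSqLen_pos γ).ne' hform).symm

lemma coroot_eq_of_refl_eq_neg {β γ δ : ι} (h : D.refl β (D.root γ) = -D.root δ) (χ : Λ) :
    D.coroot δ χ = -D.coroot γ (D.refl β χ) := by
  have hlen : D.halfSqLen δ = D.halfSqLen γ := by
    have := D.form_refl_refl β (D.root γ) (D.root γ)
    rw [h, map_neg, LinearMap.map_neg₂, neg_neg, form_root_self, form_root_self] at this
    linarith
  have hform := D.form_refl_left β χ (D.root γ)
  rw [h, map_neg, form_root, form_root, hlen, ← mul_neg] at hform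
  have hcoroot : (D.coroot γ (D.refl β χ) : ℚ) = -D.coroot δ χ :=
    mul_left_cancel₀ (D.halfSqLen_pos γ).ne' hform
  rw [eq_neg_iff_add_eq_zero, add_comm, ← eq_neg_iff_add_eq_zero]
  exact_mod_cast hcoroot

lemma refl_refl_eq {β γ δ : ι} (h : D.refl β (D.root γ) = D.root δ) (χ : Λ) :
    D.refl β (D.refl γ χ) = D.refl δ (D.refl β χ) := by
  rw [D.refl_apply δ, D.coroot_eq_of_refl_eq h, refl_refl, ← h, D.refl_apply γ, map_sub, map_zsmul]

/-- The index of the positive root `± s_β γ`. -/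
noncomputable def reflIdx (β γ : ι) : ι := (D.exists_reflection_root β γ).choose

lemma refl_root (β γ : ι) : D.refl β (D.root γ) = D.root (D.reflIdx β γ) ∨
    D.refl β (D.root γ) = -D.root (D.reflIdx β γ) := by
  rw [refl_apply]; exact (D.exists_reflection_root β γ).choose_spec

lemma eq_reflIdx {β γ δ : ι} (h : D.refl β (D.root γ) = D.root δ) : δ = D.reflIdx β γ := by
  rcases D.refl_root β γ with h' | h' <;> rw [h] at h'
  · exact D.root_injective h'
  · exact absurd h' (D.root_ne_neg _ _)

lemma eq_reflIdx_of_neg {β γ δ : ι} (h : D.refl β (D.root γ) = -D.root δ) :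
    δ = D.reflIdx β γ := by
  rcases D.refl_root β γ with h' | h' <;> rw [h] at h'
  · exact absurd h'.symm (D.root_ne_neg _ _)
  · exact D.root_injective (neg_injective h')

lemma reflIdx_reflIdx (β γ : ι) : D.reflIdx β (D.reflIdx β γ) = γ := by
  symm
  rcases D.refl_root β γ with h | h
  · exact D.eq_reflIdx (by rw [← h, refl_refl])
  · exact D.eq_reflIdx_of_neg (by rw [← neg_eq_iff_eq_neg.2 h, map_neg, refl_refl])

lemma reflIdx_self (β : ι) : D.reflIdx β β = β :=
  (D.eq_reflIdx_of_neg (D.refl_root_self β)).symm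

lemma reflIdx_ne {β γ : ι} (h : γ ≠ β) : D.reflIdx β γ ≠ β := fun h' =>
  h (by rw [← D.reflIdx_reflIdx β γ, h', reflIdx_self])

/-! ## The positive cone -/

/-- The monoid of sums of positive roots, the positive part of the root lattice. -/
def posCone : AddSubmonoid Λ := AddSubmonoid.closure (Set.range D.root)

lemma root_mem_posCone (β : ι) : D.root β ∈ D.posCone :=
  AddSubmonoid.subset_closure ⟨β, rfl⟩

lemma exists_list_of_mem_posCone {χ : Λ} (h : χ ∈ D.posCone) :
    ∃ l : List ι, (l.map D.root).sum = χ := by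
  obtain ⟨l, hl, rfl⟩ := AddSubmonoid.exists_list_of_mem_closure h
  obtain ⟨l, rfl⟩ : l ∈ Set.range (List.map D.root) := by rwa [Set.range_list_map]
  exact ⟨l, rfl⟩

-- In a vanishing sum some root pairs negatively with the first one; merging the two into their
-- sum, which is again a root, shortens the list.
lemma list_sum_root_ne_zero (l : List ι) (hl : l ≠ []) : (l.map D.root).sum ≠ 0 := by
  induction hn : l.length using Nat.strong_induction_on generalizing l with
  | _ n ih =>
  obtain _ | ⟨β, l⟩ := l
  · exact absurd rfl hl
  intro h
  simp only [List.map_cons, List.sum_cons] at h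
  have hneg : D.form (D.root β) (l.map D.root).sum < 0 := by
    rw [eq_neg_of_add_eq_zero_right h, map_neg, form_root_self]
    linarith [D.halfSqLen_pos β]
  obtain ⟨γ, hγ, hβγ⟩ : ∃ γ ∈ l, D.form (D.root β) (D.root γ) < 0 := by
    by_contra! hc
    rw [map_list_sum] at hneg
    exact hneg.not_ge (List.sum_nonneg (by simpa using hc))
  rw [form_comm, ← coroot_neg_iff] at hβγ
  obtain ⟨δ, hδ⟩ := D.exists_root_add _ _ hβγ
  obtain ⟨l₁, l₂, rfl⟩ := List.append_of_mem hγ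
  refine ih (l₁ ++ δ :: l₂).length ?_ (l₁ ++ δ :: l₂) (by simp) rfl ?_
  · rw [← hn]; simp
  · rw [← h]; simp only [List.map_append, List.map_cons, List.sum_append, List.sum_cons, hδ]; abel

lemma root_add_ne_zero {χ : Λ} (h : χ ∈ D.posCone) (β : ι) : D.root β + χ ≠ 0 := by
  obtain ⟨l, rfl⟩ := D.exists_list_of_mem_posCone h
  simpa using D.list_sum_root_ne_zero (β :: l) (by simp)

lemma eq_zero_of_mem_of_neg_mem {χ : Λ} (h : χ ∈ D.posCone) (h' : -χ ∈ D.posCone) : χ = 0 := by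
  obtain ⟨l, rfl⟩ := D.exists_list_of_mem_posCone h
  cases l with
  | nil => rfl
  | cons β l =>
    have hl : (l.map D.root).sum ∈ D.posCone :=
      list_sum_mem (by simpa using fun γ _ => D.root_mem_posCone γ)
    exact absurd (by simp) (D.root_add_ne_zero (add_mem hl h') β)

/-- The strict order on positive roots given by the positive cone. -/
def RootLT (β γ : ι) : Prop := D.root γ - D.root β ∈ D.posCone ∧ β ≠ γ

lemma wellFounded_rootLT : WellFounded D.RootLT := by
  have : IsTrans ι D.RootLT := ⟨by
    rintro β γ δ ⟨hβγ, -⟩ ⟨hγδ, hne⟩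
    refine ⟨by simpa using add_mem hγδ hβγ, ?_⟩
    rintro rfl
    have := D.eq_zero_of_mem_of_neg_mem hβγ (by simpa using hγδ)
    exact hne (D.root_injective (sub_eq_zero.1 this))⟩
  have : Std.Irrefl D.RootLT := ⟨fun _ h => h.2 rfl⟩
  exact Finite.wellFounded_of_trans_of_irrefl _

/-! ## Simple roots -/

/-- A simple root is a positive root which is not the sum of two positive roots. -/
def IsSimpleRoot (i : ι) : Prop := ∀ β γ, D.root i ≠ D.root β + D.root γ

lemma induction_add {C : ι → Prop} (simple : ∀ i, D.IsSimpleRoot i → C i)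
    (add : ∀ β γ δ, D.root β = D.root γ + D.root δ → C γ → C δ → C β) (β : ι) : C β := by
  induction β using D.wellFounded_rootLT.induction with
  | _ β ih =>
  by_cases hβ : D.IsSimpleRoot β
  · exact simple β hβ
  · simp only [IsSimpleRoot, ne_eq, not_forall, not_not] at hβ
    obtain ⟨γ, δ, h⟩ := hβ
    refine add β γ δ h (ih γ ⟨?_, ?_⟩) (ih δ ⟨?_, ?_⟩)
    · simpa [h] using D.root_mem_posCone δ
    · rintro rfl; simp [D.root_ne_zero] at h
    · simpa [h] using D.root_mem_posCone γ
    · rintro rfl; simp [D.root_ne_zero] at h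

lemma root_mem_closure_isSimpleRoot (β : ι) :
    D.root β ∈ AddSubmonoid.closure (D.root '' {i | D.IsSimpleRoot i}) := by
  induction β using D.induction_add with
  | simple i hi => exact AddSubmonoid.subset_closure ⟨i, hi, rfl⟩
  | add β γ δ h hγ hδ => rw [h]; exact add_mem hγ hδ

lemma posCone_eq_closure_isSimpleRoot :
    D.posCone = AddSubmonoid.closure (D.root '' {i | D.IsSimpleRoot i}) :=
  le_antisymm
    (AddSubmonoid.closure_le.2 (Set.range_subset_iff.2 D.root_mem_closure_isSimpleRoot))
    (AddSubmonoid.closure_mono (Set.image_subset_range _ _))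

lemma form_nonneg_of_isSimpleRoot {χ ψ : Λ} (h : ∀ i, D.IsSimpleRoot i → 0 ≤ D.coroot i χ)
    (hψ : ψ ∈ D.posCone) : 0 ≤ D.form χ ψ := by
  rw [posCone_eq_closure_isSimpleRoot] at hψ
  induction hψ using AddSubmonoid.closure_induction with
  | mem ψ hψ =>
    obtain ⟨i, hi, rfl⟩ := hψ
    rw [form_root]; exact mul_nonneg (D.halfSqLen_pos i).le (by exact_mod_cast h i hi)
  | zero => rw [map_zero]
  | add ψ ψ' _ _ hψ hψ' => rw [map_add]; exact add_nonneg hψ hψ'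

lemma exists_isSimpleRoot_coroot_pos (β : ι) :
    ∃ i, D.IsSimpleRoot i ∧ 0 < D.coroot i (D.root β) := by
  by_contra! hc
  have := D.form_nonneg_of_isSimpleRoot (χ := -D.root β) (ψ := D.root β)
    (fun i hi => by rw [map_neg]; linarith [hc i hi]) (D.root_mem_posCone β)
  rw [LinearMap.map_neg₂, form_root_self] at this
  linarith [D.halfSqLen_pos β]

variable {D} in
lemma IsSimpleRoot.root_add_root_ne_nsmul {i : ι} (hi : D.IsSimpleRoot i) (n : ℕ) {β γ : ι}
    (hβ : β ≠ i) (hγ : γ ≠ i) : D.root β + D.root γ ≠ n • D.root i := by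
  induction n generalizing β γ with
  | zero => simpa using D.root_add_ne_zero (D.root_mem_posCone γ) β
  | succ n ih =>
    intro h
    wlog hpos : 0 < D.coroot i (D.root β) generalizing β γ with key
    · refine key hγ hβ (by rw [← h, add_comm]) ?_
      have := congrArg (D.coroot i) h
      rw [map_add, map_nsmul, D.coroot_root_self, nsmul_eq_mul] at this
      push_cast at this; omega
    obtain ⟨δ, hδ | hδ⟩ := D.exists_root_sub i β hpos hβ
    · have hδi : δ ≠ i := by
        rintro rfl
        exact D.root_ne_add_self β δ (sub_eq_iff_eq_add.1 hδ)
      exact ih hδi hγ (by rw [← hδ, sub_add_eq_add_sub, h, succ_nsmul, add_sub_cancel_right])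
    · exact hi β δ (by rw [← neg_eq_iff_eq_neg.2 hδ]; abel)

lemma refl_root_of_isSimpleRoot {i : ι} (hi : D.IsSimpleRoot i) {β : ι} (hβ : β ≠ i) :
    D.refl i (D.root β) = D.root (D.reflIdx i β) := by
  refine (D.refl_root i β).resolve_right fun h => ?_
  have hsum : D.root β + D.root (D.reflIdx i β) = D.coroot i (D.root β) • D.root i := by
    rw [← neg_eq_iff_eq_neg.2 h, refl_apply]; abel
  obtain ⟨n, hn | hn⟩ := Int.eq_nat_or_neg (D.coroot i (D.root β)) <;> rw [hn] at hsum
  · exact hi.root_add_root_ne_nsmul n hβ (D.reflIdx_ne hβ) (by rw [hsum, natCast_zsmul])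
  · refine D.root_add_ne_zero (χ := D.root (D.reflIdx i β) + n • D.root i)
      (add_mem (D.root_mem_posCone _) (nsmul_mem (D.root_mem_posCone i) n)) β ?_
    rw [← add_assoc, hsum, neg_smul, natCast_zsmul, neg_add_cancel]

lemma coroot_reflIdx_of_isSimpleRoot {i : ι} (hi : D.IsSimpleRoot i) {β : ι} (hβ : β ≠ i)
    (χ : Λ) : D.coroot (D.reflIdx i β) χ = D.coroot β (D.refl i χ) :=
  D.coroot_eq_of_refl_eq (D.refl_root_of_isSimpleRoot hi hβ) χ

lemma induction_isSimpleRoot {C : ι → Prop} (simple : ∀ i, D.IsSimpleRoot i → C i)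
    (reflect : ∀ i β, D.IsSimpleRoot i → β ≠ i → C β → C (D.reflIdx i β)) (β : ι) : C β := by
  induction β using D.wellFounded_rootLT.induction with
  | _ β ih =>
  by_cases hβ : D.IsSimpleRoot β
  · exact simple β hβ
  obtain ⟨i, hi, hpos⟩ := D.exists_isSimpleRoot_coroot_pos β
  have hne : β ≠ i := by rintro rfl; exact hβ hi
  have hrefl := D.refl_root_of_isSimpleRoot hi hne
  rw [← D.reflIdx_reflIdx i β]
  refine reflect i _ hi (D.reflIdx_ne hne) (ih _ ⟨?_, fun h => ?_⟩)
  · obtain ⟨n, hn⟩ := Int.eq_ofNat_of_zero_le hpos.le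
    rw [← hrefl, refl_apply, hn, sub_sub_cancel, natCast_zsmul]
    exact nsmul_mem (D.root_mem_posCone i) n
  · have := D.coroot_refl_self i (D.root β)
    rw [hrefl, h] at this
    omega

/-! ## Dominant weights and Weyl conjugacy -/

/-- Dominance of a weight. -/
def IsDom (χ : Λ) : Prop := ∀ β, 0 ≤ D.coroot β χ

lemma isDom_of_isSimpleRoot {χ : Λ} (h : ∀ i, D.IsSimpleRoot i → 0 ≤ D.coroot i χ) :
    D.IsDom χ := fun β => by
  have := D.form_nonneg_of_isSimpleRoot h (D.root_mem_posCone β)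
  by_contra! hc
  exact this.not_gt ((D.coroot_neg_iff β χ).1 hc)

/-- The product of the reflections in a list of positive roots. -/
def word (l : List ι) : Λ ≃ₗ[ℤ] Λ := (l.map D.refl).prod

lemma word_nil_apply (χ : Λ) : D.word [] χ = χ := rfl

lemma word_cons_apply (i : ι) (l : List ι) (χ : Λ) :
    D.word (i :: l) χ = D.refl i (D.word l χ) := by
  rw [word, List.map_cons, List.prod_cons]; rfl

lemma word_append_apply (l l' : List ι) (χ : Λ) :
    D.word (l ++ l') χ = D.word l (D.word l' χ) := by
  rw [word, List.map_append, List.prod_append]; rfl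

lemma word_reverse_apply (l : List ι) (χ : Λ) : D.word l.reverse (D.word l χ) = χ := by
  induction l generalizing χ with
  | nil => rfl
  | cons i l ih =>
    rw [List.reverse_cons, word_append_apply, word_cons_apply, word_cons_apply, word_nil_apply,
      refl_refl, ih]

lemma form_word (l : List ι) (χ ψ : Λ) : D.form (D.word l χ) (D.word l ψ) = D.form χ ψ := by
  induction l with
  | nil => rfl
  | cons i l ih => rw [word_cons_apply, word_cons_apply, form_refl_refl, ih]

lemma exists_refl_eq_word (β : ι) :
    ∃ l : List ι, (∀ i ∈ l, D.IsSimpleRoot i) ∧ D.refl β = D.word l := by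
  induction β using D.induction_isSimpleRoot with
  | simple i hi => exact ⟨[i], by simpa using hi, by simp [word]⟩
  | reflect i β hi hβ ih =>
    obtain ⟨l, hl, h⟩ := ih
    refine ⟨i :: (l ++ [i]), by simpa [or_imp, forall_and] using ⟨hi, hl, hi⟩, ?_⟩
    ext χ
    rw [word_cons_apply, word_append_apply, ← h, word_cons_apply, word_nil_apply,
      D.refl_refl_eq (D.refl_root_of_isSimpleRoot hi hβ), refl_refl]

lemma exists_word_eq_of_isSimpleRoot (l : List ι) :
    ∃ l' : List ι, (∀ i ∈ l', D.IsSimpleRoot i) ∧ D.word l = D.word l' := by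
  induction l with
  | nil => exact ⟨[], by simp, rfl⟩
  | cons β l ih =>
    obtain ⟨l₁, hl₁, h₁⟩ := ih
    obtain ⟨l₂, hl₂, h₂⟩ := D.exists_refl_eq_word β
    refine ⟨l₂ ++ l₁, by simpa [or_imp, forall_and] using ⟨hl₂, hl₁⟩, ?_⟩
    rw [word, List.map_cons, List.prod_cons, h₂, ← word, h₁, word, word, word, List.map_append,
      List.prod_append]

-- The exchange property: if `s_γ` lowers the length of `w`, then `s_γ w` arises from `w` by
-- omitting a letter.
lemma exists_shorter_word {a : Λ} (ha : D.IsDom a) (l : List ι) (hl : ∀ i ∈ l, D.IsSimpleRoot i)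
    (γ : ι) (h : D.coroot γ (D.word l a) < 0) : ∃ l' : List ι, (∀ i ∈ l', D.IsSimpleRoot i) ∧
      l'.length < l.length ∧ D.refl γ (D.word l a) = D.word l' a := by
  induction l generalizing γ with
  | nil => exact absurd h (ha γ).not_gt
  | cons j m ih =>
    obtain ⟨hj, hm⟩ := List.forall_mem_cons.1 hl
    rw [word_cons_apply] at h ⊢
    by_cases hγ : γ = j
    · exact ⟨m, hm, by simp, by rw [hγ, refl_refl]⟩
    · rw [← D.coroot_reflIdx_of_isSimpleRoot hj hγ] at h
      obtain ⟨m', hm', hlen, hrefl⟩ := ih hm _ h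
      refine ⟨j :: m', List.forall_mem_cons.2 ⟨hj, hm'⟩, by simpa using hlen, ?_⟩
      have := D.refl_refl_eq (D.refl_root_of_isSimpleRoot hj (D.reflIdx_ne hγ)) (D.word m a)
      rw [reflIdx_reflIdx] at this
      rw [word_cons_apply, ← this, hrefl]

lemma eq_of_word_eq_of_isDom {a b : Λ} (ha : D.IsDom a) (hb : D.IsDom b) (l : List ι)
    (hl : ∀ i ∈ l, D.IsSimpleRoot i) (h : D.word l a = b) : b = a := by
  induction hn : l.length using Nat.strong_induction_on generalizing l with
  | _ n ih =>
  obtain _ | ⟨i, l⟩ := l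
  · exact h.symm
  obtain ⟨-, hl⟩ := List.forall_mem_cons.1 hl
  rw [word_cons_apply] at h
  have hi : D.coroot i (D.word l a) = -D.coroot i b := by rw [← h, coroot_refl_self, neg_neg]
  rcases (hb i).eq_or_lt with h0 | h0
  · refine ih l.length (by simp [← hn]) l hl ?_ rfl
    rw [← h, refl_apply, hi, ← h0, neg_zero, zero_smul, sub_zero]
  · obtain ⟨l', hl', hlen, hrefl⟩ := D.exists_shorter_word ha l hl i (by omega)
    exact ih l'.length (by simp [← hn]; omega) l' hl' (by rw [← hrefl, h]) rfl

/-- Conjugacy of weights under the Weyl group. -/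
def Conj (χ ψ : Λ) : Prop := ∃ l : List ι, D.word l χ = ψ

lemma conj_refl (β : ι) (χ : Λ) : D.Conj χ (D.refl β χ) := ⟨[β], rfl⟩

variable {D} in
lemma Conj.neg {χ ψ : Λ} (h : D.Conj χ ψ) : D.Conj (-χ) (-ψ) := by
  obtain ⟨l, rfl⟩ := h; exact ⟨l, map_neg _ χ⟩

variable {D} in
lemma Conj.symm {χ ψ : Λ} (h : D.Conj χ ψ) : D.Conj ψ χ := by
  obtain ⟨l, rfl⟩ := h; exact ⟨l.reverse, D.word_reverse_apply l χ⟩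

variable {D} in
lemma Conj.trans {χ ψ θ : Λ} (h : D.Conj χ ψ) (h' : D.Conj ψ θ) : D.Conj χ θ := by
  obtain ⟨l, rfl⟩ := h; obtain ⟨l', rfl⟩ := h'; exact ⟨l' ++ l, D.word_append_apply _ _ _⟩

variable {D} in
lemma Conj.eq_of_isDom {a b : Λ} (h : D.Conj a b) (ha : D.IsDom a) (hb : D.IsDom b) : b = a := by
  obtain ⟨l, h⟩ := h
  obtain ⟨l', hl', hll'⟩ := D.exists_word_eq_of_isSimpleRoot l
  exact D.eq_of_word_eq_of_isDom ha hb l' hl' (by rw [← hll', h])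

/-! ## The sum of the positive roots -/

/-- The sum of the positive roots, that is `2ρ`. -/
def twoRho : Λ := ∑ β, D.root β

lemma refl_twoRho_of_isSimpleRoot {i : ι} (hi : D.IsSimpleRoot i) :
    D.refl i D.twoRho = D.twoRho - 2 • D.root i := by
  classical
  have hperm : ∑ β ∈ Finset.univ.erase i, D.refl i (D.root β) =
      ∑ β ∈ Finset.univ.erase i, D.root β := by
    refine Finset.sum_nbij' (D.reflIdx i) (D.reflIdx i) ?_ ?_
      (fun β _ => D.reflIdx_reflIdx i β) (fun β _ => D.reflIdx_reflIdx i β) ?_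
    · simpa using fun β => D.reflIdx_ne
    · simpa using fun β => D.reflIdx_ne
    · simpa using fun β => D.refl_root_of_isSimpleRoot hi
  rw [twoRho, ← Finset.add_sum_erase _ _ (Finset.mem_univ i), map_add, map_sum, refl_root_self,
    hperm, two_smul]
  abel

lemma coroot_twoRho_of_isSimpleRoot {i : ι} (hi : D.IsSimpleRoot i) :
    D.coroot i D.twoRho = 2 := by
  have := congrArg (D.coroot i) (D.refl_twoRho_of_isSimpleRoot hi)
  rw [coroot_refl_self, map_sub, map_nsmul, D.coroot_root_self, nsmul_eq_mul] at this
  push_cast at this; omega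

lemma even_coroot_twoRho (β : ι) : Even (D.coroot β D.twoRho) := by
  induction β using D.induction_isSimpleRoot with
  | simple i hi => rw [D.coroot_twoRho_of_isSimpleRoot hi]; exact even_two
  | reflect i β hi hβ ih =>
    rw [D.coroot_reflIdx_of_isSimpleRoot hi hβ, D.refl_twoRho_of_isSimpleRoot hi, map_sub,
      map_nsmul]
    exact ih.sub (even_two_mul _)

lemma coroot_twoRho_pos (β : ι) : 0 < D.coroot β D.twoRho := by
  induction β using D.induction_add with
  | simple i hi => rw [D.coroot_twoRho_of_isSimpleRoot hi]; norm_num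
  | add β γ δ h hγ hδ =>
    rw [coroot_pos_iff] at hγ hδ ⊢
    rw [h, map_add]; exact add_pos hγ hδ

/-- `ρ` is the half sum of the positive roots. -/
def IsRho (ρ : Λ) : Prop := ρ + ρ = D.twoRho

section IsRho

variable {D} {ρ : Λ} (h : D.IsRho ρ)
include h

lemma IsRho.coroot_of_isSimpleRoot {i : ι} (hi : D.IsSimpleRoot i) : D.coroot i ρ = 1 := by
  have := D.coroot_twoRho_of_isSimpleRoot hi
  rw [← h, map_add] at this
  omega

lemma IsRho.coroot_pos (β : ι) : 0 < D.coroot β ρ := by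
  have := D.coroot_twoRho_pos β
  rw [← h, map_add] at this
  omega

lemma IsRho.form_root_pos (β : ι) : 0 < D.form (D.root β) ρ := by
  rw [form_comm, ← coroot_pos_iff]
  exact h.coroot_pos β

lemma IsRho.sum_form_root (χ : Λ) : ∑ β, D.form (D.root β) χ = 2 * D.form χ ρ := by
  rw [two_mul, ← map_add, h, form_comm, twoRho, map_sum, LinearMap.sum_apply]

lemma IsRho.eq_of_form_add_eq {κ ν : Λ} (hν : D.IsDom ν) (hκν : κ - ν ∈ D.posCone)
    (hform : D.form (κ + ρ) (κ + ρ) = D.form (ν + ρ) (ν + ρ)) : κ = ν := by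
  have hexpand : D.form (κ + ρ) (κ + ρ) = D.form (ν + ρ) (ν + ρ) + 2 * D.form ν (κ - ν) +
      2 * D.form ρ (κ - ν) + D.form (κ - ν) (κ - ν) := by
    simp only [map_add, map_sub, LinearMap.add_apply, LinearMap.sub_apply]
    rw [D.form_comm κ ν, D.form_comm κ ρ, D.form_comm ν ρ]
    ring
  have hνpos := D.form_nonneg_of_isSimpleRoot (fun i _ => hν i) hκν
  have hρpos := D.form_nonneg_of_isSimpleRoot (fun i _ => (h.coroot_pos i).le) hκν
  exact sub_eq_zero.1 (D.eq_zero_of_form_self _ (by linarith))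

end IsRho

end PosRootDatum

/-! ## Chains in the Bruhat order of an orbit -/

namespace PosRootDatum

variable {ι Λ : Type*} [Fintype ι] [AddCommGroup Λ] (D : PosRootDatum ι Λ)

/-- The number of positive roots pairing negatively with `η`: the length of the shortest Weyl
group element carrying `η` to a dominant weight. -/
def negCount (η : Λ) : ℕ := (Finset.univ.filter fun β => D.coroot β η < 0).card

lemma card_filter_coroot_involutive {f : ι → ι} (hf : Function.Involutive f) (η : Λ) :
    (Finset.univ.filter fun γ => D.coroot (f γ) η < 0).card = D.negCount η :=
  Finset.card_nbij' f f (by intro γ; simp) (by intro γ; simp [hf γ]) (fun γ _ => hf γ)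
    (fun γ _ => hf γ)

lemma coroot_root_pos_of_refl_neg {β γ : ι} (h : D.refl β (D.root γ) = -D.root (D.reflIdx β γ)) :
    0 < D.coroot β (D.root γ) := by
  by_contra! hc
  obtain ⟨n, hn⟩ := Int.exists_eq_neg_ofNat hc
  refine D.root_add_ne_zero (χ := n • D.root β + D.root (D.reflIdx β γ))
    (add_mem (nsmul_mem (D.root_mem_posCone β) n) (D.root_mem_posCone _)) γ ?_
  rw [← neg_neg (D.root (D.reflIdx β γ)), ← h, refl_apply, hn]
  simp

lemma coroot_root_pos_symm {β γ : ι} (h : 0 < D.coroot β (D.root γ)) :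
    0 < D.coroot γ (D.root β) := by
  rw [coroot_pos_iff] at *; rwa [form_comm]

open Classical in
/-- The index of `s_β γ` if this root is positive, and `γ` otherwise. -/
noncomputable def posReflIdx (β γ : ι) : ι :=
  if D.refl β (D.root γ) = D.root (D.reflIdx β γ) then D.reflIdx β γ else γ

lemma posReflIdx_involutive (β : ι) : Function.Involutive (D.posReflIdx β) := fun γ => by
  by_cases h : D.refl β (D.root γ) = D.root (D.reflIdx β γ)
  · have h' : D.refl β (D.root (D.reflIdx β γ)) = D.root (D.reflIdx β (D.reflIdx β γ)) := by
      rw [reflIdx_reflIdx, ← h, refl_refl]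
    rw [posReflIdx, posReflIdx, if_pos h, if_pos h', reflIdx_reflIdx]
  · rw [posReflIdx, posReflIdx, if_neg h, if_neg h]

lemma posReflIdx_self (β : ι) : D.posReflIdx β β = β := by
  simp only [posReflIdx, reflIdx_self, ite_self]

lemma negCount_refl_lt {β : ι} {η : Λ} (h : D.coroot β η < 0) :
    D.negCount (D.refl β η) < D.negCount η := by
  rw [← D.card_filter_coroot_involutive (D.posReflIdx_involutive β) (D.refl β η)]
  refine Finset.card_lt_card (Finset.ssubset_iff_of_subset (fun γ hγ => ?_) |>.2
    ⟨β, by simpa using h, ?_⟩)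
  · simp only [Finset.mem_filter, Finset.mem_univ, true_and] at hγ ⊢
    by_cases hγ' : D.refl β (D.root γ) = D.root (D.reflIdx β γ)
    · rwa [posReflIdx, if_pos hγ', D.coroot_eq_of_refl_eq hγ', refl_refl] at hγ
    · have hpos := D.coroot_root_pos_symm
        (D.coroot_root_pos_of_refl_neg ((D.refl_root β γ).resolve_left hγ'))
      rw [posReflIdx, if_neg hγ', refl_apply, map_sub, map_zsmul, smul_eq_mul] at hγ
      nlinarith
  · simpa [posReflIdx_self, coroot_refl_self] using h.le

lemma negCount_refl_of_isSimpleRoot_of_neg {i : ι} (hi : D.IsSimpleRoot i) {η : Λ}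
    (h : D.coroot i η < 0) : D.negCount (D.refl i η) + 1 = D.negCount η := by
  classical
  rw [← D.card_filter_coroot_involutive (D.reflIdx_reflIdx i) (D.refl i η), negCount,
    ← Finset.card_erase_add_one (s := Finset.univ.filter fun β => D.coroot β η < 0)
      (a := i) (by simpa using h)]
  congr 2
  ext γ
  by_cases hγ : γ = i
  · simpa [hγ, reflIdx_self, coroot_refl_self] using h.le
  · simp [hγ, D.coroot_reflIdx_of_isSimpleRoot hi hγ]

lemma negCount_refl_of_isSimpleRoot_of_pos {i : ι} (hi : D.IsSimpleRoot i) {η : Λ}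
    (h : 0 < D.coroot i η) : D.negCount (D.refl i η) = D.negCount η + 1 := by
  rw [← D.negCount_refl_of_isSimpleRoot_of_neg hi (η := D.refl i η)
    (by rw [coroot_refl_self]; omega), refl_refl]

lemma refl_of_coroot_eq_zero {i : ι} {η : Λ} (h : D.coroot i η = 0) : D.refl i η = η := by
  simp [refl_apply, h]

lemma negCount_add_negCount_neg (η : Λ) :
    D.negCount η + D.negCount (-η) = (Finset.univ.filter fun γ => D.coroot γ η ≠ 0).card := by
  classical
  rw [negCount, negCount,
    ← Finset.card_union_of_disjoint (Finset.disjoint_filter.2 fun γ _ h => by simpa using h.le)]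
  congr 1
  ext γ
  simp [lt_or_lt_iff_ne]

lemma coroot_reflIdx_refl_eq_zero_iff (β γ : ι) (η : Λ) :
    D.coroot (D.reflIdx β γ) (D.refl β η) = 0 ↔ D.coroot γ η = 0 := by
  rcases D.refl_root β γ with h | h
  · rw [D.coroot_eq_of_refl_eq h, refl_refl]
  · rw [D.coroot_eq_of_refl_eq_neg h, refl_refl, neg_eq_zero]

lemma negCount_refl_add_negCount_neg_refl (β : ι) (η : Λ) :
    D.negCount (D.refl β η) + D.negCount (-D.refl β η) = D.negCount η + D.negCount (-η) := by
  rw [negCount_add_negCount_neg, negCount_add_negCount_neg]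
  exact (Finset.card_nbij' (D.reflIdx β) (D.reflIdx β)
    (fun γ => by simp [coroot_reflIdx_refl_eq_zero_iff])
    (fun γ => by
      simp [← D.coroot_reflIdx_refl_eq_zero_iff β (D.reflIdx β γ), reflIdx_reflIdx])
    (fun γ _ => D.reflIdx_reflIdx β γ) (fun γ _ => D.reflIdx_reflIdx β γ)).symm

/-- A covering step of the Bruhat order of an orbit, integral at time `k / N`: these are the
steps admitted at a turning point of a Lakshmibai–Seshadri path. -/
def Edge (N k : ℕ) (η η' : Λ) : Prop :=
  ∃ β, D.coroot β η < 0 ∧ (N : ℤ) ∣ k * D.coroot β η ∧ η' = D.refl β η ∧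
    D.negCount η = D.negCount η' + 1

/-- A chain of covering steps integral at time `k / N`. -/
def Chain (N k : ℕ) : Λ → Λ → Prop := Relation.ReflTransGen (D.Edge N k)

variable {D} {N k : ℕ} {i : ι} {η η' : Λ}

lemma Edge.refl_of_isSimpleRoot (hi : D.IsSimpleRoot i) (h : D.coroot i η < 0)
    (hk : (N : ℤ) ∣ k * D.coroot i η) : D.Edge N k η (D.refl i η) :=
  ⟨i, h, hk, rfl, (D.negCount_refl_of_isSimpleRoot_of_neg hi h).symm⟩

lemma Edge.dvd_sub (h : D.Edge N k η η') (i : ι) :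
    (N : ℤ) ∣ k * D.coroot i η' - k * D.coroot i η := by
  obtain ⟨β, -, ⟨c, hc⟩, rfl, -⟩ := h
  rw [refl_apply, map_sub, map_zsmul, smul_eq_mul]
  exact ⟨-(c * D.coroot i (D.root β)), by linear_combination (-(D.coroot i (D.root β))) * hc⟩

lemma Chain.dvd_sub (h : D.Chain N k η η') (i : ι) :
    (N : ℤ) ∣ k * D.coroot i η' - k * D.coroot i η := by
  induction h with
  | refl => simp
  | tail _ h ih => simpa using dvd_add (h.dvd_sub i) ih

lemma Edge.eq_refl_or_refl (hi : D.IsSimpleRoot i) (h : D.Edge N k η η') :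
    (η' = D.refl i η ∧ (N : ℤ) ∣ k * D.coroot i η) ∨
      (D.negCount (D.refl i η') < D.negCount (D.refl i η) ∧
        (D.negCount (D.refl i η) = D.negCount (D.refl i η') + 1 →
          D.Edge N k (D.refl i η) (D.refl i η'))) := by
  obtain ⟨β, hneg, hdvd, rfl, -⟩ := h
  by_cases hβ : β = i
  · subst hβ; exact Or.inl ⟨rfl, hdvd⟩
  have hcoroot : D.coroot (D.reflIdx i β) (D.refl i η) = D.coroot β η := by
    rw [D.coroot_reflIdx_of_isSimpleRoot hi hβ, refl_refl]
  have hrefl : D.refl i (D.refl β η) = D.refl (D.reflIdx i β) (D.refl i η) :=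
    D.refl_refl_eq (D.refl_root_of_isSimpleRoot hi hβ) η
  refine Or.inr ⟨?_, fun hcount => ⟨D.reflIdx i β, by rwa [hcoroot], by rwa [hcoroot], hrefl,
    hcount⟩⟩
  rw [hrefl]; exact D.negCount_refl_lt (by rwa [hcoroot])

lemma Edge.negCount_eq (h : D.Edge N k η η') : D.negCount η = D.negCount η' + 1 := by
  obtain ⟨β, -, -, -, hcount⟩ := h; exact hcount

lemma Edge.neg (h : D.Edge N k η η') (hk : k ≤ N) : D.Edge N (N - k) (-η') (-η) := by
  have hcount := h.negCount_eq
  obtain ⟨β, hneg, hdvd, rfl, -⟩ := h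
  have hsum := D.negCount_refl_add_negCount_neg_refl β η
  have hcoroot : D.coroot β (-D.refl β η) = D.coroot β η := by
    rw [map_neg, coroot_refl_self, neg_neg]
  refine ⟨β, by rwa [hcoroot], ?_, by rw [map_neg, refl_refl], by omega⟩
  rw [hcoroot, Nat.cast_sub hk, sub_mul]
  exact _root_.dvd_sub (dvd_mul_right _ _) hdvd

lemma Chain.neg (h : D.Chain N k η η') (hk : k ≤ N) : D.Chain N (N - k) (-η') (-η) := by
  induction h with
  | refl => exact .refl
  | tail _ hedge ih => exact ih.head (hedge.neg hk)

lemma Edge.of_neg (hi : D.IsSimpleRoot i) (h : D.Edge N k η η') (hneg : D.coroot i η < 0) :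
    (η' = D.refl i η ∧ (N : ℤ) ∣ k * D.coroot i η) ∨
      (D.coroot i η' < 0 ∧ D.Edge N k (D.refl i η) (D.refl i η')) := by
  refine (h.eq_refl_or_refl hi).imp_right fun ⟨hlt, hedge⟩ => ?_
  have hcount := D.negCount_refl_of_isSimpleRoot_of_neg hi hneg
  have heq := h.negCount_eq
  rcases lt_trichotomy (D.coroot i η') 0 with hη' | hη' | hη'
  · have := D.negCount_refl_of_isSimpleRoot_of_neg hi hη'
    exact ⟨hη', hedge (by omega)⟩
  · rw [D.refl_of_coroot_eq_zero hη'] at hlt; omega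
  · have := D.negCount_refl_of_isSimpleRoot_of_pos hi hη'; omega

lemma Chain.of_neg (hi : D.IsSimpleRoot i) (h : D.Chain N k η η') (hneg : D.coroot i η < 0) :
    (D.coroot i η' < 0 ∧ D.Chain N k (D.refl i η) (D.refl i η')) ∨
      ((N : ℤ) ∣ k * D.coroot i η ∧ D.Chain N k (D.refl i η) η') := by
  induction h with
  | refl => exact Or.inl ⟨hneg, .refl⟩
  | @tail ξ ξ' hchain hedge ih =>
    rcases ih with ⟨hξ, ih⟩ | ⟨hdvd, ih⟩
    · rcases hedge.of_neg hi hξ with ⟨rfl, hdvd⟩ | ⟨hξ', hedge'⟩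
      · exact Or.inr ⟨(dvd_sub_right hdvd).1 (Chain.dvd_sub hchain i), ih⟩
      · exact Or.inl ⟨hξ', ih.tail hedge'⟩
    · exact Or.inr ⟨hdvd, ih.tail hedge⟩

end PosRootDatum

/-! ## Lakshmibai–Seshadri paths -/

namespace PosRootDatum

variable {ι Λ : Type*} [Fintype ι] [AddCommGroup Λ] (D : PosRootDatum ι Λ)

/-- `O` is a Weyl-stable set of directions and `N` is divisible by all pairings on `O`, so that
the turning points of the paths with directions in `O` are multiples of `1 / N`. -/
structure PathSetup (O : Finset Λ) (N : ℕ) : Prop where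
  pos : 0 < N
  stable : ∀ η ∈ O, ∀ β, D.refl β η ∈ O
  dvd : ∀ η ∈ O, ∀ β, D.coroot β η ≠ 0 → D.coroot β η ∣ (N : ℤ)

/-- Lakshmibai–Seshadri paths with directions in `O`, cut into `N` segments of equal duration;
`d k` is the direction of the `k`-th segment, and the value of `d` from `N` on is junk `0`. -/
structure IsPath (O : Finset Λ) (N : ℕ) (d : ℕ → Λ) : Prop where
  mem : ∀ k < N, d k ∈ O
  zero : ∀ k, N ≤ k → d k = 0
  chain : ∀ k, k + 1 < N → D.Chain N (k + 1) (d k) (d (k + 1))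

/-- The position of a path after `k` segments, scaled by `N`. -/
def pt (d : ℕ → Λ) (k : ℕ) : Λ := ∑ l ∈ Finset.range k, d l

@[simp] lemma pt_zero (d : ℕ → Λ) : pt d 0 = 0 := rfl

lemma pt_succ (d : ℕ → Λ) (k : ℕ) : pt d (k + 1) = pt d k + d k := Finset.sum_range_succ _ _

lemma pt_congr {d d' : ℕ → Λ} {t : ℕ} (h : ∀ l < t, d l = d' l) : pt d t = pt d' t :=
  Finset.sum_congr rfl fun l hl => h l (Finset.mem_range.1 hl)

variable {D} {O : Finset Λ} {N : ℕ} {d : ℕ → Λ} {i : ι}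

namespace IsPath

lemma dvd_coroot_sub (h : D.IsPath O N d) (i : ι) {k : ℕ} (hk : k < N) :
    (N : ℤ) ∣ k * D.coroot i (d k) - D.coroot i (pt d k) := by
  induction k with
  | zero => simp
  | succ k ih =>
    refine (congrArg ((N : ℤ) ∣ ·) ?_).mpr
      (dvd_add ((h.chain k hk).dvd_sub i) (ih (by omega)))
    rw [pt_succ, map_add]; push_cast; ring

lemma dvd_coroot_sub_succ (h : D.IsPath O N d) (i : ι) {k : ℕ} (hk : k < N) :
    (N : ℤ) ∣ ((k + 1 : ℕ) : ℤ) * D.coroot i (d k) - D.coroot i (pt d (k + 1)) := by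
  refine (congrArg ((N : ℤ) ∣ ·) ?_).mpr (h.dvd_coroot_sub i hk)
  rw [pt_succ, map_add]; push_cast; ring

lemma dvd_coroot_pt_end (h : D.IsPath O N d) (i : ι) : (N : ℤ) ∣ D.coroot i (pt d N) := by
  rcases N with _ | n
  · simp
  · exact (dvd_sub_right (dvd_mul_right _ _)).1 (h.dvd_coroot_sub_succ i n.lt_succ_self)

lemma coroot_dvd_sub (hS : D.PathSetup O N) (h : D.IsPath O N d) (i : ι) {k : ℕ} (hk : k < N)
    {m : ℤ} (hm : (N : ℤ) ∣ m) (h0 : D.coroot i (d k) ≠ 0) :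
    D.coroot i (d k) ∣ m - D.coroot i (pt d k) := by
  have hdvd := hS.dvd _ (h.mem k hk) i h0
  exact dvd_sub (hdvd.trans hm)
    ((dvd_sub_right (dvd_mul_left _ _)).1 (hdvd.trans (h.dvd_coroot_sub i hk)))

-- A multiple of `N` cannot be jumped over within one segment.
lemma le_coroot_pt_succ (hS : D.PathSetup O N) (h : D.IsPath O N d) (i : ι) {k : ℕ} (hk : k < N)
    {m : ℤ} (hm : (N : ℤ) ∣ m) (hlt : m < D.coroot i (pt d k)) :
    m ≤ D.coroot i (pt d (k + 1)) := by
  rw [pt_succ, map_add]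
  rcases le_or_gt 0 (D.coroot i (d k)) with h0 | h0
  · omega
  · have := Int.le_of_dvd (by omega) (neg_dvd.2 (dvd_neg.2 (h.coroot_dvd_sub hS i hk hm h0.ne)))
    omega

lemma coroot_succ_neg (hi : D.IsSimpleRoot i) (h : D.IsPath O N d) {k : ℕ} (hk : k + 1 < N)
    (hdvd : ¬ (N : ℤ) ∣ D.coroot i (pt d (k + 1))) (hneg : D.coroot i (d k) < 0) :
    D.coroot i (d (k + 1)) < 0 ∧ D.Chain N (k + 1) (D.refl i (d k)) (D.refl i (d (k + 1))) :=
  ((h.chain k hk).of_neg hi hneg).resolve_right fun hc =>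
    hdvd ((dvd_sub_right hc.1).1 (h.dvd_coroot_sub_succ i (by omega)))

lemma exists_first_min (hi : D.IsSimpleRoot i) (h : D.IsPath O N d) {b : ℕ} (hb : b ≤ N)
    (hdvd : (N : ℤ) ∣ D.coroot i (pt d b)) :
    ∃ q ≤ b, (∀ l ≤ b, D.coroot i (pt d q) ≤ D.coroot i (pt d l)) ∧
      (∀ l < q, D.coroot i (pt d q) < D.coroot i (pt d l)) ∧ (N : ℤ) ∣ D.coroot i (pt d q) := by
  classical
  have hex : ∃ q ≤ b, ∀ l ≤ b, D.coroot i (pt d q) ≤ D.coroot i (pt d l) := by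
    simpa using Finset.exists_min_image (Finset.range (b + 1)) (fun l => D.coroot i (pt d l))
      Finset.nonempty_range_add_one
  obtain ⟨hqb, hmin⟩ := Nat.find_spec hex
  have hfirst : ∀ l < Nat.find hex, D.coroot i (pt d (Nat.find hex)) < D.coroot i (pt d l) := by
    intro l hl
    by_contra! hc
    exact Nat.find_min hex hl ⟨by omega, fun l' hl' => hc.trans (hmin l' hl')⟩
  generalize Nat.find hex = q at hqb hmin hfirst
  refine ⟨q, hqb, hmin, hfirst, ?_⟩
  by_contra hq
  obtain _ | k := q
  · simp at hq
  have hkb : k + 1 ≠ b := by rintro rfl; exact hq hdvd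
  have hlt := hfirst k k.lt_succ_self
  rw [pt_succ, map_add] at hlt
  have hneg := (h.coroot_succ_neg hi (k := k) (by omega) hq (by omega)).1
  have hle := hmin (k + 2) (by omega)
  rw [pt_succ d (k + 1), map_add] at hle
  omega

lemma add_le_coroot_pt (hi : D.IsSimpleRoot i) (h : D.IsPath O N d) {b : ℕ} (hb : b ≤ N)
    (hdvd : (N : ℤ) ∣ D.coroot i (pt d b)) {m : ℤ} (hm : (N : ℤ) ∣ m)
    (hlt : ∀ l ≤ b, m < D.coroot i (pt d l)) {l : ℕ} (hl : l ≤ b) :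
    m + N ≤ D.coroot i (pt d l) := by
  obtain ⟨q, hq, hmin, -, hq'⟩ := h.exists_first_min hi hb hdvd
  have := Int.le_of_dvd (by linarith [hlt q hq]) (dvd_sub hq' hm)
  linarith [hmin l hl]

end IsPath

/-! ## Dual paths -/

/-- The dual path: the path traversed backwards, translated to start at `0`. -/
def dual (N : ℕ) (d : ℕ → Λ) : ℕ → Λ := fun k => if k < N then -d (N - 1 - k) else 0

lemma dual_apply {k : ℕ} (hk : k < N) : dual N d k = -d (N - 1 - k) := if_pos hk

lemma dual_of_le {k : ℕ} (hk : N ≤ k) : dual N d k = 0 := if_neg hk.not_gt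

lemma pt_dual {k : ℕ} (hk : k ≤ N) : pt (dual N d) k = pt d (N - k) - pt d N := by
  induction k with
  | zero => simp
  | succ k ih =>
    rw [pt_succ, ih (by omega), dual_apply (by omega), show N - k = N - 1 - k + 1 by omega,
      pt_succ, show N - (k + 1) = N - 1 - k by omega]
    abel

lemma coroot_pt_dual {k : ℕ} (hk : k ≤ N) : D.coroot i (pt (dual N d) k) =
    D.coroot i (pt d (N - k)) - D.coroot i (pt d N) := by
  rw [pt_dual hk, map_sub]

lemma dual_dual (h : ∀ k, N ≤ k → d k = 0) : dual N (dual N d) = d := by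
  funext k
  rcases lt_or_ge k N with hk | hk
  · rw [dual_apply hk, dual_apply (by omega), neg_neg, show N - 1 - (N - 1 - k) = k by omega]
  · rw [dual_of_le hk, h k hk]

lemma PathSetup.neg (hS : D.PathSetup O N) :
    D.PathSetup (O.map (Equiv.neg Λ).toEmbedding) N where
  pos := hS.pos
  stable η hη β := by
    simp only [Finset.mem_map_equiv, Equiv.neg_symm, Equiv.neg_apply, ← map_neg] at hη ⊢
    exact hS.stable _ hη β
  dvd η hη β h := by
    simp only [Finset.mem_map_equiv, Equiv.neg_symm, Equiv.neg_apply] at hη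
    simpa using hS.dvd _ hη β (by simpa using h)

lemma IsPath.dual (h : D.IsPath O N d) :
    D.IsPath (O.map (Equiv.neg Λ).toEmbedding) N (dual N d) where
  mem k hk := by simpa [dual_apply hk] using h.mem (N - 1 - k) (by omega)
  zero k hk := dual_of_le hk
  chain k hk := by
    rw [dual_apply (by omega), dual_apply hk]
    have := Chain.neg (h.chain (N - 1 - (k + 1)) (by omega)) (by omega)
    rwa [show N - 1 - (k + 1) + 1 = N - 1 - k by omega, show N - (N - 1 - k) = k + 1 by omega]
      at this

/-! ## Reflecting a section of a path -/

variable (D) in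
/-- Replace the segments with index in `[p, q)` by their reflections in the root `i`. -/
def reflOn (i : ι) (p q : ℕ) (d : ℕ → Λ) : ℕ → Λ :=
  fun l => if p ≤ l ∧ l < q then D.refl i (d l) else d l

lemma reflOn_of_mem {p q l : ℕ} (hp : p ≤ l) (hq : l < q) : D.reflOn i p q d l = D.refl i (d l) :=
  if_pos ⟨hp, hq⟩

lemma reflOn_of_lt {p q l : ℕ} (h : l < p) : D.reflOn i p q d l = d l :=
  if_neg (by omega)

lemma reflOn_of_ge {p q l : ℕ} (h : q ≤ l) : D.reflOn i p q d l = d l :=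
  if_neg (by omega)

lemma reflOn_reflOn {p q : ℕ} : D.reflOn i p q (D.reflOn i p q d) = d := by
  funext l
  unfold reflOn
  split_ifs <;> simp

lemma reflOn_dual {p q : ℕ} (hq : q ≤ N) :
    D.reflOn i (N - q) (N - p) (dual N d) = dual N (D.reflOn i p q d) := by
  funext l
  rcases lt_or_ge l N with hl | hl
  · rw [dual_apply hl]
    unfold reflOn
    rw [dual_apply hl]
    split_ifs <;> first | rfl | omega | rw [map_neg]
  · rw [reflOn_of_ge (by omega), dual_of_le hl, dual_of_le hl]

lemma pt_reflOn_of_le {p q l : ℕ} (h : l ≤ p) : pt (D.reflOn i p q d) l = pt d l :=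
  pt_congr fun l' hl' => reflOn_of_lt (by omega)

lemma pt_reflOn_of_mem {p q l : ℕ} (hp : p ≤ l) (hq : l ≤ q) : pt (D.reflOn i p q d) l =
    pt d l - (D.coroot i (pt d l) - D.coroot i (pt d p)) • D.root i := by
  induction l, hp using Nat.le_induction with
  | base => rw [pt_reflOn_of_le le_rfl]; simp
  | succ l hl ih =>
    rw [pt_succ, ih (by omega), reflOn_of_mem hl (by omega), pt_succ, refl_apply, map_add]
    simp only [sub_smul, add_smul]; abel

lemma pt_reflOn_of_ge {p q l : ℕ} (hpq : p ≤ q) (hl : q ≤ l) : pt (D.reflOn i p q d) l =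
    pt d l - (D.coroot i (pt d q) - D.coroot i (pt d p)) • D.root i := by
  induction l, hl using Nat.le_induction with
  | base => rw [pt_reflOn_of_mem hpq le_rfl]
  | succ l hl ih =>
    rw [pt_succ, ih, reflOn_of_ge hl, pt_succ]; abel

lemma coroot_pt_reflOn_of_mem {p q l : ℕ} (hp : p ≤ l) (hq : l ≤ q) :
    D.coroot i (pt (D.reflOn i p q d) l) =
      2 * D.coroot i (pt d p) - D.coroot i (pt d l) := by
  rw [pt_reflOn_of_mem hp hq, map_sub, map_zsmul, D.coroot_root_self, smul_eq_mul]; ring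

lemma coroot_pt_reflOn_of_ge {p q l : ℕ} (hpq : p ≤ q) (hl : q ≤ l) :
    D.coroot i (pt (D.reflOn i p q d) l) =
      D.coroot i (pt d l) - 2 * (D.coroot i (pt d q) - D.coroot i (pt d p)) := by
  rw [pt_reflOn_of_ge hpq hl, map_sub, map_zsmul, D.coroot_root_self, smul_eq_mul]; ring

/-! ## The intervals of the root operators -/

variable (D) in
/-- `[p, q]` is the interval on which the raising operator of the simple root `i` acts: the height
`⟨pt d ·, i∨⟩` attains its minimum `m` for the first time at `q`, and `p` is the last time before
`q` at which it equals `m + N`. -/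
structure RaisesAt (N : ℕ) (i : ι) (d : ℕ → Λ) (p q : ℕ) (m : ℤ) : Prop where
  lt : p < q
  le : q ≤ N
  dvd : (N : ℤ) ∣ m
  at_left : D.coroot i (pt d p) = m + N
  at_right : D.coroot i (pt d q) = m
  left : ∀ l ≤ p, m + N ≤ D.coroot i (pt d l)
  mid : ∀ l, p < l → l < q → m < D.coroot i (pt d l) ∧ D.coroot i (pt d l) < m + N
  right : ∀ l, q ≤ l → l ≤ N → m ≤ D.coroot i (pt d l)

variable (D) in
/-- `[p, q]` is the interval on which the lowering operator of the simple root `i` acts: the height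
attains its minimum `m` for the last time at `p`, and `q` is the first time after `p` at which it
equals `m + N`. -/
structure LowersAt (N : ℕ) (i : ι) (d : ℕ → Λ) (p q : ℕ) (m : ℤ) : Prop where
  lt : p < q
  le : q ≤ N
  dvd : (N : ℤ) ∣ m
  at_left : D.coroot i (pt d p) = m
  at_right : D.coroot i (pt d q) = m + N
  left : ∀ l ≤ p, m ≤ D.coroot i (pt d l)
  mid : ∀ l, p < l → l < q → m < D.coroot i (pt d l) ∧ D.coroot i (pt d l) < m + N
  right : ∀ l, q ≤ l → l ≤ N → m + N ≤ D.coroot i (pt d l)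

section Intervals

variable {p q p' q' : ℕ} {m m' : ℤ}

lemma RaisesAt.reflOn (h : D.RaisesAt N i d p q m) :
    D.LowersAt N i (D.reflOn i p q d) p q (m + N) where
  lt := h.lt
  le := h.le
  dvd := dvd_add h.dvd dvd_rfl
  at_left := by rw [pt_reflOn_of_le le_rfl, h.at_left]
  at_right := by rw [coroot_pt_reflOn_of_mem h.lt.le le_rfl, h.at_left, h.at_right]; ring
  left l hl := by rw [pt_reflOn_of_le hl]; exact h.left l hl
  mid l hp hq := by
    rw [coroot_pt_reflOn_of_mem hp.le hq.le, h.at_left]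
    constructor <;> linarith [h.mid l hp hq]
  right l hq hN := by
    rw [coroot_pt_reflOn_of_ge h.lt.le hq, h.at_left, h.at_right]; linarith [h.right l hq hN]

lemma LowersAt.reflOn (h : D.LowersAt N i d p q m) :
    D.RaisesAt N i (D.reflOn i p q d) p q (m - N) where
  lt := h.lt
  le := h.le
  dvd := dvd_sub h.dvd dvd_rfl
  at_left := by rw [pt_reflOn_of_le le_rfl, h.at_left]; ring
  at_right := by rw [coroot_pt_reflOn_of_mem h.lt.le le_rfl, h.at_left, h.at_right]; ring
  left l hl := by rw [pt_reflOn_of_le hl]; linarith [h.left l hl]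
  mid l hp hq := by
    rw [coroot_pt_reflOn_of_mem hp.le hq.le, h.at_left]
    constructor <;> linarith [h.mid l hp hq]
  right l hq hN := by
    rw [coroot_pt_reflOn_of_ge h.lt.le hq, h.at_left, h.at_right]; linarith [h.right l hq hN]

lemma RaisesAt.dual (h : D.RaisesAt N i d p q m) (hd : (N : ℤ) ∣ D.coroot i (pt d N)) :
    D.LowersAt N i (dual N d) (N - q) (N - p) (m - D.coroot i (pt d N)) := by
  have hlt := h.lt
  have hle := h.le
  refine ⟨by omega, by omega, dvd_sub h.dvd hd, ?_, ?_, fun l hl => ?_, fun l hp hq => ?_,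
    fun l hq hN => ?_⟩
  · rw [coroot_pt_dual (by omega), Nat.sub_sub_self hle, h.at_right]
  · rw [coroot_pt_dual (by omega), Nat.sub_sub_self (by omega), h.at_left]; ring
  · rw [coroot_pt_dual (by omega)]; linarith [h.right (N - l) (by omega) (by omega)]
  · rw [coroot_pt_dual (by omega)]
    constructor <;> linarith [h.mid (N - l) (by omega) (by omega)]
  · rw [coroot_pt_dual hN]; linarith [h.left (N - l) (by omega)]

lemma LowersAt.dual (h : D.LowersAt N i d p q m) (hd : (N : ℤ) ∣ D.coroot i (pt d N)) :
    D.RaisesAt N i (dual N d) (N - q) (N - p) (m - D.coroot i (pt d N)) := by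
  have hlt := h.lt
  have hle := h.le
  refine ⟨by omega, by omega, dvd_sub h.dvd hd, ?_, ?_, fun l hl => ?_, fun l hp hq => ?_,
    fun l hq hN => ?_⟩
  · rw [coroot_pt_dual (by omega), Nat.sub_sub_self hle, h.at_right]; ring
  · rw [coroot_pt_dual (by omega), Nat.sub_sub_self (by omega), h.at_left]
  · rw [coroot_pt_dual (by omega)]; linarith [h.right (N - l) (by omega) (by omega)]
  · rw [coroot_pt_dual (by omega)]
    constructor <;> linarith [h.mid (N - l) (by omega) (by omega)]
  · rw [coroot_pt_dual hN]; linarith [h.left (N - l) (by omega)]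

lemma RaisesAt.le_coroot_pt (h : D.RaisesAt N i d p q m) {l : ℕ} (hl : l ≤ N) :
    m ≤ D.coroot i (pt d l) := by
  rcases le_or_gt l p with hp | hp
  · linarith [h.left l hp]
  rcases lt_or_ge l q with hq | hq
  · exact (h.mid l hp hq).1.le
  · exact h.right l hq hl

lemma LowersAt.le_coroot_pt (h : D.LowersAt N i d p q m) {l : ℕ} (hl : l ≤ N) :
    m ≤ D.coroot i (pt d l) := by
  rcases le_or_gt l p with hp | hp
  · exact h.left l hp
  rcases lt_or_ge l q with hq | hq
  · exact (h.mid l hp hq).1.le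
  · linarith [h.right l hq hl]

lemma RaisesAt.lt_coroot_pt (hN : 0 < N) (h : D.RaisesAt N i d p q m) {l : ℕ} (hl : l < q) :
    m < D.coroot i (pt d l) := by
  rcases le_or_gt l p with hp | hp
  · linarith [h.left l hp, (Nat.cast_pos (α := ℤ)).2 hN]
  · exact (h.mid l hp hl).1

lemma RaisesAt.unique (hN : 0 < N) (h : D.RaisesAt N i d p q m)
    (h' : D.RaisesAt N i d p' q' m') : p = p' ∧ q = q' := by
  obtain rfl : m = m' := le_antisymm (by rw [← h'.at_right]; exact h.le_coroot_pt h'.le)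
    (by rw [← h.at_right]; exact h'.le_coroot_pt h.le)
  obtain rfl : q = q' := le_antisymm
    (le_of_not_gt fun hc => (h.lt_coroot_pt hN hc).ne' h'.at_right)
    (le_of_not_gt fun hc => (h'.lt_coroot_pt hN hc).ne' h.at_right)
  exact ⟨le_antisymm (le_of_not_gt fun hc => (h'.mid p hc h.lt).2.ne h.at_left)
    (le_of_not_gt fun hc => (h.mid p' hc h'.lt).2.ne h'.at_left), rfl⟩

lemma LowersAt.unique (hN : 0 < N) (hd : (N : ℤ) ∣ D.coroot i (pt d N))
    (h : D.LowersAt N i d p q m) (h' : D.LowersAt N i d p' q' m') : p = p' ∧ q = q' := by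
  have := (h.dual hd).unique hN (h'.dual hd)
  have := h.lt
  have := h.le
  have := h'.lt
  have := h'.le
  omega

lemma IsPath.exists_raisesAt (hS : D.PathSetup O N) (hi : D.IsSimpleRoot i) (h : D.IsPath O N d)
    {t : ℕ} (ht : t ≤ N) (hneg : D.coroot i (pt d t) ≤ -N) : ∃ p q m, D.RaisesAt N i d p q m := by
  classical
  have hN := (Nat.cast_pos (α := ℤ)).2 hS.pos
  obtain ⟨q, hqN, hmin, hfirst, hdvd⟩ := h.exists_first_min hi le_rfl (h.dvd_coroot_pt_end i)
  generalize hm : D.coroot i (pt d q) = m at hmin hfirst hdvd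
  have hmN : m ≤ -N := (hmin t ht).trans hneg
  have hq : q ≠ 0 := by rintro rfl; simp at hm; omega
  let p := Nat.findGreatest (fun p => m + N ≤ D.coroot i (pt d p)) (q - 1)
  have hpq : p ≤ q - 1 := Nat.findGreatest_le (q - 1)
  have hple : m + N ≤ D.coroot i (pt d p) :=
    Nat.findGreatest_spec (P := fun p => m + N ≤ D.coroot i (pt d p)) (Nat.zero_le _)
      (by simp; omega)
  have hlast (l : ℕ) (hp : p < l) (hq : l < q) : D.coroot i (pt d l) < m + N :=
    not_le.1 (Nat.findGreatest_is_greatest hp (by omega))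
  clear_value p
  have hp : D.coroot i (pt d p) = m + N := by
    refine le_antisymm (not_lt.1 fun hc => ?_) hple
    have hle := h.le_coroot_pt_succ hS i (k := p) (by omega) (dvd_add hdvd dvd_rfl) hc
    rcases (show p + 1 ≤ q by omega).eq_or_lt with hpq | hpq
    · rw [hpq, hm] at hle; omega
    · exact hle.not_gt (hlast (p + 1) (by omega) hpq)
  have hdvd' := dvd_add hdvd (dvd_refl (N : ℤ))
  exact ⟨p, q, m, by omega, hqN, hdvd, hp, hm,
    fun l => h.add_le_coroot_pt hi (by omega) (by rwa [hp]) hdvd fun l hl => hfirst l (by omega),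
    fun l hpl hlq => ⟨hfirst l hlq, hlast l hpl hlq⟩, fun l _ => hmin l⟩

lemma IsPath.exists_lowersAt (hS : D.PathSetup O N) (hi : D.IsSimpleRoot i) (h : D.IsPath O N d)
    {t : ℕ} (ht : t ≤ N) (hpos : D.coroot i (pt d t) + N ≤ D.coroot i (pt d N)) :
    ∃ p q m, D.LowersAt N i d p q m := by
  obtain ⟨p, q, m, hraise⟩ := h.dual.exists_raisesAt hS.neg hi (t := N - t) (by omega) (by
    rw [coroot_pt_dual (by omega), Nat.sub_sub_self ht]; linarith)
  have := hraise.dual (h.dual.dvd_coroot_pt_end i)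
  rw [dual_dual h.zero] at this
  exact ⟨_, _, _, this⟩

lemma RaisesAt.not_dvd (h : D.RaisesAt N i d p q m) {l : ℕ} (hp : p < l) (hq : l < q) :
    ¬ (N : ℤ) ∣ D.coroot i (pt d l) := fun hc => by
  have := h.mid l hp hq
  have := Int.le_of_dvd (by omega) (dvd_sub hc h.dvd)
  omega

lemma RaisesAt.coroot_neg (hi : D.IsSimpleRoot i) (h : D.IsPath O N d)
    (hr : D.RaisesAt N i d p q m) {l : ℕ} (hpl : p ≤ l) (hlq : l < q) :
    D.coroot i (d l) < 0 := by
  have hq := hr.le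
  induction l, hpl using Nat.le_induction with
  | base =>
    have hlt : D.coroot i (pt d (p + 1)) < m + N := by
      rcases (show p + 1 ≤ q by omega).eq_or_lt with hpq | hpq
      · rw [hpq, hr.at_right]; omega
      · exact (hr.mid _ (by omega) hpq).2
    rw [pt_succ, map_add, hr.at_left] at hlt; omega
  | succ l hl ih =>
    exact (h.coroot_succ_neg hi (by omega) (hr.not_dvd (by omega) hlq) (ih (by omega))).1

lemma RaisesAt.chain_reflOn (hi : D.IsSimpleRoot i) (h : D.IsPath O N d)
    (hr : D.RaisesAt N i d p q m) {k : ℕ} (hk : k + 1 < N) :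
    D.Chain N (k + 1) (D.reflOn i p q d k) (D.reflOn i p q d (k + 1)) := by
  have hpq := hr.lt
  rcases lt_trichotomy (k + 1) p with hp | hp | hp
  · rw [reflOn_of_lt hp, reflOn_of_lt (by omega)]; exact h.chain k hk
  · rw [reflOn_of_lt (by omega), reflOn_of_mem hp.ge (by omega)]
    refine (h.chain k hk).tail
      (Edge.refl_of_isSimpleRoot hi (hr.coroot_neg hi h hp.ge (by omega)) ?_)
    have hdvd := h.dvd_coroot_sub i hk
    rw [hp, hr.at_left] at hdvd
    rw [hp]
    exact (dvd_sub_left (dvd_add hr.dvd dvd_rfl)).1 hdvd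
  rcases lt_trichotomy (k + 1) q with hq | hq | hq
  · rw [reflOn_of_mem (by omega) (by omega), reflOn_of_mem (by omega) hq]
    exact (h.coroot_succ_neg hi hk (hr.not_dvd hp hq)
      (hr.coroot_neg hi h (by omega) (by omega))).2
  · rw [reflOn_of_mem (by omega) (by omega), reflOn_of_ge hq.ge]
    rcases (h.chain k hk).of_neg hi (hr.coroot_neg hi h (by omega) (by omega)) with hc | hc
    · have hle := hr.right (k + 2) (by omega) (by omega)
      rw [pt_succ, map_add, hq, hr.at_right, ← hq] at hle
      omega
    · exact hc.2
  · rw [reflOn_of_ge (by omega), reflOn_of_ge (by omega)]; exact h.chain k hk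

lemma RaisesAt.isPath_reflOn (hS : D.PathSetup O N) (hi : D.IsSimpleRoot i)
    (h : D.IsPath O N d) (hr : D.RaisesAt N i d p q m) : D.IsPath O N (D.reflOn i p q d) where
  mem k hk := by
    rw [PosRootDatum.reflOn]
    split_ifs
    exacts [hS.stable _ (h.mem k hk) i, h.mem k hk]
  zero k hk := by rw [reflOn_of_ge (hr.le.trans hk), h.zero k hk]
  chain k hk := hr.chain_reflOn hi h hk

lemma LowersAt.isPath_reflOn (hS : D.PathSetup O N) (hi : D.IsSimpleRoot i)
    (h : D.IsPath O N d) (hl : D.LowersAt N i d p q m) : D.IsPath O N (D.reflOn i p q d) := by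
  have hdual := ((hl.dual (h.dvd_coroot_pt_end i)).isPath_reflOn hS.neg hi h.dual).dual
  rw [reflOn_dual hl.le, dual_dual fun k hk => by
    rw [reflOn_of_ge (hl.le.trans hk), h.zero k hk]] at hdual
  simpa [Finset.map_map] using hdual

end Intervals

end PosRootDatum

/-! ## Root operators -/

namespace PosRootDatum

variable {ι Λ : Type*} [Fintype ι] [AddCommGroup Λ] {D : PosRootDatum ι Λ}
variable {O : Finset Λ} {N : ℕ} {d d' d'' : ℕ → Λ} {i : ι}

variable (D) in
open Classical in
/-- The lowering operator `f_i` on paths, with the junk value `d` where it is not defined. -/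
noncomputable def lowOp (N : ℕ) (i : ι) (d : ℕ → Λ) : ℕ → Λ :=
  if h : ∃ pq : ℕ × ℕ, ∃ m, D.LowersAt N i d pq.1 pq.2 m then
    D.reflOn i h.choose.1 h.choose.2 d
  else d

variable (D) in
open Classical in
/-- The raising operator `e_i` on paths, with the junk value `d` where it is not defined. -/
noncomputable def raiseOp (N : ℕ) (i : ι) (d : ℕ → Λ) : ℕ → Λ :=
  if h : ∃ pq : ℕ × ℕ, ∃ m, D.RaisesAt N i d pq.1 pq.2 m then
    D.reflOn i h.choose.1 h.choose.2 d
  else d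

lemma LowersAt.lowOp_eq (hN : 0 < N) (hd : (N : ℤ) ∣ D.coroot i (pt d N)) {p q : ℕ} {m : ℤ}
    (h : D.LowersAt N i d p q m) : D.lowOp N i d = D.reflOn i p q d := by
  have hex : ∃ pq : ℕ × ℕ, ∃ m, D.LowersAt N i d pq.1 pq.2 m := ⟨(p, q), m, h⟩
  obtain ⟨m', hm'⟩ := hex.choose_spec
  obtain ⟨hp, hq⟩ := hm'.unique hN hd h
  rw [lowOp, dif_pos hex, hp, hq]

lemma RaisesAt.raiseOp_eq (hN : 0 < N) {p q : ℕ} {m : ℤ} (h : D.RaisesAt N i d p q m) :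
    D.raiseOp N i d = D.reflOn i p q d := by
  have hex : ∃ pq : ℕ × ℕ, ∃ m, D.RaisesAt N i d pq.1 pq.2 m := ⟨(p, q), m, h⟩
  obtain ⟨m', hm'⟩ := hex.choose_spec
  obtain ⟨hp, hq⟩ := hm'.unique hN h
  rw [raiseOp, dif_pos hex, hp, hq]

variable (D) in
/-- `t` is the first time at which the height in direction `i` is at most `-c N`. -/
structure Hit (N : ℕ) (i : ι) (c : ℤ) (t : ℕ) (d : ℕ → Λ) : Prop where
  le : t ≤ N
  at_time : D.coroot i (pt d t) ≤ -(c * N)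
  before : ∀ l < t, -(c * N) < D.coroot i (pt d l)

lemma hit_zero : D.Hit N i 0 0 d := ⟨Nat.zero_le _, by simp, by simp⟩

lemma Hit.congr {c : ℤ} {t : ℕ} (h : D.Hit N i c t d) (hd : ∀ l < t, d' l = d l) :
    D.Hit N i c t d' where
  le := h.le
  at_time := by rw [pt_congr hd]; exact h.at_time
  before l hl := by rw [pt_congr fun l' hl' => hd l' (by omega)]; exact h.before l hl

lemma Hit.le_of_coroot_le {c : ℤ} {t p : ℕ} (h : D.Hit N i c t d)
    (hp : D.coroot i (pt d p) ≤ -(c * N)) : t ≤ p := by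
  by_contra! hc
  linarith [h.before p hc]

variable (D) in
/-- `d'` is a path which agrees with `d` up to time `t` and whose end point is obtained from that
of `d` by subtracting `n` times the root `i`. -/
structure IsShift (O : Finset Λ) (N : ℕ) (i : ι) (t : ℕ) (n : ℤ) (d d' : ℕ → Λ) : Prop where
  isPath : D.IsPath O N d'
  eq_before : ∀ l < t, d' l = d l
  pt_end : pt d' N = pt d N - (n * N) • D.root i

lemma IsPath.isShift_zero (h : D.IsPath O N d) (t : ℕ) : D.IsShift O N i t 0 d d :=
  ⟨h, fun _ _ => rfl, by simp⟩

lemma IsShift.trans {t : ℕ} {m n : ℤ} (h : D.IsShift O N i t m d d')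
    (h' : D.IsShift O N i t n d' d'') : D.IsShift O N i t (m + n) d d'' where
  isPath := h'.isPath
  eq_before l hl := (h'.eq_before l hl).trans (h.eq_before l hl)
  pt_end := by rw [h'.pt_end, h.pt_end, add_mul, add_smul, sub_sub]

section RootOperators

variable (hS : D.PathSetup O N) (hi : D.IsSimpleRoot i) (h : D.IsPath O N d) {c : ℤ} {t : ℕ}
  (ht : D.Hit N i c t d)
include hS hi h ht

lemma isShift_lowOp {t' : ℕ} (ht' : t' ≤ N) {n : ℕ}
    (hn : D.coroot i (pt d t') + (n + 1 : ℕ) * N ≤ D.coroot i (pt d N)) :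
    D.IsShift O N i t 1 d (D.lowOp N i d) ∧ D.raiseOp N i (D.lowOp N i d) = d ∧
      ∃ q ≤ N, D.coroot i (pt (D.lowOp N i d) q) + n * N ≤
        D.coroot i (pt (D.lowOp N i d) N) := by
  obtain ⟨p, q, m, hl⟩ := h.exists_lowersAt hS hi ht' (by push_cast at hn; nlinarith)
  rw [hl.lowOp_eq hS.pos (h.dvd_coroot_pt_end i)]
  have htp : t ≤ p :=
    ht.le_of_coroot_le (by rw [hl.at_left]; exact (hl.le_coroot_pt ht.le).trans ht.at_time)
  refine ⟨⟨hl.isPath_reflOn hS hi h, fun l hlt => reflOn_of_lt (by omega), ?_⟩, ?_,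
    q, hl.le, ?_⟩
  · rw [pt_reflOn_of_ge hl.lt.le hl.le, hl.at_left, hl.at_right, add_sub_cancel_left, one_mul]
  · rw [hl.reflOn.raiseOp_eq hS.pos, reflOn_reflOn]
  · rw [coroot_pt_reflOn_of_ge hl.lt.le hl.le, coroot_pt_reflOn_of_ge hl.lt.le le_rfl,
      hl.at_left, hl.at_right]
    push_cast at hn
    linarith [hl.le_coroot_pt ht']

lemma isShift_raiseOp (hc : 0 ≤ c) {t' : ℕ} (ht' : t' ≤ N) {n : ℕ}
    (hn : D.coroot i (pt d t') ≤ -((c + (n + 1 : ℕ)) * N)) :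
    D.IsShift O N i t (-1) d (D.raiseOp N i d) ∧ D.lowOp N i (D.raiseOp N i d) = d ∧
      ∃ p ≤ N, D.coroot i (pt (D.raiseOp N i d) p) ≤ -((c + n) * N) := by
  have hN := (Nat.cast_pos (α := ℤ)).2 hS.pos
  have hcN := mul_nonneg hc hN.le
  have hnN := mul_nonneg (Nat.cast_nonneg (α := ℤ) n) hN.le
  push_cast at hn
  obtain ⟨p, q, m, hr⟩ := h.exists_raisesAt hS hi ht' (by nlinarith)
  have hm := hr.le_coroot_pt ht'
  have htp : t ≤ p := ht.le_of_coroot_le (by rw [hr.at_left]; nlinarith)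
  have hpath := hr.isPath_reflOn hS hi h
  rw [hr.raiseOp_eq hS.pos]
  refine ⟨⟨hpath, fun l hlt => reflOn_of_lt (by omega), ?_⟩, ?_, p, hr.lt.le.trans hr.le, ?_⟩
  · rw [pt_reflOn_of_ge hr.lt.le hr.le, hr.at_left, hr.at_right, sub_add_cancel_left,
      neg_one_mul]
  · rw [hr.reflOn.lowOp_eq hS.pos (hpath.dvd_coroot_pt_end i), reflOn_reflOn]
  · rw [pt_reflOn_of_le le_rfl, hr.at_left]; nlinarith

lemma isShift_lowOp_iterate (n : ℕ)
    (hn : ∃ t' ≤ N, D.coroot i (pt d t') + n * N ≤ D.coroot i (pt d N)) :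
    D.IsShift O N i t n d ((D.lowOp N i)^[n] d) ∧
      (D.raiseOp N i)^[n] ((D.lowOp N i)^[n] d) = d := by
  induction n generalizing d with
  | zero => exact ⟨by simpa using h.isShift_zero t, rfl⟩
  | succ n ih =>
    obtain ⟨t', ht', hn⟩ := hn
    obtain ⟨hshift, hinv, hn'⟩ := isShift_lowOp hS hi h ht ht' hn
    obtain ⟨hshift', hinv'⟩ := ih hshift.isPath (ht.congr hshift.eq_before) hn'
    rw [Function.iterate_succ_apply, Function.iterate_succ_apply', hinv', hinv]
    exact ⟨by simpa [add_comm] using hshift.trans hshift', rfl⟩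

lemma isShift_raiseOp_iterate (hc : 0 ≤ c) (n : ℕ)
    (hn : ∃ t' ≤ N, D.coroot i (pt d t') ≤ -((c + n) * N)) :
    D.IsShift O N i t (-n) d ((D.raiseOp N i)^[n] d) ∧
      (D.lowOp N i)^[n] ((D.raiseOp N i)^[n] d) = d := by
  induction n generalizing d with
  | zero => exact ⟨by simpa using h.isShift_zero t, rfl⟩
  | succ n ih =>
    obtain ⟨t', ht', hn⟩ := hn
    obtain ⟨hshift, hinv, hn'⟩ := isShift_raiseOp hS hi h ht hc ht' hn
    obtain ⟨hshift', hinv'⟩ := ih hshift.isPath (ht.congr hshift.eq_before) hn'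
    rw [Function.iterate_succ_apply, Function.iterate_succ_apply', hinv', hinv]
    exact ⟨by simpa using hshift.trans hshift', rfl⟩

end RootOperators

/-! ## End points and reflections of strings -/

lemma Edge.exists_smul_eq {k : ℕ} {η η' : Λ} (h : D.Edge N k η η') :
    ∃ χ : Λ, (k : ℤ) • η' = (k : ℤ) • η + (N : ℤ) • χ := by
  obtain ⟨β, -, ⟨c, hc⟩, rfl, -⟩ := h
  refine ⟨-c • D.root β, ?_⟩
  rw [refl_apply, smul_sub, ← mul_smul, hc, mul_smul, neg_smul, smul_neg, sub_eq_add_neg]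

lemma Chain.exists_smul_eq {k : ℕ} {η η' : Λ} (h : D.Chain N k η η') :
    ∃ χ : Λ, (k : ℤ) • η' = (k : ℤ) • η + (N : ℤ) • χ := by
  induction h with
  | refl => exact ⟨0, by simp⟩
  | tail _ hedge ih =>
    obtain ⟨χ, hχ⟩ := ih
    obtain ⟨χ', hχ'⟩ := hedge.exists_smul_eq
    exact ⟨χ + χ', by rw [hχ', hχ, smul_add, add_assoc]⟩

lemma IsPath.exists_smul_eq (h : D.IsPath O N d) {k : ℕ} (hk : k < N) :
    ∃ χ : Λ, (k : ℤ) • d k = pt d k + (N : ℤ) • χ := by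
  induction k with
  | zero => exact ⟨0, by simp⟩
  | succ k ih =>
    obtain ⟨χ, hχ⟩ := ih (by omega)
    obtain ⟨χ', hχ'⟩ := Chain.exists_smul_eq (h.chain k hk)
    refine ⟨χ + χ', ?_⟩
    rw [hχ', pt_succ, smul_add]; push_cast
    rw [add_smul, hχ, one_smul]; abel

lemma IsPath.exists_smul_eq_pt_end (h : D.IsPath O N d) : ∃ χ : Λ, (N : ℤ) • χ = pt d N := by
  rcases N with _ | n
  · exact ⟨0, by simp⟩
  · obtain ⟨χ, hχ⟩ := h.exists_smul_eq n.lt_succ_self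
    refine ⟨d n - χ, ?_⟩
    rw [pt_succ, smul_sub, sub_eq_iff_eq_add, add_right_comm, ← hχ]
    push_cast
    rw [add_smul, one_smul]

open Classical in
/-- The end point of a path; unlike `pt d N`, it is not scaled by `N`. The junk value `0` is taken
when `pt d N` is not divisible by `N`, which does not happen for paths. -/
noncomputable def endpoint (N : ℕ) (d : ℕ → Λ) : Λ :=
  if h : ∃ χ : Λ, (N : ℤ) • χ = pt d N then h.choose else 0

lemma IsPath.smul_endpoint (h : D.IsPath O N d) : (N : ℤ) • endpoint N d = pt d N := by
  rw [endpoint, dif_pos h.exists_smul_eq_pt_end]; exact h.exists_smul_eq_pt_end.choose_spec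

lemma IsPath.coroot_pt_end (h : D.IsPath O N d) (i : ι) :
    D.coroot i (pt d N) = N * D.coroot i (endpoint N d) := by
  rw [← h.smul_endpoint, map_zsmul, smul_eq_mul]

lemma IsPath.endpoint_eq (hN : 0 < N) (h : D.IsPath O N d) {χ : Λ}
    (hχ : (N : ℤ) • χ = pt d N) : endpoint N d = χ :=
  D.eq_of_zsmul_eq (by exact_mod_cast hN.ne') (h.smul_endpoint.trans hχ.symm)

lemma IsShift.endpoint_eq (hN : 0 < N) (h : D.IsPath O N d) {t : ℕ} {n : ℤ}
    (h' : D.IsShift O N i t n d d') : endpoint N d' = endpoint N d - n • D.root i :=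
  h'.isPath.endpoint_eq hN <| by
    rw [smul_sub, h.smul_endpoint, h'.pt_end, ← mul_smul, mul_comm]

variable (D) in
/-- Reflect a path in its `i`-string truncated at height `-c`: the end point `χ` becomes
`s_i χ - c α_i`. -/
noncomputable def stringRefl (N : ℕ) (i : ι) (c : ℤ) (d : ℕ → Λ) : ℕ → Λ :=
  if 0 ≤ c + D.coroot i (endpoint N d) then
    (D.lowOp N i)^[(c + D.coroot i (endpoint N d)).toNat] d
  else (D.raiseOp N i)^[(-(c + D.coroot i (endpoint N d))).toNat] d

section StringReflection

lemma stringRefl_of_eq_natCast {c : ℤ} {n : ℕ} (h : c + D.coroot i (endpoint N d) = n) :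
    D.stringRefl N i c d = (D.lowOp N i)^[n] d := by
  rw [stringRefl, h, if_pos n.cast_nonneg, Int.toNat_natCast]

lemma stringRefl_of_eq_neg_natCast {c : ℤ} {n : ℕ} (h : c + D.coroot i (endpoint N d) = -n) :
    D.stringRefl N i c d = (D.raiseOp N i)^[n] d := by
  rcases n.eq_zero_or_pos with rfl | hn
  · exact stringRefl_of_eq_natCast (by rw [h, Nat.cast_zero, neg_zero])
  · rw [stringRefl, h, if_neg (by omega), neg_neg, Int.toNat_natCast]

variable (hS : D.PathSetup O N) (hi : D.IsSimpleRoot i) (h : D.IsPath O N d) {c : ℤ} {t : ℕ}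
include hS h

lemma IsShift.add_coroot_endpoint
    (h' : D.IsShift O N i t (c + D.coroot i (endpoint N d)) d d') :
    c + D.coroot i (endpoint N d') = -(c + D.coroot i (endpoint N d)) := by
  rw [h'.endpoint_eq hS.pos h, map_sub, map_zsmul, D.coroot_root_self, smul_eq_mul]; ring

include hi

lemma stringRefl_spec (hc : 0 ≤ c) (ht : D.Hit N i c t d) :
    D.IsShift O N i t (c + D.coroot i (endpoint N d)) d (D.stringRefl N i c d) ∧
      D.stringRefl N i c (D.stringRefl N i c d) = d := by
  have hend := h.coroot_pt_end i
  rcases Int.eq_nat_or_neg (c + D.coroot i (endpoint N d)) with ⟨n, hn | hn⟩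
  · obtain ⟨hshift, hinv⟩ := isShift_lowOp_iterate hS hi h ht n ⟨t, ht.le, by
      rw [hend, ← hn]; linarith [ht.at_time]⟩
    rw [← hn] at hshift
    have hn' := hshift.add_coroot_endpoint hS h
    rw [stringRefl_of_eq_natCast hn]
    exact ⟨hshift, by rw [stringRefl_of_eq_neg_natCast (hn'.trans (by rw [hn])), hinv]⟩
  · obtain ⟨hshift, hinv⟩ := isShift_raiseOp_iterate hS hi h ht hc n ⟨N, le_rfl, by
      rw [hend, ← neg_eq_iff_eq_neg.2 hn]; linarith⟩
    rw [← hn] at hshift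
    have hn' := hshift.add_coroot_endpoint hS h
    rw [stringRefl_of_eq_neg_natCast hn]
    exact ⟨hshift, by rw [stringRefl_of_eq_natCast (hn'.trans (by rw [hn, neg_neg])), hinv]⟩

end StringReflection

/-! ## Weyl symmetry of the path character, and cancellation -/

variable (D) in
lemma finite_isPath (O : Finset Λ) (N : ℕ) : {d | D.IsPath O N d}.Finite := by
  let extend : (Fin N → O) → ℕ → Λ := fun f k => if h : k < N then f ⟨k, h⟩ else 0
  refine (Set.finite_range extend).subset fun d (hd : D.IsPath O N d) =>
    ⟨fun k => ⟨d k, hd.mem k k.2⟩, funext fun k => ?_⟩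
  simp only [extend]
  split_ifs with h
  · rfl
  · exact (hd.zero k (by omega)).symm

variable (D) in
/-- The finite set of Lakshmibai–Seshadri paths. -/
noncomputable def paths (O : Finset Λ) (N : ℕ) : Finset (ℕ → Λ) := (D.finite_isPath O N).toFinset

@[simp] lemma mem_paths : d ∈ D.paths O N ↔ D.IsPath O N d := by simp [paths]

lemma sum_paths_refl {M : Type*} [AddCommMonoid M] (hS : D.PathSetup O N)
    (hi : D.IsSimpleRoot i) (F : Λ → M) :
    ∑ d ∈ D.paths O N, F (D.refl i (endpoint N d)) = ∑ d ∈ D.paths O N, F (endpoint N d) := by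
  have hspec := fun d (hd : d ∈ D.paths O N) =>
    stringRefl_spec hS hi (mem_paths.1 hd) le_rfl hit_zero
  refine Finset.sum_bij' (fun d _ => D.stringRefl N i 0 d) (fun d _ => D.stringRefl N i 0 d)
    (fun d hd => mem_paths.2 (hspec d hd).1.isPath) (fun d hd => mem_paths.2 (hspec d hd).1.isPath)
    (fun d hd => (hspec d hd).2) (fun d hd => (hspec d hd).2) fun d hd => ?_
  rw [(hspec d hd).1.endpoint_eq hS.pos (mem_paths.1 hd), zero_add, refl_apply]

variable (D) in
/-- The path `d`, started at `ν`, stays dominant: it never reaches a reflection hyperplane of the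
dot action. -/
def StaysDom (N : ℕ) (ν : Λ) (d : ℕ → Λ) : Prop :=
  ∀ t ≤ N, ∀ j, D.IsSimpleRoot j → -((D.coroot j ν + 1) * N) < D.coroot j (pt d t)

variable (D) in
/-- The path `d`, started at `ν`, meets a reflection hyperplane of the dot action for the first
time at `t`, and `j` is the simple root of one such hyperplane. -/
structure LeavesAt (N : ℕ) (ν : Λ) (d : ℕ → Λ) (j : ι) (t : ℕ) : Prop where
  isSimpleRoot : D.IsSimpleRoot j
  le : t ≤ N
  at_time : D.coroot j (pt d t) ≤ -((D.coroot j ν + 1) * N)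
  before : ∀ l < t, ∀ j, D.IsSimpleRoot j → -((D.coroot j ν + 1) * N) < D.coroot j (pt d l)

namespace LeavesAt

variable {ν : Λ} {j j' : ι} {t t' : ℕ}

lemma hit (h : D.LeavesAt N ν d j t) : D.Hit N j (D.coroot j ν + 1) t d :=
  ⟨h.le, h.at_time, fun l hl => h.before l hl j h.isSimpleRoot⟩

lemma not_staysDom (h : D.LeavesAt N ν d j t) : ¬ D.StaysDom N ν d :=
  fun hd => (hd t h.le j h.isSimpleRoot).not_ge h.at_time

lemma time_unique (h : D.LeavesAt N ν d j t) (h' : D.LeavesAt N ν d j' t') : t = t' :=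
  le_antisymm (le_of_not_gt fun hc => (h.before t' hc j' h'.isSimpleRoot).not_ge h'.at_time)
    (le_of_not_gt fun hc => (h'.before t hc j h.isSimpleRoot).not_ge h.at_time)

lemma congr (h : D.LeavesAt N ν d j t) (hd : ∀ l < t, d' l = d l) : D.LeavesAt N ν d' j t where
  isSimpleRoot := h.isSimpleRoot
  le := h.le
  at_time := by rw [pt_congr hd]; exact h.at_time
  before l hl := by rw [pt_congr fun l' hl' => hd l' (by omega)]; exact h.before l hl

lemma iff_of_eq_before (h : D.LeavesAt N ν d j t) (hd : ∀ l < t, d' l = d l) :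
    D.LeavesAt N ν d' j' t' ↔ D.LeavesAt N ν d j' t' := by
  constructor <;> intro h'
  · obtain rfl := (h.congr hd).time_unique h'
    exact h'.congr fun l hl => (hd l hl).symm
  · obtain rfl := h.time_unique h'
    exact h'.congr hd

end LeavesAt

lemma exists_leavesAt {ν : Λ} (h : ¬ D.StaysDom N ν d) :
    ∃ jt : ι × ℕ, D.LeavesAt N ν d jt.1 jt.2 := by
  classical
  simp only [StaysDom, not_forall, not_lt] at h
  obtain ⟨t, ht, j, hj, hle⟩ := h
  have hex : ∃ t, ∃ j, D.IsSimpleRoot j ∧ D.coroot j (pt d t) ≤ -((D.coroot j ν + 1) * N) :=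
    ⟨t, j, hj, hle⟩
  obtain ⟨j', hj', hle'⟩ := Nat.find_spec hex
  exact ⟨(j', Nat.find hex), hj', (Nat.find_min' hex ⟨j, hj, hle⟩).trans ht, hle',
    fun l hl j'' hj'' => not_le.1 fun hc => Nat.find_min hex hl ⟨j'', hj'', hc⟩⟩

variable (D) in
open Classical in
/-- The sign reversing involution on the paths that do not stay dominant: reflect the string
through the first hyperplane met. -/
noncomputable def signInv (N : ℕ) (ν : Λ) (d : ℕ → Λ) : ℕ → Λ :=
  if h : ∃ jt : ι × ℕ, D.LeavesAt N ν d jt.1 jt.2 then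
    D.stringRefl N h.choose.1 (D.coroot h.choose.1 ν + 1) d
  else d

lemma exists_leavesAt_signInv {ν : Λ} (h : ¬ D.StaysDom N ν d) :
    ∃ j t, D.LeavesAt N ν d j t ∧ D.signInv N ν d = D.stringRefl N j (D.coroot j ν + 1) d ∧
      ∀ d', (∀ l < t, d' l = d l) →
        D.signInv N ν d' = D.stringRefl N j (D.coroot j ν + 1) d' := by
  have hex := exists_leavesAt h
  have hspec := hex.choose_spec
  have hsign : ∀ d', (∀ l < hex.choose.2, d' l = d l) → D.signInv N ν d' =
      D.stringRefl N hex.choose.1 (D.coroot hex.choose.1 ν + 1) d' := fun d' hd' => by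
    have heq : D.LeavesAt N ν d' = D.LeavesAt N ν d :=
      funext₂ fun _ _ => propext (hspec.iff_of_eq_before hd')
    rw [signInv, heq, dif_pos hex]
  exact ⟨_, _, hspec, hsign d fun _ _ => rfl, hsign⟩

lemma signInv_spec (hS : D.PathSetup O N) {ν : Λ} (hν : D.IsDom ν) (h : D.IsPath O N d)
    (hd : ¬ D.StaysDom N ν d) :
    D.IsPath O N (D.signInv N ν d) ∧ ¬ D.StaysDom N ν (D.signInv N ν d) ∧
      D.signInv N ν (D.signInv N ν d) = d ∧ ∃ j, D.IsSimpleRoot j ∧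
      endpoint N (D.signInv N ν d) =
        endpoint N d - (D.coroot j ν + 1 + D.coroot j (endpoint N d)) • D.root j := by
  obtain ⟨j, t, hj, heq, hsign⟩ := exists_leavesAt_signInv hd
  obtain ⟨hshift, hinv⟩ := stringRefl_spec hS hj.isSimpleRoot h (by linarith [hν j]) hj.hit
  rw [heq]
  exact ⟨hshift.isPath, (hj.congr hshift.eq_before).not_staysDom,
    (hsign _ hshift.eq_before).trans hinv, j, hj.isSimpleRoot, hshift.endpoint_eq hS.pos h⟩

variable (D) in
/-- Skew-symmetry under the simple reflections. -/
def IsSkew {M : Type*} [Neg M] (A : Λ → M) : Prop :=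
  ∀ i, D.IsSimpleRoot i → ∀ χ, A (D.refl i χ) = -A χ

section Skew

variable {M : Type*} [AddCommGroup M] {A : Λ → M} {ν ρ : Λ}

lemma IsSkew.apply_signInv (hA : D.IsSkew A) (hρ : D.IsRho ρ) (hS : D.PathSetup O N)
    (hν : D.IsDom ν) (h : D.IsPath O N d) (hd : ¬ D.StaysDom N ν d) :
    A (ν + ρ + endpoint N (D.signInv N ν d)) = -A (ν + ρ + endpoint N d) := by
  obtain ⟨-, -, -, j, hj, hend⟩ := signInv_spec hS hν h hd
  rw [hend, ← hA j hj, refl_apply, map_add, map_add, hρ.coroot_of_isSimpleRoot hj]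
  congr 1; abel

open Classical in
lemma IsSkew.sum_paths [IsAddTorsionFree M] (hA : D.IsSkew A) (hρ : D.IsRho ρ)
    (hS : D.PathSetup O N) (hν : D.IsDom ν) :
    ∑ d ∈ D.paths O N, A (ν + ρ + endpoint N d) =
      ∑ d ∈ (D.paths O N).filter (D.StaysDom N ν), A (ν + ρ + endpoint N d) := by
  rw [← Finset.sum_filter_add_sum_filter_not (D.paths O N) (D.StaysDom N ν), add_eq_left]
  have hmem : ∀ d, d ∈ (D.paths O N).filter (fun d => ¬ D.StaysDom N ν d) ↔
      D.IsPath O N d ∧ ¬ D.StaysDom N ν d := by simp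
  refine Finset.sum_involution (fun d _ => D.signInv N ν d) (fun d hd => ?_)
    (fun d hd h0 hc => ?_) (fun d hd => ?_) fun d hd => ?_ <;> rw [hmem] at hd
  · rw [hA.apply_signInv hρ hS hν hd.1 hd.2, add_neg_cancel]
  · have hneg := hA.apply_signInv hρ hS hν hd.1 hd.2
    rw [hc] at hneg
    exact h0 (self_eq_neg.1 hneg)
  · obtain ⟨hpath, hnot, -⟩ := signInv_spec hS hν hd.1 hd.2
    exact (hmem _).2 ⟨hpath, hnot⟩
  · exact (signInv_spec hS hν hd.1 hd.2).2.2.1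

end Skew

lemma StaysDom.coroot_nonneg (hS : D.PathSetup O N) {ν : Λ} (h : D.IsPath O N d)
    (hd : D.StaysDom N ν d) {t : ℕ} (ht : t ≤ N) {j : ι} (hj : D.IsSimpleRoot j) :
    0 ≤ D.coroot j ((N : ℤ) • ν + pt d t) := by
  obtain ⟨q, hq, hmin, -, c, hc⟩ := h.exists_first_min hj le_rfl (h.dvd_coroot_pt_end j)
  have hlt := hd q hq j hj
  have hle := hmin t ht
  have hN := (Nat.cast_pos (α := ℤ)).2 hS.pos
  have hνc : 0 ≤ D.coroot j ν + c := by
    rw [hc] at hlt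
    have : 0 < D.coroot j ν + 1 + c := by
      refine pos_of_mul_pos_right (b := D.coroot j ν + 1 + c) ?_ hN.le
      linarith
    omega
  rw [map_add, map_zsmul, smul_eq_mul]
  nlinarith

lemma StaysDom.isDom_endpoint (hS : D.PathSetup O N) {ν : Λ} (h : D.IsPath O N d)
    (hd : D.StaysDom N ν d) : D.IsDom (ν + endpoint N d) := by
  refine D.isDom_of_isSimpleRoot fun j hj => ?_
  have hnonneg := hd.coroot_nonneg hS h le_rfl hj
  rw [← h.smul_endpoint, ← smul_add, map_zsmul, smul_eq_mul] at hnonneg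
  exact nonneg_of_mul_nonneg_right hnonneg ((Nat.cast_pos (α := ℤ)).2 hS.pos)

lemma staysDom_of_isDom (hN : 0 < N) {ν : Λ} (h : ∀ t ≤ N, D.IsDom ((N : ℤ) • ν + pt d t)) :
    D.StaysDom N ν d := fun t ht j _ => by
  have hnonneg := h t ht j
  rw [map_add, map_zsmul, smul_eq_mul] at hnonneg
  have := (Nat.cast_pos (α := ℤ)).2 hN
  linarith

end PosRootDatum

/-! ## The path ending at a PRV component -/

namespace PosRootDatum

variable {ι Λ : Type*} [Fintype ι] [AddCommGroup Λ] {D : PosRootDatum ι Λ}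
variable {O : Finset Λ} {N : ℕ} {d : ℕ → Λ}

-- Reflecting `y` in simple roots vanishing at the current position does not move the position,
-- and each reflection which increases the direction `y η` is a step of the Bruhat order.
lemma exists_chain_of_coroot_eq_zero (N : ℕ) (ν η : Λ) (k : ℕ) (y : List ι) :
    ∃ y' : List ι,
      (N : ℤ) • D.word y' ν + (k : ℤ) • D.word y' η =
        (N : ℤ) • D.word y ν + (k : ℤ) • D.word y η ∧
      D.Chain N k (D.word y η) (D.word y' η) ∧
      ∀ i, D.IsSimpleRoot i →
        D.coroot i ((N : ℤ) • D.word y' ν + (k : ℤ) • D.word y' η) = 0 →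
          0 ≤ D.coroot i (D.word y' η) := by
  induction hn : D.negCount (D.word y η) using Nat.strong_induction_on generalizing y with
  | _ n ih =>
    by_cases hex : ∃ i, D.IsSimpleRoot i ∧
        D.coroot i ((N : ℤ) • D.word y ν + (k : ℤ) • D.word y η) = 0 ∧
          D.coroot i (D.word y η) < 0
    · obtain ⟨i, hi, h0, hneg⟩ := hex
      obtain ⟨y', hpos, hchain, hy'⟩ := ih _ (hn ▸ D.negCount_refl_lt hneg) (i :: y) rfl
      refine ⟨y', ?_, hchain.head (Edge.refl_of_isSimpleRoot hi hneg ?_), hy'⟩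
      · rw [hpos, word_cons_apply, word_cons_apply, ← map_zsmul (D.refl i), ← map_zsmul (D.refl i),
          ← map_add (D.refl i), D.refl_of_coroot_eq_zero h0]
      · rw [map_add, map_zsmul, map_zsmul, smul_eq_mul, smul_eq_mul] at h0
        exact ⟨-D.coroot i (D.word y ν), by linarith⟩
    · push Not at hex
      exact ⟨y, rfl, .refl, hex⟩

lemma PathSetup.isDom_add (hS : D.PathSetup O N) {χ θ η : Λ} {k : ℕ} (hη : η ∈ O)
    (hχ : χ = (N : ℤ) • θ + (k : ℤ) • η) (hdom : D.IsDom χ)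
    (hzero : ∀ i, D.IsSimpleRoot i → D.coroot i χ = 0 → 0 ≤ D.coroot i η) :
    D.IsDom (χ + η) := by
  refine D.isDom_of_isSimpleRoot fun i hi => ?_
  have hχi := hdom i
  rw [map_add]
  rcases le_or_gt 0 (D.coroot i η) with hnonneg | hneg
  · omega
  · have hne : D.coroot i χ ≠ 0 := fun h0 => hneg.not_ge (hzero i hi h0)
    have hdvd : D.coroot i η ∣ D.coroot i χ := by
      rw [hχ, map_add, map_zsmul, map_zsmul, smul_eq_mul, smul_eq_mul]
      exact dvd_add ((hS.dvd η hη i hneg.ne).mul_right _) (dvd_mul_left _ _)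
    have := Int.le_of_dvd (hχi.lt_of_ne' hne) (neg_dvd.mpr hdvd)
    omega

lemma exists_isPath_forall_isDom (hS : D.PathSetup O N) {ν η : Λ} (hν : D.IsDom ν)
    (hO : ∀ l, D.word l η ∈ O) :
    ∃ d, D.IsPath O N d ∧ (∀ t ≤ N, D.IsDom ((N : ℤ) • ν + pt d t)) ∧
      ∃ y, (N : ℤ) • ν + pt d N = (N : ℤ) • D.word y ν + (N : ℤ) • D.word y η := by
  choose s hpos hchain hs using exists_chain_of_coroot_eq_zero (D := D) N ν η
  let y : ℕ → List ι := fun k => Nat.rec [] (fun k y => s k y) k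
  let d : ℕ → Λ := fun k => if k < N then D.word (y (k + 1)) η else 0
  have hd {k : ℕ} (hk : k < N) : d k = D.word (y (k + 1)) η := if_pos hk
  have hpt : ∀ k ≤ N, (N : ℤ) • ν + pt d k =
      (N : ℤ) • D.word (y k) ν + (k : ℤ) • D.word (y k) η := by
    intro k hk
    induction k with
    | zero => simp [y, word_nil_apply]
    | succ k ih =>
      rw [pt_succ, ← add_assoc, ih (by omega), hd hk, ← hpos k (y k), Nat.cast_succ, add_smul,
        one_smul, add_assoc]
  refine ⟨d, ⟨fun k hk => hd hk ▸ hO _, fun k hk => if_neg hk.not_gt, fun k hk => ?_⟩,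
    fun t ht => ?_, y N, hpt N le_rfl⟩
  · rw [hd hk, hd (Nat.lt_of_succ_lt hk)]
    exact hchain (k + 1) (y (k + 1))
  · induction t with
    | zero => exact fun β => by simpa using mul_nonneg N.cast_nonneg (hν β)
    | succ t ih =>
      have hχ := (hpt t (by omega)).trans (hpos t (y t)).symm
      rw [pt_succ, ← add_assoc, hd ht]
      exact hS.isDom_add (hO _) hχ (ih (by omega)) (by rw [hχ]; exact hs t (y t))

lemma exists_staysDom_of_conj (hS : D.PathSetup O N) {ν η θ : Λ} (hν : D.IsDom ν)
    (hθ : D.IsDom θ) (hO : ∀ l, D.word l η ∈ O) (hc : D.Conj (ν + η) θ) :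
    ∃ d, D.IsPath O N d ∧ D.StaysDom N ν d ∧ ν + endpoint N d = θ := by
  obtain ⟨d, hd, hdom, y, hy⟩ := exists_isPath_forall_isDom hS hν hO
  have hstays := staysDom_of_isDom hS.pos hdom
  rw [← hd.smul_endpoint, ← smul_add, ← smul_add, ← map_add] at hy
  have hend := D.eq_of_zsmul_eq (by exact_mod_cast hS.pos.ne') hy
  exact ⟨d, hd, hstays, (hc.symm.trans ⟨y, hend.symm⟩).eq_of_isDom hθ (hstays.isDom_endpoint hS hd)⟩

/-! ## Orbits of weights -/

lemma abs_coroot_refl (β γ : ι) (χ : Λ) :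
    |D.coroot γ (D.refl β χ)| = |D.coroot (D.reflIdx β γ) χ| := by
  rcases D.refl_root β γ with h | h
  · rw [D.coroot_eq_of_refl_eq h]
  · rw [D.coroot_eq_of_refl_eq_neg h, abs_neg]

lemma abs_coroot_word_le {χ : Λ} {M : ℤ} (hM : ∀ β, |D.coroot β χ| ≤ M) (l : List ι) (β : ι) :
    |D.coroot β (D.word l χ)| ≤ M := by
  induction l generalizing β with
  | nil => exact hM β
  | cons i l ih => rw [word_cons_apply, abs_coroot_refl]; exact ih _

variable (D) in
lemma finite_setOf_abs_coroot_le (M : ℤ) : {χ : Λ | ∀ β, |D.coroot β χ| ≤ M}.Finite := by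
  have hfin : {f : ι → ℤ | ∀ β, f β ∈ Set.Icc (-M) M}.Finite :=
    Set.Finite.pi' fun _ => Set.finite_Icc _ _
  refine Set.Finite.of_finite_image (f := fun χ β => D.coroot β χ) (hfin.subset ?_) ?_
  · rintro _ ⟨χ, hχ, rfl⟩ β
    exact abs_le.mp (hχ β)
  · exact fun χ _ ψ _ h => sub_eq_zero.1 <| D.eq_zero_of_coroot_eq_zero _ fun β => by
      rw [map_sub, sub_eq_zero]; exact congrFun h β

variable (D) in
lemma exists_pathSetup (η : Λ) :
    ∃ (O : Finset Λ) (N : ℕ), D.PathSetup O N ∧ ∀ χ, χ ∈ O ↔ D.Conj η χ := by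
  obtain ⟨M, hM⟩ : ∃ M : ℕ, ∀ β, |D.coroot β η| ≤ M := by
    refine ⟨∑ β, (D.coroot β η).natAbs, fun β => ?_⟩
    rw [Int.abs_eq_natAbs]
    exact_mod_cast Finset.single_le_sum (f := fun β => (D.coroot β η).natAbs)
      (fun _ _ => Nat.zero_le _) (Finset.mem_univ β)
  have hbound : ∀ χ, D.Conj η χ → ∀ β, |D.coroot β χ| ≤ M := by
    rintro _ ⟨l, rfl⟩ β
    exact abs_coroot_word_le hM l β
  have hfin : {χ | D.Conj η χ}.Finite := (D.finite_setOf_abs_coroot_le M).subset hbound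
  refine ⟨hfin.toFinset, M.factorial, ⟨M.factorial_pos, fun χ hχ β => ?_, fun χ hχ β hne => ?_⟩,
    by simp⟩
  · rw [Set.Finite.mem_toFinset] at hχ ⊢
    exact Conj.trans hχ (D.conj_refl β χ)
  · have hle := hbound χ (hfin.mem_toFinset.1 hχ) β
    rw [Int.abs_eq_natAbs] at hle
    rw [← Int.natAbs_dvd_natAbs, Int.natAbs_natCast]
    exact Nat.dvd_factorial (Int.natAbs_pos.mpr hne) (by exact_mod_cast hle)

lemma exists_isDom_word (χ : Λ) :
    ∃ l : List ι, (∀ i ∈ l, D.IsSimpleRoot i) ∧ D.IsDom (D.word l χ) := by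
  induction hn : D.negCount χ using Nat.strong_induction_on generalizing χ with
  | _ n ih =>
    by_cases hd : ∀ i, D.IsSimpleRoot i → 0 ≤ D.coroot i χ
    · exact ⟨[], by simp, D.isDom_of_isSimpleRoot hd⟩
    · push Not at hd
      obtain ⟨i, hi, hneg⟩ := hd
      obtain ⟨l, hl, hdom⟩ := ih _ (hn ▸ D.negCount_refl_lt hneg) (D.refl i χ) rfl
      refine ⟨l ++ [i], ?_, by rwa [word_append_apply]⟩
      simpa [or_imp, forall_and] using ⟨hl, hi⟩

section Skew

variable {M : Type*} [AddCommGroup M] {A : Λ → M} {ρ : Λ}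

lemma IsSkew.apply_word_ne_zero (hA : D.IsSkew A) {ξ : Λ} (h : A ξ ≠ 0) {l : List ι}
    (hl : ∀ i ∈ l, D.IsSimpleRoot i) : A (D.word l ξ) ≠ 0 := by
  induction l with
  | nil => exact h
  | cons i l ih =>
    rw [word_cons_apply, hA i (hl i List.mem_cons_self)]
    exact neg_ne_zero.mpr (ih fun j hj => hl j (List.mem_cons_of_mem i hj))

lemma IsSkew.exists_isDom_apply_add_ne_zero [IsAddTorsionFree M] (hA : D.IsSkew A)
    (hρ : D.IsRho ρ) {ξ : Λ} (h : A ξ ≠ 0) :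
    ∃ κ, D.IsDom κ ∧ A (κ + ρ) ≠ 0 ∧ D.Conj ξ (κ + ρ) := by
  obtain ⟨l, hl, hdom⟩ := exists_isDom_word (D := D) ξ
  have hne := hA.apply_word_ne_zero h hl
  refine ⟨D.word l ξ - ρ, D.isDom_of_isSimpleRoot fun i hi => ?_, by rwa [sub_add_cancel],
    ⟨l, by rw [sub_add_cancel]⟩⟩
  have hi0 : D.coroot i (D.word l ξ) ≠ 0 := fun h0 => by
    have hskew := hA i hi (D.word l ξ)
    rw [D.refl_of_coroot_eq_zero h0] at hskew
    exact hne (self_eq_neg.1 hskew)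
  have := hdom i
  rw [map_sub, hρ.coroot_of_isSimpleRoot hi]
  omega

lemma IsSkew.eq_zero [IsAddTorsionFree M] (hA : D.IsSkew A) (hρ : D.IsRho ρ)
    (h : ∀ κ, D.IsDom κ → A (κ + ρ) = 0) : A = 0 := by
  funext ξ
  by_contra hne
  obtain ⟨κ, hκ, hne', -⟩ := hA.exists_isDom_apply_add_ne_zero hρ hne
  exact hne' (h κ hκ)

end Skew

/-! ## Straight paths -/

lemma Chain.eq_of_isDom_neg {k : ℕ} {η η' : Λ} (h : D.Chain N k η η') (hη' : D.IsDom (-η')) :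
    η = η' := by
  induction h with
  | refl => rfl
  | tail _ hedge _ =>
    obtain ⟨β, hneg, -, rfl, -⟩ := hedge
    have := hη' β
    rw [map_neg, coroot_refl_self] at this
    omega

section EndsAtZero

variable (hS : D.PathSetup O N) {ν μ : Λ} (hμ : D.IsDom μ)
  (hO : ∀ χ, χ ∈ O ↔ D.Conj (-μ) χ) (h : D.IsPath O N d) (hd : D.StaysDom N ν d)
  (hend : ν + endpoint N d = 0)
include hS hμ hO h hd hend

lemma StaysDom.apply_eq_neg {k : ℕ} (hk : k < N) : d k = -μ := by
  induction hj : N - 1 - k generalizing k with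
  | zero =>
    obtain rfl : N = k + 1 := by omega
    have hpt : ((k + 1 : ℕ) : ℤ) • ν + pt d k + d k = 0 := by
      rw [add_assoc, ← pt_succ, ← h.smul_endpoint, ← smul_add, hend, smul_zero]
    have hdom : D.IsDom (-d k) := D.isDom_of_isSimpleRoot fun j hj => by
      rw [← eq_neg_of_add_eq_zero_left hpt]
      exact hd.coroot_nonneg hS h (Nat.le_succ k) hj
    have hconj : D.Conj μ (-d k) := by simpa using ((hO _).1 (h.mem k hk)).neg
    rw [← hconj.eq_of_isDom hμ hdom, neg_neg]
  | succ j ih =>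
    have hsucc := ih (k := k + 1) (by omega) (by omega)
    rw [Chain.eq_of_isDom_neg (h.chain k (by omega)) (by rwa [hsucc, neg_neg]), hsucc]

lemma StaysDom.eq_of_add_endpoint_eq_zero : ν = μ := by
  have hpt : (N : ℤ) • -μ = pt d N := by
    rw [pt, Finset.sum_congr rfl fun k hk =>
      hd.apply_eq_neg hS hμ hO h hend (Finset.mem_range.1 hk), Finset.sum_const,
      Finset.card_range, natCast_zsmul]
  rwa [h.endpoint_eq hS.pos hpt, add_neg_eq_zero] at hend

end EndsAtZero

end PosRootDatum

/-! ## Formal characters -/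

lemma derivation_prod {R A : Type*} [CommRing R] [CommRing A] [Algebra R A] {ι : Type*}
    [DecidableEq ι] (δ : Derivation R A A) (s : Finset ι) (f : ι → A) :
    δ (∏ i ∈ s, f i) = ∑ i ∈ s, (∏ j ∈ s.erase i, f j) * δ (f i) := by
  induction s using Finset.induction_on with
  | empty => simp
  | insert i s hi ih =>
    rw [Finset.prod_insert hi, Finset.sum_insert hi, Finset.erase_insert hi, δ.leibniz, ih,
      smul_eq_mul, smul_eq_mul, add_comm, Finset.mul_sum]
    refine congrArg _ (Finset.sum_congr rfl fun j hj => ?_)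
    rw [Finset.erase_insert_of_ne (ne_of_mem_of_not_mem hj hi).symm,
      Finset.prod_insert (fun h => hi (Finset.mem_of_mem_erase h)), mul_assoc]

namespace PosRootDatum

open AddMonoidAlgebra (single)

section Coefficients

variable {Λ : Type*}

/-- Multiplication of the coefficient of each weight `χ` in a formal character by `c χ`. -/
noncomputable def scaleCoeff (c : Λ → ℂ) : AddMonoidAlgebra ℂ Λ →ₗ[ℂ] AddMonoidAlgebra ℂ Λ where
  toFun f := .ofCoeff (Finsupp.onFinset f.coeff.support (fun χ => c χ * f.coeff χ)
    fun _ h => Finsupp.mem_support_iff.2 (right_ne_zero_of_mul h))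
  map_add' f g := by ext; simp [mul_add]
  map_smul' a f := by ext; simp [mul_left_comm]

@[simp] lemma coeff_scaleCoeff (c : Λ → ℂ) (f : AddMonoidAlgebra ℂ Λ) (χ : Λ) :
    (scaleCoeff c f).coeff χ = c χ * f.coeff χ := rfl

lemma scaleCoeff_single (c : Λ → ℂ) (a : Λ) (r : ℂ) :
    scaleCoeff c (single a r) = single a (c a * r) := by
  classical
  ext ψ
  rw [coeff_scaleCoeff, AddMonoidAlgebra.coeff_single, AddMonoidAlgebra.coeff_single,
    Finsupp.single_apply, Finsupp.single_apply, mul_ite, mul_zero]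
  exact ite_congr rfl (fun h => by rw [h]) fun _ => rfl

end Coefficients

variable {ι Λ : Type*} [Fintype ι] [AddCommGroup Λ] (D : PosRootDatum ι Λ)

/-- The directional derivative of formal characters: `e^ψ ↦ (χ, ψ) e^ψ`. -/
noncomputable def weightDeriv (χ : Λ) :
    Derivation ℂ (AddMonoidAlgebra ℂ Λ) (AddMonoidAlgebra ℂ Λ) :=
  .mk' (scaleCoeff fun ψ => (D.form χ ψ : ℂ)) fun f g => by
    induction f using AddMonoidAlgebra.induction_linear with
    | zero => simp
    | add f f' hf hf' =>
      rw [add_mul, map_add, hf, hf', map_add]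
      simp only [smul_eq_mul]
      ring
    | single a r =>
      ext ψ
      have hψ : D.form χ ψ = D.form χ a + D.form χ (-a + ψ) := by
        rw [← map_add, add_neg_cancel_left]
      rw [smul_eq_mul, smul_eq_mul, mul_comm g, scaleCoeff_single, AddMonoidAlgebra.coeff_add,
        Finsupp.add_apply]
      simp only [coeff_scaleCoeff, AddMonoidAlgebra.coeff_single_mul_apply, hψ]
      push_cast
      ring

/-- The Laplacian on formal characters: `e^ψ ↦ (ψ, ψ) e^ψ`. -/
noncomputable def laplacian : AddMonoidAlgebra ℂ Λ →ₗ[ℂ] AddMonoidAlgebra ℂ Λ :=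
  scaleCoeff fun ψ => (D.form ψ ψ : ℂ)

/-- The Weyl denominator `e^ρ ∏ (1 - e^{-β})`, the product running over the positive roots. -/
noncomputable def weylDenominator (ρ : Λ) : AddMonoidAlgebra ℂ Λ :=
  single ρ 1 * ∏ β, (1 - single (-D.root β) 1)

open Classical in
/-- The Weyl denominator without its factor `1 - e^{-β}`. -/
noncomputable def weylDenominatorErase (ρ : Λ) (β : ι) : AddMonoidAlgebra ℂ Λ :=
  single ρ 1 * ∏ γ ∈ Finset.univ.erase β, (1 - single (-D.root γ) 1)

lemma weylDenominator_eq_mul_erase (ρ : Λ) (β : ι) :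
    D.weylDenominator ρ = (1 - single (-D.root β) 1) * D.weylDenominatorErase ρ β := by
  classical
  rw [weylDenominator, weylDenominatorErase, ← Finset.mul_prod_erase _ _ (Finset.mem_univ β)]
  ring

lemma weightDeriv_single (χ a : Λ) (r : ℂ) :
    D.weightDeriv χ (single a r) = single a (D.form χ a * r) :=
  scaleCoeff_single _ a r

lemma laplacian_single (a : Λ) (r : ℂ) : D.laplacian (single a r) = single a (D.form a a * r) :=
  scaleCoeff_single _ a r

lemma laplacian_single_mul (a : Λ) (r : ℂ) (g : AddMonoidAlgebra ℂ Λ) :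
    D.laplacian (single a r * g) =
      D.laplacian (single a r) * g + single a r * (2 * D.weightDeriv a g) +
        single a r * D.laplacian g := by
  have hadd (ψ : Λ) : D.form (a + ψ) (a + ψ) = D.form a a + 2 * D.form a ψ + D.form ψ ψ := by
    rw [map_add, LinearMap.map_add₂, LinearMap.map_add₂, D.form_comm ψ a]
    ring
  rw [two_mul, laplacian_single]
  ext ψ
  obtain ⟨ψ, rfl⟩ : ∃ ψ', ψ = a + ψ' := ⟨-a + ψ, (add_neg_cancel_left a ψ).symm⟩
  have hderiv : (D.weightDeriv a g).coeff ψ = D.form a ψ * g.coeff ψ := rfl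
  simp only [laplacian, coeff_scaleCoeff, AddMonoidAlgebra.coeff_single_mul_apply,
    AddMonoidAlgebra.coeff_add, Finsupp.add_apply, neg_add_cancel_left, hadd, hderiv]
  push_cast
  ring

lemma weightDeriv_weylDenominator (χ ρ : Λ) :
    D.weightDeriv χ (D.weylDenominator ρ) =
      (D.form χ ρ : ℂ) • D.weylDenominator ρ +
        ∑ β, (D.form χ (D.root β) : ℂ) •
          (single (-D.root β) 1 * D.weylDenominatorErase ρ β) := by
  classical
  have hfactor (β : ι) : D.weightDeriv χ (1 - single (-D.root β) 1) =
      (D.form χ (D.root β) : ℂ) • single (-D.root β) 1 := by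
    rw [map_sub, Derivation.map_one_eq_zero, weightDeriv_single, map_neg, zero_sub,
      AddMonoidAlgebra.smul_single, ← AddMonoidAlgebra.single_neg, smul_eq_mul, Rat.cast_neg,
      neg_mul, neg_neg]
  rw [weylDenominator, Derivation.leibniz, weightDeriv_single, derivation_prod, add_comm,
    ← smul_eq_mul (D.form χ ρ : ℂ), ← AddMonoidAlgebra.smul_single, smul_eq_mul, smul_eq_mul,
    mul_smul_comm, mul_comm (∏ β, _), Finset.mul_sum]
  refine congrArg _ (Finset.sum_congr rfl fun β _ => ?_)
  rw [hfactor, mul_smul_comm, mul_smul_comm, weylDenominatorErase]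
  congr 1
  ring

variable {D} {ρ : Λ}

lemma IsRho.two_mul_weightDeriv_weylDenominator (hρ : D.IsRho ρ) (χ : Λ) :
    2 * D.weightDeriv χ (D.weylDenominator ρ) =
      ∑ β, (D.form χ (D.root β) : ℂ) •
        ((1 + single (-D.root β) 1) * D.weylDenominatorErase ρ β) := by
  have hform : (D.form χ ρ : ℂ) + D.form χ ρ = ∑ β, (D.form χ (D.root β) : ℂ) := by
    rw [← Rat.cast_add, ← map_add, hρ, twoRho, map_sum, Rat.cast_sum]
  have hden : (D.form χ ρ : ℂ) • D.weylDenominator ρ + (D.form χ ρ : ℂ) • D.weylDenominator ρ =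
      ∑ β, (D.form χ (D.root β) : ℂ) •
        ((1 - single (-D.root β) 1) * D.weylDenominatorErase ρ β) := by
    rw [← add_smul, hform, Finset.sum_smul]
    exact Finset.sum_congr rfl fun β _ => by rw [← weylDenominator_eq_mul_erase]
  rw [weightDeriv_weylDenominator, two_mul, add_add_add_comm, hden, ← Finset.sum_add_distrib,
    ← Finset.sum_add_distrib]
  refine Finset.sum_congr rfl fun β _ => ?_
  rw [← smul_add, ← smul_add]
  congr 1
  ring

lemma IsRho.laplacian_mul_weylDenominator (hρ : D.IsRho ρ) (f : AddMonoidAlgebra ℂ Λ) :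
    D.laplacian (f * D.weylDenominator ρ) =
      D.laplacian f * D.weylDenominator ρ + f * D.laplacian (D.weylDenominator ρ) +
        ∑ β, (1 + single (-D.root β) 1) * D.weylDenominatorErase ρ β *
          D.weightDeriv (D.root β) f := by
  induction f using AddMonoidAlgebra.induction_linear with
  | zero => simp
  | add f g hf hg =>
    rw [add_mul, map_add, hf, hg, map_add, add_mul, add_mul]
    simp only [map_add, mul_add, Finset.sum_add_distrib]
    ring
  | single a r =>
    rw [laplacian_single_mul, hρ.two_mul_weightDeriv_weylDenominator, Finset.mul_sum,
      add_right_comm]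
    congr 1
    refine Finset.sum_congr rfl fun β _ => ?_
    rw [weightDeriv_single, form_comm, ← smul_eq_mul (D.form _ _ : ℂ),
      ← AddMonoidAlgebra.smul_single, mul_smul_comm, mul_smul_comm, mul_comm]

variable (D) in
lemma coeff_prod_one_sub (s : Finset ι) :
    (∀ ψ, (∏ β ∈ s, (1 - single (-D.root β) (1 : ℂ))).coeff ψ ≠ 0 → -ψ ∈ D.posCone) ∧
      (∏ β ∈ s, (1 - single (-D.root β) (1 : ℂ))).coeff 0 = 1 := by
  classical
  induction s using Finset.induction_on with
  | empty =>
    refine ⟨fun ψ h => ?_, by simp⟩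
    rw [Finset.prod_empty, AddMonoidAlgebra.one_def, AddMonoidAlgebra.coeff_single,
      Finsupp.single_apply_ne_zero] at h
    rw [h.1, neg_zero]
    exact zero_mem _
  | insert i s hi ih =>
    set q := ∏ β ∈ s, (1 - single (-D.root β) (1 : ℂ))
    have hcoeff (ψ : Λ) : (∏ β ∈ insert i s, (1 - single (-D.root β) (1 : ℂ))).coeff ψ =
        q.coeff ψ - q.coeff (D.root i + ψ) := by
      rw [Finset.prod_insert hi, sub_mul, one_mul, AddMonoidAlgebra.coeff_sub, Finsupp.sub_apply,
        AddMonoidAlgebra.coeff_single_mul_apply, one_mul, neg_neg]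
    refine ⟨fun ψ h => ?_, ?_⟩
    · rw [hcoeff] at h
      rcases ne_or_eq (q.coeff ψ) 0 with hψ | hψ
      · exact ih.1 ψ hψ
      · rw [hψ, zero_sub, neg_ne_zero] at h
        simpa using add_mem (ih.1 _ h) (D.root_mem_posCone i)
    · rw [hcoeff, ih.2, sub_eq_self]
      by_contra h
      exact D.root_add_ne_zero (ih.1 _ h) i (by abel)

lemma coeff_weylDenominator_add (ρ ψ : Λ) :
    (D.weylDenominator ρ).coeff (ψ + ρ) = (∏ β, (1 - single (-D.root β) (1 : ℂ))).coeff ψ := by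
  rw [weylDenominator, AddMonoidAlgebra.coeff_single_mul_apply, one_mul, add_comm ψ,
    neg_add_cancel_left]

variable (D) in
lemma coeff_weylDenominator_self (ρ : Λ) : (D.weylDenominator ρ).coeff ρ = 1 := by
  simpa using (coeff_weylDenominator_add ρ 0).trans (D.coeff_prod_one_sub _).2

lemma neg_mem_posCone_of_coeff_weylDenominator_ne_zero {ψ : Λ}
    (h : (D.weylDenominator ρ).coeff (ψ + ρ) ≠ 0) : -ψ ∈ D.posCone := by
  rw [coeff_weylDenominator_add] at h
  exact (D.coeff_prod_one_sub _).1 ψ h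

lemma IsDom.coeff_weylDenominator_add {κ : Λ} (hκ : D.IsDom κ) (h : κ ≠ 0) :
    (D.weylDenominator ρ).coeff (κ + ρ) = 0 := by
  by_contra hne
  have hnonneg := D.form_nonneg_of_isSimpleRoot (fun i _ => hκ i)
    (neg_mem_posCone_of_coeff_weylDenominator_ne_zero hne)
  rw [map_neg] at hnonneg
  exact h (D.eq_zero_of_form_self κ (by linarith))

variable (D) in
/-- The action of a reflection on formal characters. -/
noncomputable def reflAlg (i : ι) : AddMonoidAlgebra ℂ Λ ≃+* AddMonoidAlgebra ℂ Λ :=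
  AddMonoidAlgebra.mapDomainRingEquiv ℂ (D.refl i).toAddEquiv

lemma reflAlg_single (i : ι) (χ : Λ) (r : ℂ) :
    D.reflAlg i (single χ r) = single (D.refl i χ) r :=
  AddMonoidAlgebra.mapDomainRingEquiv_single _ _ _

lemma coeff_reflAlg (i : ι) (f : AddMonoidAlgebra ℂ Λ) (χ : Λ) :
    (D.reflAlg i f).coeff χ = f.coeff (D.refl i χ) := by
  have hsymm : (D.refl i).symm χ = D.refl i χ := by
    rw [LinearEquiv.symm_apply_eq, refl_refl]
  rw [reflAlg, AddMonoidAlgebra.coeff_mapDomainRingEquiv, ← hsymm]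
  rfl

lemma IsRho.reflAlg_weylDenominatorErase (hρ : D.IsRho ρ) {i : ι} (hi : D.IsSimpleRoot i) :
    D.reflAlg i (D.weylDenominatorErase ρ i) =
      single (-D.root i) 1 * D.weylDenominatorErase ρ i := by
  classical
  rw [weylDenominatorErase, map_mul, map_prod, reflAlg_single, refl_apply,
    hρ.coroot_of_isSimpleRoot hi, one_smul, ← mul_assoc, AddMonoidAlgebra.single_mul_single,
    one_mul, neg_add_eq_sub]
  refine congrArg _ (Finset.prod_nbij' (D.reflIdx i) (D.reflIdx i)
    (fun β hβ => ?_) (fun β hβ => ?_) (fun β _ => D.reflIdx_reflIdx i β)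
    (fun β _ => D.reflIdx_reflIdx i β) fun β hβ => ?_)
  · simpa using D.reflIdx_ne (Finset.ne_of_mem_erase hβ)
  · simpa using D.reflIdx_ne (Finset.ne_of_mem_erase hβ)
  · rw [map_sub, map_one, reflAlg_single, map_neg,
      D.refl_root_of_isSimpleRoot hi (Finset.ne_of_mem_erase hβ)]

lemma IsRho.reflAlg_weylDenominator (hρ : D.IsRho ρ) {i : ι} (hi : D.IsSimpleRoot i) :
    D.reflAlg i (D.weylDenominator ρ) = -D.weylDenominator ρ := by
  rw [D.weylDenominator_eq_mul_erase ρ i, map_mul, hρ.reflAlg_weylDenominatorErase hi, map_sub,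
    map_one, reflAlg_single, map_neg, refl_root_self, neg_neg, ← mul_assoc, sub_mul, one_mul,
    AddMonoidAlgebra.single_mul_single, add_neg_cancel, one_mul, ← AddMonoidAlgebra.one_def,
    ← neg_mul, neg_sub]

lemma IsRho.isSkew_mul_weylDenominator (hρ : D.IsRho ρ) {f : AddMonoidAlgebra ℂ Λ}
    (hf : ∀ i, D.IsSimpleRoot i → ∀ χ, f.coeff (D.refl i χ) = f.coeff χ) :
    D.IsSkew (f * D.weylDenominator ρ).coeff := by
  intro i hi χ
  have hfi : D.reflAlg i f = f := by
    ext χ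
    rw [coeff_reflAlg, hf i hi]
  rw [← coeff_reflAlg, map_mul, hfi, hρ.reflAlg_weylDenominator hi, mul_neg]
  rfl

lemma IsRho.isSkew_weylDenominator (hρ : D.IsRho ρ) : D.IsSkew (D.weylDenominator ρ).coeff := by
  intro i hi χ
  rw [← coeff_reflAlg, hρ.reflAlg_weylDenominator hi]
  rfl

lemma IsRho.laplacian_weylDenominator (hρ : D.IsRho ρ) :
    D.laplacian (D.weylDenominator ρ) = (D.form ρ ρ : ℂ) • D.weylDenominator ρ := by
  ext ξ
  rw [laplacian, coeff_scaleCoeff, AddMonoidAlgebra.coeff_smul, Finsupp.smul_apply, smul_eq_mul]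
  rcases eq_or_ne ((D.weylDenominator ρ).coeff ξ) 0 with h | h
  · rw [h, mul_zero, mul_zero]
  · obtain ⟨κ, hκ, hne, l, hl⟩ := hρ.isSkew_weylDenominator.exists_isDom_apply_add_ne_zero hρ h
    obtain rfl : κ = 0 := by_contra fun h0 => hne (hκ.coeff_weylDenominator_add h0)
    rw [zero_add] at hl
    rw [← D.form_word l ξ ξ, hl]

-- If `f` is the character of a module and `T β` that of the operators `x_β y_β`, then `g` is the
-- trace of the Casimir element, and `hT` expresses that the trace of `[x_β, y_β]` is that of the
-- coroot. So the Casimir element acts on `f` times the Weyl denominator as the shifted Laplacian.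
lemma IsRho.coeff_mul_weylDenominator_of_casimir (hρ : D.IsRho ρ) {f g : AddMonoidAlgebra ℂ Λ}
    {T : ι → AddMonoidAlgebra ℂ Λ}
    (hT : ∀ β, T β - single (-D.root β) 1 * T β = D.weightDeriv (D.root β) f)
    (hg : g = D.laplacian f + ∑ β, (T β + single (-D.root β) 1 * T β)) (ξ : Λ) :
    (g * D.weylDenominator ρ).coeff ξ =
      (D.form ξ ξ - D.form ρ ρ : ℂ) * (f * D.weylDenominator ρ).coeff ξ := by
  have hlap : D.laplacian (f * D.weylDenominator ρ) =
      g * D.weylDenominator ρ + (D.form ρ ρ : ℂ) • (f * D.weylDenominator ρ) := by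
    rw [hρ.laplacian_mul_weylDenominator, hρ.laplacian_weylDenominator, hg, add_mul,
      mul_smul_comm, Finset.sum_mul, add_right_comm]
    refine congrArg (· + _) (congrArg _ (Finset.sum_congr rfl fun β _ => ?_))
    rw [← hT, D.weylDenominator_eq_mul_erase ρ β]
    ring
  have hcoeff := congrArg (fun x => AddMonoidAlgebra.coeff x ξ) hlap
  simp only [laplacian, coeff_scaleCoeff, AddMonoidAlgebra.coeff_add, Finsupp.add_apply,
    AddMonoidAlgebra.coeff_smul, Finsupp.smul_apply, smul_eq_mul] at hcoeff
  rw [sub_mul, hcoeff]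
  ring

variable (D) in
/-- `f` satisfies Weyl's character formula for the highest weight `χ` up to a nonzero scalar: the
product of `f` with the Weyl denominator is skew, and its only strictly dominant exponent is
`χ + ρ`. -/
structure IsWeylCharacter (ρ χ : Λ) (f : AddMonoidAlgebra ℂ Λ) : Prop where
  isSkew : D.IsSkew (f * D.weylDenominator ρ).coeff
  coeff_self : (f * D.weylDenominator ρ).coeff (χ + ρ) ≠ 0
  coeff_of_ne : ∀ κ, D.IsDom κ → κ ≠ χ → (f * D.weylDenominator ρ).coeff (κ + ρ) = 0

lemma IsWeylCharacter.smul_mul_weylDenominator {f g : AddMonoidAlgebra ℂ Λ} {χ : Λ}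
    (hf : D.IsWeylCharacter ρ χ f) (hg : D.IsWeylCharacter ρ χ g) (hρ : D.IsRho ρ) :
    (g * D.weylDenominator ρ).coeff (χ + ρ) • (f * D.weylDenominator ρ) =
      (f * D.weylDenominator ρ).coeff (χ + ρ) • (g * D.weylDenominator ρ) := by
  set A := f * D.weylDenominator ρ with hA
  set B := g * D.weylDenominator ρ with hB
  have hcoeff (ξ : Λ) : (B.coeff (χ + ρ) • A - A.coeff (χ + ρ) • B).coeff ξ =
      B.coeff (χ + ρ) * A.coeff ξ - A.coeff (χ + ρ) * B.coeff ξ := by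
    simp
  have hskew : D.IsSkew (B.coeff (χ + ρ) • A - A.coeff (χ + ρ) • B).coeff := by
    intro i hi ξ
    rw [hcoeff, hcoeff, hf.isSkew i hi, hg.isSkew i hi]
    ring
  have hzero := hskew.eq_zero hρ fun κ hκ => ?_
  · rw [← sub_eq_zero]
    ext ξ
    exact congrFun hzero ξ
  · rw [hcoeff]
    rcases eq_or_ne κ χ with rfl | hne
    · ring
    · rw [hA, hB, hf.coeff_of_ne κ hκ hne, hg.coeff_of_ne κ hκ hne]
      ring

section PathCharacter

variable {O : Finset Λ} {N : ℕ}

variable (D) in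
/-- The formal character whose weights are the opposites of the endpoints of the
Lakshmibai–Seshadri paths with steps in `O`. For `O` the orbit of `-μ` it is the character of
highest weight `μ`. -/
noncomputable def pathCharacter (O : Finset Λ) (N : ℕ) : AddMonoidAlgebra ℂ Λ :=
  ∑ d ∈ D.paths O N, single (-endpoint N d) 1

lemma coeff_pathCharacter_mul (f : AddMonoidAlgebra ℂ Λ) (ξ : Λ) :
    (D.pathCharacter O N * f).coeff ξ = ∑ d ∈ D.paths O N, f.coeff (ξ + endpoint N d) := by
  rw [pathCharacter, Finset.sum_mul, AddMonoidAlgebra.coeff_sum, Finsupp.finsetSum_apply]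
  refine Finset.sum_congr rfl fun d _ => ?_
  rw [AddMonoidAlgebra.coeff_single_mul_apply, one_mul, neg_neg, add_comm]

lemma PathSetup.coeff_pathCharacter_refl (hS : D.PathSetup O N) {i : ι} (hi : D.IsSimpleRoot i)
    (χ : Λ) : (D.pathCharacter O N).coeff (D.refl i χ) = (D.pathCharacter O N).coeff χ := by
  have hone (ψ : Λ) : (1 : AddMonoidAlgebra ℂ Λ).coeff (D.refl i χ + ψ) =
      (1 : AddMonoidAlgebra ℂ Λ).coeff (χ + D.refl i ψ) := by
    rw [← map_one (D.reflAlg i), coeff_reflAlg, map_add (D.refl i), refl_refl, map_one]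
  rw [← mul_one (D.pathCharacter O N), coeff_pathCharacter_mul, coeff_pathCharacter_mul,
    Finset.sum_congr rfl fun d _ => hone (endpoint N d)]
  exact sum_paths_refl hS hi fun ψ => (1 : AddMonoidAlgebra ℂ Λ).coeff (χ + ψ)

open Classical in
lemma IsSkew.coeff_pathCharacter_mul {f : AddMonoidAlgebra ℂ Λ} (hf : D.IsSkew f.coeff)
    (hρ : D.IsRho ρ) (hS : D.PathSetup O N) {κ : Λ} (hκ : D.IsDom κ) :
    (D.pathCharacter O N * f).coeff (κ + ρ) =
      ∑ d ∈ (D.paths O N).filter (D.StaysDom N κ), f.coeff (κ + endpoint N d + ρ) := by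
  rw [PosRootDatum.coeff_pathCharacter_mul, hf.sum_paths hρ hS hκ]
  exact Finset.sum_congr rfl fun d _ => by rw [add_right_comm]

lemma PathSetup.isWeylCharacter_pathCharacter (hS : D.PathSetup O N) (hρ : D.IsRho ρ) {μ : Λ}
    (hμ : D.IsDom μ) (hO : ∀ χ, χ ∈ O ↔ D.Conj (-μ) χ) :
    D.IsWeylCharacter ρ μ (D.pathCharacter O N) := by
  classical
  have hterm {κ : Λ} {d : ℕ → Λ} (hd : D.IsPath O N d) (hdom : D.StaysDom N κ d)
      (hne : κ + endpoint N d ≠ 0) :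
      (D.weylDenominator ρ).coeff (κ + endpoint N d + ρ) = 0 :=
    (hdom.isDom_endpoint hS hd).coeff_weylDenominator_add hne
  refine ⟨hρ.isSkew_mul_weylDenominator fun i hi χ => hS.coeff_pathCharacter_refl hi χ, ?_,
    fun κ hκ hne => ?_⟩
  · obtain ⟨d₀, hd₀, hdom₀, hend₀⟩ := exists_staysDom_of_conj hS (η := -μ) (θ := 0) hμ
      (fun _ => (map_zero _).ge) (fun l => (hO _).2 ⟨l, rfl⟩) ⟨[], add_neg_cancel μ⟩
    rw [hρ.isSkew_weylDenominator.coeff_pathCharacter_mul hρ hS hμ, Finset.sum_eq_single_of_mem d₀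
      (by simp [hd₀, hdom₀]), hend₀, zero_add, coeff_weylDenominator_self]
    · exact one_ne_zero
    · intro d hd hne
      rw [Finset.mem_filter, mem_paths] at hd
      refine hterm hd.1 hd.2 fun hend => hne (funext fun k => ?_)
      rcases lt_or_ge k N with hk | hk
      · rw [hd.2.apply_eq_neg hS hμ hO hd.1 hend hk, hdom₀.apply_eq_neg hS hμ hO hd₀ hend₀ hk]
      · rw [hd.1.zero k hk, hd₀.zero k hk]
  · rw [hρ.isSkew_weylDenominator.coeff_pathCharacter_mul hρ hS hκ]
    refine Finset.sum_eq_zero fun d hd => ?_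
    rw [Finset.mem_filter, mem_paths] at hd
    exact hterm hd.1 hd.2 fun hend => hne (hd.2.eq_of_add_endpoint_eq_zero hS hμ hO hd.1 hend)

open Classical in
-- The multiplicity of `χ_ν` in the product is the number of paths from `ν` to `χ` which stay
-- dominant.
lemma IsWeylCharacter.coeff_pathCharacter_mul {f : AddMonoidAlgebra ℂ Λ} {χ ν : Λ}
    (hf : D.IsWeylCharacter ρ χ f) (hρ : D.IsRho ρ) (hS : D.PathSetup O N) (hν : D.IsDom ν) :
    (D.pathCharacter O N * (f * D.weylDenominator ρ)).coeff (ν + ρ) =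
      (((D.paths O N).filter (D.StaysDom N ν)).filter (ν + endpoint N · = χ)).card *
        (f * D.weylDenominator ρ).coeff (χ + ρ) := by
  have hterm : ∀ d ∈ (D.paths O N).filter (D.StaysDom N ν),
      (f * D.weylDenominator ρ).coeff (ν + endpoint N d + ρ) =
        if ν + endpoint N d = χ then (f * D.weylDenominator ρ).coeff (χ + ρ) else 0 := by
    intro d hd
    rw [Finset.mem_filter, mem_paths] at hd
    split_ifs with h
    · rw [h]
    · exact hf.coeff_of_ne _ (hd.2.isDom_endpoint hS hd.1) h
  rw [hf.isSkew.coeff_pathCharacter_mul hρ hS hν, Finset.sum_congr rfl hterm, Finset.sum_ite,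
    Finset.sum_const_zero, add_zero, Finset.sum_const, nsmul_eq_mul]

end PathCharacter

lemma IsWeylCharacter.coeff_mul_ne_zero {χV χW : AddMonoidAlgebra ℂ Λ} {lam μ ν η : Λ}
    (hV : D.IsWeylCharacter ρ lam χV) (hW : D.IsWeylCharacter ρ μ χW) (hρ : D.IsRho ρ)
    (hlam : D.IsDom lam) (hμ : D.IsDom μ) (hν : D.IsDom ν) (hη : D.Conj (-μ) η)
    (hc : D.Conj (ν + η) lam) :
    (χV * χW * D.weylDenominator ρ).coeff (ν + ρ) ≠ 0 := by
  classical
  obtain ⟨O, N, hS, hO⟩ := D.exists_pathSetup (-μ)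
  have hX := hS.isWeylCharacter_pathCharacter hρ hμ hO
  have hprod : ((D.pathCharacter O N * D.weylDenominator ρ).coeff (μ + ρ)) •
      (χV * χW * D.weylDenominator ρ) = ((χW * D.weylDenominator ρ).coeff (μ + ρ)) •
        (D.pathCharacter O N * (χV * D.weylDenominator ρ)) := by
    rw [mul_assoc, ← mul_smul_comm, hW.smul_mul_weylDenominator hX hρ, mul_smul_comm,
      mul_left_comm]
  have hpaths : ((((D.paths O N).filter (D.StaysDom N ν)).filter
      (ν + endpoint N · = lam)).card : ℂ) ≠ 0 := by
    obtain ⟨d, hd, hdom, hend⟩ := exists_staysDom_of_conj hS hν hlam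
      (fun l => (hO _).2 (Conj.trans hη ⟨l, rfl⟩)) hc
    exact Nat.cast_ne_zero.2 (Finset.card_ne_zero_of_mem (a := d) (by simp [hd, hdom, hend]))
  have hcoeff := congrArg (fun x => AddMonoidAlgebra.coeff x (ν + ρ)) hprod
  simp only [AddMonoidAlgebra.coeff_smul, Finsupp.smul_apply, smul_eq_mul,
    hV.coeff_pathCharacter_mul hρ hS hν] at hcoeff
  exact right_ne_zero_of_mul
    (hcoeff ▸ mul_ne_zero hW.coeff_self (mul_ne_zero hpaths hV.coeff_self))

end PosRootDatum

/-! ## The root datum of a positive system -/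

namespace IsPositiveSystem

open LieAlgebra LieAlgebra.IsKilling LieModule

variable {L : Type*} [LieRing L] [LieAlgebra ℂ L] [FiniteDimensional ℂ L]
  [LieAlgebra.IsKilling ℂ L] {H : LieSubalgebra ℂ L} [H.IsCartanSubalgebra]

/-- The index type of the positive roots. -/
abbrev PosRoot (P : Set (H → ℂ)) := {α : Weight ℂ H L // (α : H → ℂ) ∈ P}

noncomputable instance (P : Set (H → ℂ)) : Fintype (PosRoot P) := Fintype.ofFinite _

/-- The lattice of integral weights: the functionals with integral value at every coroot. -/
def IntegralWeight (P : Set (H → ℂ)) : AddSubgroup (Module.Dual ℂ H) where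
  carrier := {χ | ∀ β : PosRoot P, ∃ k : ℤ, (k : ℂ) = χ (coroot β.1)}
  add_mem' {a b} ha hb β := by
    obtain ⟨k, hk⟩ := ha β
    obtain ⟨l, hl⟩ := hb β
    exact ⟨k + l, by simp [hk, hl]⟩
  zero_mem' β := ⟨0, by simp⟩
  neg_mem' {a} ha β := by
    obtain ⟨k, hk⟩ := ha β
    exact ⟨-k, by simp [hk]⟩

variable {P : Set (H → ℂ)}

/-- The integer-valued pairing of integral weights with the coroot of `β`. -/
noncomputable def pairing (β : PosRoot P) : Module.Dual ℤ (IntegralWeight P) :=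
  AddMonoidHom.toIntLinearMap <| AddMonoidHom.mk' (fun χ => (χ.2 β).choose) fun χ ψ => by
    apply Int.cast_injective (α := ℂ)
    push_cast
    rw [(χ.2 β).choose_spec, (ψ.2 β).choose_spec, ((χ + ψ).2 β).choose_spec]
    rfl

lemma cast_pairing (β : PosRoot P) (χ : IntegralWeight P) :
    (pairing β χ : ℂ) = χ.1 (coroot β.1) :=
  (χ.2 β).choose_spec

/-- A root, or the zero weight of `L`, as an integral weight. -/
noncomputable def rootWeight (P : Set (H → ℂ)) (α : Weight ℂ H L) : IntegralWeight P :=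
  ⟨α.toLinear, fun β => ⟨_, (apply_coroot_eq_cast β.1 α).symm⟩⟩

lemma rootWeight_apply (α : Weight ℂ H L) (h : H) : (rootWeight P α).1 h = α h := rfl

lemma pairing_rootWeight (α : Weight ℂ H L) (β : PosRoot P) :
    pairing β (rootWeight P α) = chainBotCoeff β.1 α - chainTopCoeff β.1 α := by
  apply Int.cast_injective (α := ℂ)
  rw [cast_pairing, rootWeight_apply, apply_coroot_eq_cast]

lemma rootWeight_eq_iff (α : Weight ℂ H L) (χ : IntegralWeight P) :
    rootWeight P α = χ ↔ (α : H → ℂ) = χ.1 := by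
  rw [Subtype.ext_iff, LinearMap.ext_iff, funext_iff]
  rfl

lemma rootWeight_neg (α : Weight ℂ H L) : rootWeight P (-α) = -rootWeight P α := by
  rw [rootWeight_eq_iff]; rfl

lemma rootWeight_injective :
    Function.Injective (rootWeight P : Weight ℂ H L → IntegralWeight P) := fun α β h =>
  DFunLike.coe_injective ((rootWeight_eq_iff α (rootWeight P β)).1 h)

lemma rootWeight_reflectRoot (β : PosRoot P) (α : Weight ℂ H L) :
    rootWeight P (reflectRoot β.1 α) =
      rootWeight P α - pairing β (rootWeight P α) • rootWeight P β.1 := by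
  rw [rootWeight_eq_iff]
  ext x
  have hcast := cast_pairing β (rootWeight P α)
  rw [rootWeight_apply] at hcast
  simp [reflectRoot, ← hcast, rootWeight_apply]

omit [FiniteDimensional ℂ L] [IsKilling ℂ L] in
lemma isRootOf_coe {α : Weight ℂ H L} (hα : α.IsNonZero) : IsRootOf H α :=
  ⟨hα, α.genWeightSpace_ne_bot⟩

lemma traceForm_cartanEquivDual_symm (χ : Module.Dual ℂ H) (x : H) :
    traceForm ℂ H L ((cartanEquivDual H).symm χ) x = χ x :=
  LinearMap.congr_fun ((cartanEquivDual H).apply_symm_apply χ) x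

/-- Half of the squared length of a positive root, for the form on weights dual to the Killing
form. -/
noncomputable def halfSqLen (β : PosRoot P) : ℚ :=
  (∑ γ : PosRoot P, (pairing β (rootWeight P γ.1) : ℚ) ^ 2)⁻¹

variable (hP : IsPositiveSystem H P)
include hP

omit [FiniteDimensional ℂ L] [IsKilling ℂ L] in
lemma isNonZero (β : PosRoot P) : β.1.IsNonZero := (hP.1 _ β.2).1

omit [FiniteDimensional ℂ L] [IsKilling ℂ L] in
lemma coe_add_coe_ne_zero (β γ : PosRoot P) : (β.1 + γ.1 : H → ℂ) ≠ 0 := fun h0 =>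
  hP.2.2.1 _ γ.2 (by rw [← eq_neg_of_add_eq_zero_left h0]; exact β.2)

lemma exists_posRoot_eq_or_eq_neg {a : Weight ℂ H L} (ha : a.IsNonZero) :
    ∃ δ : PosRoot P, a = δ.1 ∨ a = -δ.1 := by
  rcases hP.2.1 a (isRootOf_coe ha) with h | h
  · exact ⟨⟨a, h⟩, Or.inl rfl⟩
  · exact ⟨⟨-a, h⟩, Or.inr (neg_neg a).symm⟩

lemma exists_rootWeight_eq_or_eq_neg {a : Weight ℂ H L} (ha : a.IsNonZero) :
    ∃ δ : PosRoot P, rootWeight P a = rootWeight P δ.1 ∨ rootWeight P a = -rootWeight P δ.1 := by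
  obtain ⟨δ, rfl | rfl⟩ := hP.exists_posRoot_eq_or_eq_neg ha
  · exact ⟨δ, Or.inl rfl⟩
  · exact ⟨δ, Or.inr (rootWeight_neg _)⟩

lemma sum_root_eq (F : Weight ℂ H L → ℂ) (hF : ∀ α, F (-α) = F α) :
    ∑ α ∈ H.root, F α = 2 * ∑ β : PosRoot P, F β.1 := by
  classical
  let p (α : Weight ℂ H L) : Prop := (α : H → ℂ) ∈ P
  have hpos (α : Weight ℂ H L) : α ∈ H.root.filter p ↔ p α := by
    rw [Finset.mem_filter, and_iff_right_iff_imp]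
    exact fun h => by simpa using hP.isNonZero ⟨α, h⟩
  have hneg (α : Weight ℂ H L) : α ∈ H.root.filter (fun α => ¬p α) ↔ p (-α) := by
    rw [Finset.mem_filter]
    refine ⟨fun h => (hP.2.1 α (isRootOf_coe (by simpa using h.1))).resolve_left h.2,
      fun h => ⟨?_, fun h' => hP.2.2.1 _ h' h⟩⟩
    simpa using (hP.isNonZero ⟨-α, h⟩).neg
  have hsum : ∑ α ∈ H.root.filter (fun α => ¬p α), F α = ∑ α ∈ H.root.filter p, F α :=
    Finset.sum_equiv (Equiv.neg _) (fun α => by rw [hneg, hpos, Equiv.neg_apply])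
      fun α _ => (hF α).symm
  rw [← Finset.sum_filter_add_sum_filter_not H.root p, hsum, ← two_mul,
    Finset.sum_subtype _ hpos]

lemma traceForm_eq (h h' : H) :
    traceForm ℂ H L h h' = 2 * ∑ γ : PosRoot P, γ.1 h * γ.1 h' := by
  rw [← hP.sum_root_eq (fun α => α h * α h') (by simp), ← restrict_killingForm,
    restrict_killingForm_eq_sum]
  simp

lemma pairing_self (β : PosRoot P) : pairing β (rootWeight P β.1) = 2 := by
  apply Int.cast_injective (α := ℂ)
  rw [cast_pairing, rootWeight_apply, root_apply_coroot (hP.isNonZero β), Int.cast_ofNat]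

lemma halfSqLen_pos (β : PosRoot P) : 0 < halfSqLen β := by
  refine inv_pos.2 (Finset.sum_pos' (fun _ _ => sq_nonneg _) ⟨β, Finset.mem_univ _, ?_⟩)
  rw [hP.pairing_self]; norm_num

lemma cartanEquivDual_symm_root (β : PosRoot P) :
    (cartanEquivDual H).symm β.1.toLinear = (halfSqLen β : ℂ) • coroot β.1 := by
  set t := (cartanEquivDual H).symm β.1.toLinear with ht
  have ht0 : β.1 t ≠ 0 := root_apply_cartanEquivDual_symm_ne_zero (hP.isNonZero β)
  have hcoroot : coroot β.1 = (2 * (β.1 t)⁻¹) • t := by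
    rw [coroot, ← ht, ← Nat.cast_smul_eq_nsmul ℂ, smul_smul, Nat.cast_ofNat]
  have htrace : traceForm ℂ H L (coroot β.1) (coroot β.1) = 4 * (β.1 t)⁻¹ := by
    rw [traceForm_coroot, ← ht, root_apply_coroot (hP.isNonZero β), ← Nat.cast_smul_eq_nsmul ℂ]
    simp only [smul_eq_mul]; push_cast; ring
  have hlen : (halfSqLen β : ℂ) = (∑ γ : PosRoot P, γ.1 (coroot β.1) * γ.1 (coroot β.1))⁻¹ := by
    rw [halfSqLen, Rat.cast_inv, Rat.cast_sum]
    congr! 2 with γ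
    rw [Rat.cast_pow, Rat.cast_intCast, cast_pairing, rootWeight_apply, sq]
  have hsum : ∑ γ : PosRoot P, γ.1 (coroot β.1) * γ.1 (coroot β.1) = 2 * (β.1 t)⁻¹ := by
    rw [hP.traceForm_eq] at htrace
    linear_combination htrace / 2
  rw [hlen, hsum, hcoroot, smul_smul, inv_mul_cancel₀ (by simpa using ht0), one_smul]

lemma halfSqLen_mul_pairing (β : PosRoot P) (χ : IntegralWeight P) :
    (halfSqLen β : ℂ) * pairing β χ = β.1 ((cartanEquivDual H).symm χ.1) := by
  rw [← Weight.toLinear_apply, ← traceForm_cartanEquivDual_symm β.1.toLinear,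
    LieModule.traceForm_comm, traceForm_cartanEquivDual_symm, hP.cartanEquivDual_symm_root,
    map_smul, smul_eq_mul, ← cast_pairing]

lemma sum_pairing_mul_pairing (χ ψ : IntegralWeight P) :
    2 * ∑ γ : PosRoot P, (halfSqLen γ : ℂ) ^ 2 * pairing γ χ * pairing γ ψ =
      ψ.1 ((cartanEquivDual H).symm χ.1) := by
  rw [← traceForm_cartanEquivDual_symm ψ.1, LieModule.traceForm_comm, hP.traceForm_eq]
  congr! 2 with γ
  rw [← hP.halfSqLen_mul_pairing, ← hP.halfSqLen_mul_pairing]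
  ring

lemma eq_zero_of_pairing_eq_zero (χ : IntegralWeight P) (h : ∀ β, pairing β χ = 0) : χ = 0 := by
  have htrace : cartanEquivDual H ((cartanEquivDual H).symm χ.1) = 0 := by
    ext x
    change traceForm ℂ H L _ x = 0
    rw [hP.traceForm_eq]
    simp [← hP.halfSqLen_mul_pairing, h]
  exact Subtype.ext (by simpa using htrace)

lemma exists_rootWeight_add (β γ : PosRoot P) (h : pairing β (rootWeight P γ.1) < 0) :
    ∃ δ : PosRoot P, rootWeight P δ.1 = rootWeight P β.1 + rootWeight P γ.1 := by
  rw [pairing_rootWeight] at h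
  have hbot := (rootSpace_zsmul_add_ne_bot_iff β.1 γ.1 (hP.isNonZero β) 1).2 ⟨by lia, by lia⟩
  rw [one_smul] at hbot
  refine ⟨⟨⟨_, hbot⟩, hP.2.2.2 _ β.2 _ γ.2 ⟨hP.coe_add_coe_ne_zero β γ, hbot⟩⟩, ?_⟩
  rw [rootWeight_eq_iff]
  rfl

lemma exists_rootWeight_sub (β γ : PosRoot P) (h : 0 < pairing β (rootWeight P γ.1))
    (hne : γ ≠ β) :
    ∃ δ : PosRoot P, rootWeight P γ.1 - rootWeight P β.1 = rootWeight P δ.1 ∨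
      rootWeight P γ.1 - rootWeight P β.1 = -rootWeight P δ.1 := by
  rw [pairing_rootWeight] at h
  have hbot := (rootSpace_zsmul_add_ne_bot_iff β.1 γ.1 (hP.isNonZero β) (-1)).2
    ⟨by lia, by lia⟩
  rw [neg_one_zsmul, neg_add_eq_sub] at hbot
  have hsub : (γ.1 - β.1 : H → ℂ) ≠ 0 := fun h0 =>
    hne (Subtype.ext (DFunLike.coe_injective (sub_eq_zero.1 h0)))
  have hδ : rootWeight P γ.1 - rootWeight P β.1 = rootWeight P ⟨_, hbot⟩ := by
    symm
    rw [rootWeight_eq_iff]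
    rfl
  rw [hδ]
  exact hP.exists_rootWeight_eq_or_eq_neg (a := ⟨_, hbot⟩) hsub

lemma rootWeight_ne_add_self (β γ : PosRoot P) :
    rootWeight P β.1 ≠ rootWeight P γ.1 + rootWeight P γ.1 := fun h => by
  rw [rootWeight_eq_iff] at h
  have htwo : (β.1 : H → ℂ) = 2 • (γ.1 : H → ℂ) := by rw [h, two_smul]; rfl
  apply β.1.genWeightSpace_ne_bot
  rw [htwo]
  exact rootSpace_two_smul γ.1 (hP.isNonZero γ)

lemma rootWeight_ne_neg (β γ : PosRoot P) : rootWeight P β.1 ≠ -rootWeight P γ.1 := fun h => by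
  have hβ := β.2
  rw [rootWeight_injective (h.trans (rootWeight_neg _).symm)] at hβ
  exact hP.2.2.1 _ γ.2 hβ

/-- The root datum of a positive system, in the lattice of integral weights. -/
noncomputable def rootDatum : PosRootDatum (PosRoot P) (IntegralWeight P) where
  root β := rootWeight P β.1
  coroot := pairing
  halfSqLen := halfSqLen
  halfSqLen_pos := hP.halfSqLen_pos
  coroot_root_self := hP.pairing_self
  sum_coroot_mul_coroot χ β := by
    apply Rat.cast_injective (α := ℂ)
    push_cast
    rw [hP.sum_pairing_mul_pairing, hP.halfSqLen_mul_pairing]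
    rfl
  exists_reflection_root β γ := by
    rw [← rootWeight_reflectRoot]
    exact hP.exists_rootWeight_eq_or_eq_neg (reflectRoot_isNonZero β.1 γ.1 (hP.isNonZero γ))
  exists_root_add := hP.exists_rootWeight_add
  exists_root_sub := hP.exists_rootWeight_sub
  root_ne_add_self := hP.rootWeight_ne_add_self
  root_ne_neg := hP.rootWeight_ne_neg
  root_injective _ _ h := Subtype.ext (rootWeight_injective h)
  eq_zero_of_coroot_eq_zero := hP.eq_zero_of_pairing_eq_zero

lemma form_eq (χ ψ : IntegralWeight P) :
    (hP.rootDatum.form χ ψ : ℂ) = ψ.1 ((cartanEquivDual H).symm χ.1) := by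
  rw [← hP.sum_pairing_mul_pairing, PosRootDatum.form_apply]
  push_cast
  rfl

lemma isDom_of_forall_exists_nat {χ : IntegralWeight P}
    (h : ∀ β : PosRoot P, ∃ k : ℕ, χ.1 (coroot β.1) = k) : hP.rootDatum.IsDom χ := fun β => by
  obtain ⟨k, hk⟩ := h β
  have hpairing : pairing β χ = k := Int.cast_injective ((cast_pairing β χ).trans hk)
  exact hpairing ▸ Int.natCast_nonneg k

lemma exists_isRho : ∃ ρ, hP.rootDatum.IsRho ρ := by
  refine ⟨⟨(1 / 2 : ℂ) • hP.rootDatum.twoRho.1, fun β => ?_⟩, Subtype.ext ?_⟩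
  · obtain ⟨k, hk : pairing β hP.rootDatum.twoRho = k + k⟩ := hP.rootDatum.even_coroot_twoRho β
    refine ⟨k, ?_⟩
    rw [LinearMap.smul_apply, ← cast_pairing, hk, smul_eq_mul]
    push_cast
    ring
  · change (1 / 2 : ℂ) • hP.rootDatum.twoRho.1 + (1 / 2 : ℂ) • hP.rootDatum.twoRho.1 = _
    rw [← add_smul, add_halves, one_smul]

lemma rootRefl_apply_coe (β : PosRoot P) (χ : IntegralWeight P) :
    rootRefl H β.1 χ.1 = ((hP.rootDatum.refl β χ).1 : H → ℂ) := by
  have hrefl : hP.rootDatum.refl β χ = χ - pairing β χ • rootWeight P β.1 :=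
    hP.rootDatum.refl_apply β χ
  ext h
  simp [hrefl, rootRefl, ← cast_pairing, rootWeight_apply]

omit hP in
lemma rootRefl_neg_apply_coe (α : Weight ℂ H L) (χ : Module.Dual ℂ H) :
    rootRefl H (-α) χ = rootRefl H α χ := by
  ext h
  simp [rootRefl, coroot_neg]

lemma exists_conj_of_mem_weylMonoid {w : (H → ℂ) →ₗ[ℂ] (H → ℂ)} (hw : w ∈ WeylMonoid H) :
    ∃ s : IntegralWeight P →+ IntegralWeight P, (∀ χ, hP.rootDatum.Conj χ (s χ)) ∧
      ∀ χ : IntegralWeight P, w χ.1 = ((s χ).1 : H → ℂ) := by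
  induction hw using Submonoid.closure_induction with
  | mem w hw =>
    obtain ⟨α, hα, rfl⟩ := hw
    obtain ⟨β, hβ⟩ := hP.exists_posRoot_eq_or_eq_neg hα
    refine ⟨(hP.rootDatum.refl β).toLinearMap.toAddMonoidHom, hP.rootDatum.conj_refl β,
      fun χ => ?_⟩
    rcases hβ with rfl | rfl
    exacts [hP.rootRefl_apply_coe β χ,
      (rootRefl_neg_apply_coe _ _).trans (hP.rootRefl_apply_coe β χ)]
  | one => exact ⟨.id _, fun χ => ⟨[], rfl⟩, fun χ => rfl⟩
  | mul u w _ _ hu hw =>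
    obtain ⟨s, hs, hs'⟩ := hu
    obtain ⟨t, ht, ht'⟩ := hw
    refine ⟨s.comp t, fun χ => (ht χ).trans (hs _), fun χ => ?_⟩
    rw [Module.End.mul_apply, ht', hs', AddMonoidHom.comp_apply]

end IsPositiveSystem

/-! ## A basis of root vectors and its dual -/

namespace IsPositiveSystem

open LieAlgebra LieAlgebra.IsKilling LieModule

variable {L : Type*} [LieRing L] [LieAlgebra ℂ L] [FiniteDimensional ℂ L]
  [LieAlgebra.IsKilling ℂ L] {H : LieSubalgebra ℂ L} [H.IsCartanSubalgebra]

omit [IsKilling ℂ L] in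
lemma coe_mem_rootSpace_zero (h : H) : (h : L) ∈ rootSpace H (0 : H → ℂ) := by
  rw [rootSpace_zero_eq]; exact h.2

variable {P : Set (H → ℂ)} (hP : IsPositiveSystem H P)
include hP

lemma exists_isSl2Triple (β : PosRoot P) : ∃ e f : L, IsSl2Triple (coroot β.1 : L) e f ∧
    e ∈ rootSpace H (β.1 : H → ℂ) ∧ f ∈ rootSpace H (-(β.1 : H → ℂ)) := by
  obtain ⟨h, e, f, ht, he, hf⟩ := exists_isSl2Triple_of_weight_isNonZero (hP.isNonZero β)
  exact ⟨e, f, by rwa [← ht.h_eq_coroot (hP.isNonZero β) he hf], he, hf⟩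

/-- A root vector for `β`, completed to an `sl₂`-triple by `negVec`. -/
noncomputable def posVec (β : PosRoot P) : L := (hP.exists_isSl2Triple β).choose

/-- The root vector for `-β` completing `posVec` to an `sl₂`-triple. -/
noncomputable def negVec (β : PosRoot P) : L := (hP.exists_isSl2Triple β).choose_spec.choose

lemma isSl2Triple (β : PosRoot P) : IsSl2Triple (coroot β.1 : L) (hP.posVec β) (hP.negVec β) :=
  (hP.exists_isSl2Triple β).choose_spec.choose_spec.1

lemma posVec_mem (β : PosRoot P) : hP.posVec β ∈ rootSpace H (β.1 : H → ℂ) :=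
  (hP.exists_isSl2Triple β).choose_spec.choose_spec.2.1

lemma negVec_mem (β : PosRoot P) : hP.negVec β ∈ rootSpace H (-(β.1 : H → ℂ)) :=
  (hP.exists_isSl2Triple β).choose_spec.choose_spec.2.2

/-- The multiple of `negVec` dual to `posVec` for the Killing form. -/
noncomputable def dualVec (β : PosRoot P) : L := (halfSqLen β : ℂ) • hP.negVec β

lemma dualVec_mem (β : PosRoot P) : hP.dualVec β ∈ rootSpace H (-(β.1 : H → ℂ)) :=
  Submodule.smul_mem _ _ (hP.negVec_mem β)

lemma negVec_eq (β : PosRoot P) : hP.negVec β = (halfSqLen β : ℂ)⁻¹ • hP.dualVec β := by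
  rw [dualVec, smul_smul, inv_mul_cancel₀, one_smul]
  exact_mod_cast (hP.halfSqLen_pos β).ne'

lemma lie_posVec_dualVec (β : PosRoot P) :
    ⁅hP.posVec β, hP.dualVec β⁆ = ((cartanEquivDual H).symm β.1.toLinear : L) := by
  rw [dualVec, lie_smul, (hP.isSl2Triple β).lie_e_f, hP.cartanEquivDual_symm_root]
  rfl

lemma exists_eq_smul_posVec (β : PosRoot P) {x : L} (hx : x ∈ rootSpace H (β.1 : H → ℂ)) :
    ∃ c : ℂ, x = c • hP.posVec β := by
  have hne : (⟨hP.posVec β, hP.posVec_mem β⟩ : rootSpace H (β.1 : H → ℂ)) ≠ 0 := fun h =>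
    (hP.isSl2Triple β).e_ne_zero (congrArg Subtype.val h)
  obtain ⟨c, hc⟩ := (finrank_eq_one_iff_of_nonzero' _ hne).1
    (finrank_rootSpace_eq_one β.1 (hP.isNonZero β)) ⟨x, hx⟩
  exact ⟨c, (congrArg Subtype.val hc).symm⟩

lemma exists_eq_smul_negVec (β : PosRoot P) {x : L} (hx : x ∈ rootSpace H (-(β.1 : H → ℂ))) :
    ∃ c : ℂ, x = c • hP.negVec β := by
  have hne : (⟨hP.negVec β, hP.negVec_mem β⟩ : rootSpace H (⇑(-β.1 : Weight ℂ H L))) ≠ 0 :=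
    fun h => (hP.isSl2Triple β).f_ne_zero (congrArg Subtype.val h)
  obtain ⟨c, hc⟩ := (finrank_eq_one_iff_of_nonzero' _ hne).1
    (finrank_rootSpace_eq_one (-β.1) (hP.isNonZero β).neg) ⟨x, hx⟩
  exact ⟨c, (congrArg Subtype.val hc).symm⟩

lemma eq_top_of_posVec_mem_of_negVec_mem {S : Submodule ℂ L} (hH : H.toSubmodule ≤ S)
    (hpos : ∀ β, hP.posVec β ∈ S) (hneg : ∀ β, hP.negVec β ∈ S) : S = ⊤ := by
  have htop : ⨆ α : Weight ℂ H L, (rootSpace H (α : H → ℂ)).toSubmodule = ⊤ := by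
    rw [← LieSubmodule.iSup_toSubmodule, iSup_genWeightSpace_eq_top',
      LieSubmodule.top_toSubmodule]
  rw [eq_top_iff, ← htop]
  refine iSup_le fun α y hy => ?_
  by_cases hα : α.IsNonZero
  · obtain ⟨δ, rfl | rfl⟩ := hP.exists_posRoot_eq_or_eq_neg hα
    · obtain ⟨c, rfl⟩ := hP.exists_eq_smul_posVec δ hy
      exact S.smul_mem _ (hpos δ)
    · obtain ⟨c, rfl⟩ := hP.exists_eq_smul_negVec δ hy
      exact S.smul_mem _ (hneg δ)
  · have hzero : (α : H → ℂ) = 0 := not_not.1 hα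
    rw [LieSubmodule.mem_toSubmodule, hzero, rootSpace_zero_eq] at hy
    exact hH hy

lemma killingForm_posVec_dualVec_self (β : PosRoot P) :
    killingForm ℂ L (hP.posVec β) (hP.dualVec β) = 1 := by
  have hlie := lie_eq_killingForm_smul_of_mem_rootSpace_of_mem_rootSpace_neg
    (hP.posVec_mem β) (hP.dualVec_mem β)
  rw [hP.lie_posVec_dualVec] at hlie
  have hne : ((cartanEquivDual H).symm β.1.toLinear : L) ≠ 0 := by
    rw [hP.cartanEquivDual_symm_root, Submodule.coe_smul, smul_ne_zero_iff]
    exact ⟨by exact_mod_cast (hP.halfSqLen_pos β).ne', (hP.isSl2Triple β).h_ne_zero⟩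
  exact smul_left_injective ℂ hne (hlie.symm.trans (one_smul ℂ _).symm)

open Classical in
lemma killingForm_posVec_dualVec (β γ : PosRoot P) :
    killingForm ℂ L (hP.posVec β) (hP.dualVec γ) = if β = γ then 1 else 0 := by
  split_ifs with h
  · rw [h, hP.killingForm_posVec_dualVec_self]
  · exact killingForm_apply_eq_zero_of_mem_rootSpace_of_add_ne_zero ℂ L H
      (hP.posVec_mem β) (hP.dualVec_mem γ)
      fun h0 => h (Subtype.ext (DFunLike.coe_injective (add_neg_eq_zero.1 h0)))

lemma killingForm_posVec_posVec (β γ : PosRoot P) :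
    killingForm ℂ L (hP.posVec β) (hP.posVec γ) = 0 :=
  killingForm_apply_eq_zero_of_mem_rootSpace_of_add_ne_zero ℂ L H
    (hP.posVec_mem β) (hP.posVec_mem γ) (hP.coe_add_coe_ne_zero β γ)

lemma killingForm_dualVec_dualVec (β γ : PosRoot P) :
    killingForm ℂ L (hP.dualVec β) (hP.dualVec γ) = 0 :=
  killingForm_apply_eq_zero_of_mem_rootSpace_of_add_ne_zero ℂ L H
    (hP.dualVec_mem β) (hP.dualVec_mem γ)
    (by rw [← neg_add]; exact neg_ne_zero.2 (hP.coe_add_coe_ne_zero β γ))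

lemma killingForm_coe_posVec (h : H) (β : PosRoot P) :
    killingForm ℂ L (h : L) (hP.posVec β) = 0 :=
  killingForm_apply_eq_zero_of_mem_rootSpace_of_add_ne_zero ℂ L H
    (coe_mem_rootSpace_zero h) (hP.posVec_mem β) (by rw [zero_add]; exact hP.isNonZero β)

lemma killingForm_coe_dualVec (h : H) (β : PosRoot P) :
    killingForm ℂ L (h : L) (hP.dualVec β) = 0 :=
  killingForm_apply_eq_zero_of_mem_rootSpace_of_add_ne_zero ℂ L H
    (coe_mem_rootSpace_zero h) (hP.dualVec_mem β)
    (by rw [zero_add]; exact neg_ne_zero.2 (hP.isNonZero β))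

omit hP in
lemma killingForm_finBasis (i j : Fin (Module.finrank ℂ H)) :
    killingForm ℂ L (Module.finBasis ℂ H i : L)
      ((cartanEquivDual H).symm ((Module.finBasis ℂ H).coord j) : L) =
      if i = j then 1 else 0 := by
  rw [LieModule.traceForm_comm]
  exact (traceForm_cartanEquivDual_symm _ _).trans
    (by rw [Module.Basis.coord_apply, Module.Basis.repr_self_apply])

/-- The index type of a basis of `L` adapted to the root decomposition. -/
abbrev AdaptedIdx (P : Set (H → ℂ)) := Fin (Module.finrank ℂ H) ⊕ PosRoot P ⊕ PosRoot P

/-- A family spanning `L`: a basis of `H`, then the vectors `posVec`, then the vectors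
`dualVec`. -/
noncomputable def adapted : AdaptedIdx P → L :=
  Sum.elim (fun j => (Module.finBasis ℂ H j : L)) (Sum.elim hP.posVec hP.dualVec)

/-- The family dual to `adapted` for the Killing form. -/
noncomputable def adaptedDual : AdaptedIdx P → L :=
  Sum.elim (fun j => ((cartanEquivDual H).symm ((Module.finBasis ℂ H).coord j) : L))
    (Sum.elim hP.dualVec hP.posVec)

open Classical in
lemma killingForm_adapted_adaptedDual (a b : AdaptedIdx P) :
    killingForm ℂ L (hP.adapted a) (hP.adaptedDual b) = if a = b then 1 else 0 := by
  rcases a with i | β | β <;> rcases b with j | γ | γ <;>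
    simp only [adapted, adaptedDual, Sum.elim_inl, Sum.elim_inr, Sum.inl.injEq, Sum.inr.injEq,
      reduceCtorEq, if_false]
  · exact killingForm_finBasis i j
  · exact hP.killingForm_coe_dualVec _ _
  · exact hP.killingForm_coe_posVec _ _
  · rw [LieModule.traceForm_comm, hP.killingForm_coe_posVec]
  · exact hP.killingForm_posVec_dualVec _ _
  · exact hP.killingForm_posVec_posVec _ _
  · rw [LieModule.traceForm_comm, hP.killingForm_coe_dualVec]
  · exact hP.killingForm_dualVec_dualVec _ _
  · rw [LieModule.traceForm_comm, hP.killingForm_posVec_dualVec]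
    exact if_congr eq_comm rfl rfl

lemma span_range_adapted : Submodule.span ℂ (Set.range hP.adapted) = ⊤ := by
  refine hP.eq_top_of_posVec_mem_of_negVec_mem ?_ (fun β => ?_) fun β => ?_
  · intro h hh
    have hsum := congrArg H.toSubmodule.subtype ((Module.finBasis ℂ H).sum_repr ⟨h, hh⟩)
    rw [map_sum] at hsum
    rw [show h = _ from hsum.symm]
    exact Submodule.sum_mem _ fun j _ => Submodule.smul_mem _ _
      (Submodule.subset_span ⟨Sum.inl j, rfl⟩)
  · exact Submodule.subset_span ⟨Sum.inr (Sum.inl β), rfl⟩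
  · rw [hP.negVec_eq]
    exact Submodule.smul_mem _ _ (Submodule.subset_span ⟨Sum.inr (Sum.inr β), rfl⟩)

lemma sum_killingForm_smul_adapted (x : L) :
    ∑ a, killingForm ℂ L x (hP.adaptedDual a) • hP.adapted a = x := by
  classical
  let T : L →ₗ[ℂ] L := ∑ a, ((killingForm ℂ L).flip (hP.adaptedDual a)).smulRight (hP.adapted a)
  have hT : T = LinearMap.id := LinearMap.ext_on_range hP.span_range_adapted fun b => by
    simp [T, LinearMap.sum_apply, hP.killingForm_adapted_adaptedDual,
      -Fintype.sum_sum_type]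
  simpa [T, LinearMap.sum_apply] using LinearMap.congr_fun hT x

lemma sum_killingForm_smul_adaptedDual (x : L) :
    ∑ a, killingForm ℂ L x (hP.adapted a) • hP.adaptedDual a = x := by
  have hdual (z : L) :
      killingForm ℂ L (∑ a, killingForm ℂ L x (hP.adapted a) • hP.adaptedDual a) z =
        killingForm ℂ L x z := by
    conv_rhs => rw [← hP.sum_killingForm_smul_adapted z]
    simp only [map_sum, map_smul, LinearMap.sum_apply, LinearMap.smul_apply, smul_eq_mul,
      LieModule.traceForm_comm ℂ L L z, mul_comm]
  exact LinearMap.ker_eq_bot.1 (IsKilling.ker_killingForm_eq_bot ℂ L) (LinearMap.ext hdual)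

end IsPositiveSystem

/-! ## The Casimir operator and formal traces -/

namespace IsPositiveSystem

open LieAlgebra LieAlgebra.IsKilling LieModule
open AddMonoidAlgebra (single)

variable {L : Type*} [LieRing L] [LieAlgebra ℂ L] [FiniteDimensional ℂ L]
  [LieAlgebra.IsKilling ℂ L] {H : LieSubalgebra ℂ L} [H.IsCartanSubalgebra]
  {P : Set (H → ℂ)} (hP : IsPositiveSystem H P)
  {M : Type*} [AddCommGroup M] [Module ℂ M]

section FormalTrace

variable {I : Type*} [Fintype I] (b : Module.Basis I ℂ M) (wt : I → IntegralWeight P)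

/-- The formal trace `∑ χ, tr (T | M_χ) e^χ` of an operator, where the basis vector `b i` has
weight `wt i`. -/
noncomputable def formalTrace :
    Module.End ℂ M →ₗ[ℂ] AddMonoidAlgebra ℂ (IntegralWeight P) where
  toFun T := ∑ i, single (wt i) (b.repr (T (b i)) i)
  map_add' S T := by simp [Finset.sum_add_distrib]
  map_smul' c T := by simp [Finset.smul_sum]

/-- The formal character of a representation, where the basis vector `b i` has weight `wt i`. -/
noncomputable def formalCharacter (wt : I → IntegralWeight P) :
    AddMonoidAlgebra ℂ (IntegralWeight P) := ∑ i, single (wt i) 1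

lemma formalTrace_apply (T : Module.End ℂ M) :
    formalTrace b wt T = ∑ i, single (wt i) (b.repr (T (b i)) i) := rfl

lemma formalTrace_one : formalTrace b wt 1 = formalCharacter wt := by
  simp [formalTrace_apply, formalCharacter]

lemma formalCharacter_add_eq_mul {J : Type*} [Fintype J] (wt' : J → IntegralWeight P) :
    formalCharacter (fun x : I × J => wt x.1 + wt' x.2) =
      formalCharacter wt * formalCharacter wt' := by
  simp [formalCharacter, Finset.sum_mul_sum, Fintype.sum_prod_type,
    AddMonoidAlgebra.single_mul_single]

lemma formalTrace_mul (S T : Module.End ℂ M) :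
    formalTrace b wt (S * T) =
      ∑ i, ∑ j, single (wt i) (b.repr (S (b j)) i * b.repr (T (b i)) j) := by
  classical
  refine Finset.sum_congr rfl fun i _ => ?_
  have hmul := congrFun (congrFun (LinearMap.toMatrix_mul b S T) i) i
  rw [Matrix.mul_apply] at hmul
  simp only [LinearMap.toMatrix_apply] at hmul
  rw [hmul]
  exact map_sum (AddMonoidAlgebra.singleAddHom (wt i)) _ _

/-- Cyclicity of the trace; the factor accounts for `A` shifting weights by `γ`. -/
lemma formalTrace_mul_comm {A : Module.End ℂ M} (B : Module.End ℂ M) {γ : IntegralWeight P}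
    (hA : ∀ i j, b.repr (A (b i)) j ≠ 0 → wt j = wt i + γ) :
    formalTrace b wt (B * A) = single (-γ) 1 * formalTrace b wt (A * B) := by
  simp only [formalTrace_mul, Finset.mul_sum, AddMonoidAlgebra.single_mul_single, one_mul]
  rw [Finset.sum_comm]
  refine Finset.sum_congr rfl fun j _ => Finset.sum_congr rfl fun i _ => ?_
  by_cases h0 : b.repr (A (b i)) j = 0
  · simp [h0]
  · rw [hA i j h0, mul_comm, neg_add_cancel_comm_assoc]

end FormalTrace

variable [LieRingModule L M] [LieModule ℂ L M]

variable (M) in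
/-- The Casimir operator of a representation `M`, for the Killing form. -/
noncomputable def casimir : Module.End ℂ M :=
  ∑ a, toEnd ℂ L M (hP.adapted a) * toEnd ℂ L M (hP.adaptedDual a)

lemma casimir_apply (m : M) :
    hP.casimir M m = ∑ a, ⁅hP.adapted a, ⁅hP.adaptedDual a, m⁆⁆ := by
  simp only [casimir, LinearMap.sum_apply, Module.End.mul_apply, toEnd_apply_apply]

lemma killingForm_lie_adaptedDual (x : L) (a b : AdaptedIdx P) :
    killingForm ℂ L ⁅x, hP.adaptedDual a⁆ (hP.adapted b) =
      -killingForm ℂ L ⁅x, hP.adapted b⁆ (hP.adaptedDual a) := by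
  rw [← lie_skew x (hP.adaptedDual a), map_neg, LinearMap.neg_apply,
    LieModule.traceForm_apply_lie_apply, LieModule.traceForm_comm]

lemma casimir_lie (x : L) (m : M) : hP.casimir M ⁅x, m⁆ = ⁅x, hP.casimir M m⁆ := by
  have hfst (a) : ⁅⁅x, hP.adapted a⁆, ⁅hP.adaptedDual a, m⁆⁆ =
      ∑ b, killingForm ℂ L ⁅x, hP.adapted a⁆ (hP.adaptedDual b) •
        ⁅hP.adapted b, ⁅hP.adaptedDual a, m⁆⁆ := by
    conv_lhs => rw [← hP.sum_killingForm_smul_adapted ⁅x, hP.adapted a⁆]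
    simp only [sum_lie, smul_lie]
  have hsnd (a) : ⁅hP.adapted a, ⁅⁅x, hP.adaptedDual a⁆, m⁆⁆ =
      ∑ b, -(killingForm ℂ L ⁅x, hP.adapted b⁆ (hP.adaptedDual a) •
        ⁅hP.adapted a, ⁅hP.adaptedDual b, m⁆⁆) := by
    conv_lhs => rw [← hP.sum_killingForm_smul_adaptedDual ⁅x, hP.adaptedDual a⁆]
    simp only [sum_lie, lie_sum, hP.killingForm_lie_adaptedDual, smul_lie, lie_smul, neg_smul,
      neg_lie, lie_neg]
  have hcancel : ∑ a, ⁅⁅x, hP.adapted a⁆, ⁅hP.adaptedDual a, m⁆⁆ +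
      ∑ a, ⁅hP.adapted a, ⁅⁅x, hP.adaptedDual a⁆, m⁆⁆ = 0 := by
    simp only [hfst, hsnd, Finset.sum_neg_distrib]
    rw [Finset.sum_comm, add_neg_cancel]
  rw [casimir_apply, casimir_apply, lie_sum, eq_comm, ← sub_eq_zero, ← hcancel,
    ← Finset.sum_sub_distrib, ← Finset.sum_add_distrib]
  refine Finset.sum_congr rfl fun a _ => ?_
  rw [leibniz_lie x (hP.adapted a), leibniz_lie x (hP.adaptedDual a), lie_add]
  abel

lemma aeval_casimir_lie (p : Polynomial ℂ) (x : L) (m : M) :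
    Polynomial.aeval (hP.casimir M) p ⁅x, m⁆ = ⁅x, Polynomial.aeval (hP.casimir M) p m⁆ := by
  induction p using Polynomial.induction_on' with
  | add p q hp hq => simp [hp, hq]
  | monomial n a =>
    have hcomm : Commute (hP.casimir M) (toEnd ℂ L M x) := LinearMap.ext fun m => hP.casimir_lie x m
    have haeval : Commute (Polynomial.aeval (hP.casimir M) (Polynomial.monomial n a))
        (toEnd ℂ L M x) := by
      rw [Polynomial.aeval_monomial]
      exact Commute.mul_left (Algebra.commutes a _) (hcomm.pow_left n)
    exact LinearMap.congr_fun haeval m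

/-- `v` is a (possibly zero) vector of the integral weight `χ`. -/
def IsWeightVec (χ : IntegralWeight P) (v : M) : Prop := ∀ h : H, ⁅(h : L), v⁆ = χ.1 h • v

namespace IsWeightVec

variable {χ : IntegralWeight P} {v : M} (hv : IsWeightVec χ v)
include hv

omit [LieModule ℂ L M] in
lemma map {T : Module.End ℂ M} (hT : ∀ (x : L) m, T ⁅x, m⁆ = ⁅x, T m⁆) :
    IsWeightVec χ (T v) := fun h => by
  rw [← hT, hv, map_smul]

lemma posVec (β : PosRoot P) : IsWeightVec (χ + rootWeight P β.1) ⁅hP.posVec β, v⁆ := fun h => by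
  have hroot : ⁅(h : L), hP.posVec β⁆ = _ := lie_eq_smul_of_mem_rootSpace (hP.posVec_mem β) h
  rw [leibniz_lie, hroot, hv, smul_lie, lie_smul,
    ← add_smul, add_comm]
  rfl

lemma negVec (β : PosRoot P) : IsWeightVec (χ - rootWeight P β.1) ⁅hP.negVec β, v⁆ := fun h => by
  have hroot : ⁅(h : L), hP.negVec β⁆ = _ := lie_eq_smul_of_mem_rootSpace (hP.negVec_mem β) h
  rw [leibniz_lie, hroot, hv, smul_lie, lie_smul,
    ← add_smul, add_comm, Pi.neg_apply, ← sub_eq_add_neg]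
  rfl

omit [LieModule ℂ L M] in
lemma lie_posVec_dualVec_sub (β : PosRoot P) :
    ⁅hP.posVec β, ⁅hP.dualVec β, v⁆⁆ - ⁅hP.dualVec β, ⁅hP.posVec β, v⁆⁆ =
      (hP.rootDatum.form (hP.rootDatum.root β) χ : ℂ) • v := by
  rw [← lie_lie, hP.lie_posVec_dualVec, hv, hP.form_eq]
  rfl

lemma casimir_apply : hP.casimir M v = (hP.rootDatum.form χ χ : ℂ) • v +
    ∑ β, (⁅hP.posVec β, ⁅hP.dualVec β, v⁆⁆ + ⁅hP.dualVec β, ⁅hP.posVec β, v⁆⁆) := by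
  set t := (cartanEquivDual H).symm χ.1
  have hcartan (j) : ⁅(Module.finBasis ℂ H j : L),
      ⁅((cartanEquivDual H).symm ((Module.finBasis ℂ H).coord j) : L), v⁆⁆ =
      ((Module.finBasis ℂ H).repr t j * χ.1 (Module.finBasis ℂ H j)) • v := by
    rw [hv, lie_smul, hv, smul_smul, ← traceForm_cartanEquivDual_symm χ.1,
      LieModule.traceForm_comm, traceForm_cartanEquivDual_symm, Module.Basis.coord_apply]
  have hform : ∑ j, (Module.finBasis ℂ H).repr t j * χ.1 (Module.finBasis ℂ H j) =
      hP.rootDatum.form χ χ := by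
    rw [hP.form_eq]
    conv_rhs => rw [← (Module.finBasis ℂ H).sum_repr ((cartanEquivDual H).symm χ.1)]
    rw [map_sum]
    simp only [map_smul, smul_eq_mul, t]
  rw [hP.casimir_apply, Fintype.sum_sum_type, Fintype.sum_sum_type, Finset.sum_add_distrib]
  simp only [adapted, adaptedDual, Sum.elim_inl, Sum.elim_inr, hcartan]
  rw [← Finset.sum_smul, hform]

end IsWeightVec

lemma eq_of_repr_ne_zero {I : Type*} {b : Module.Basis I ℂ M} {wt : I → IntegralWeight P}
    (hb : ∀ i, IsWeightVec (wt i) (b i)) {χ : IntegralWeight P} {v : M} (hv : IsWeightVec χ v)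
    {i : I} (hi : b.repr v i ≠ 0) : wt i = χ := by
  classical
  refine Subtype.ext (LinearMap.ext fun h => ?_)
  have hcoord : (b.coord i).comp (toEnd ℂ L M (h : L)) = (wt i).1 h • b.coord i :=
    b.ext fun j => by
      rw [LinearMap.comp_apply, toEnd_apply_apply, hb, map_smul, LinearMap.smul_apply,
        Module.Basis.coord_apply, Module.Basis.repr_self_apply]
      split_ifs with hij
      · rw [hij]
      · rw [smul_zero, smul_zero]
  have happly := LinearMap.congr_fun hcoord v
  rw [LinearMap.comp_apply, toEnd_apply_apply, hv, map_smul] at happly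
  exact (smul_left_injective ℂ hi happly).symm

end IsPositiveSystem

/-! ## Highest weight vectors from formal characters -/

namespace IsPositiveSystem

open LieAlgebra LieAlgebra.IsKilling LieModule
open AddMonoidAlgebra (single)

variable {L : Type*} [LieRing L] [LieAlgebra ℂ L] [FiniteDimensional ℂ L]
  [LieAlgebra.IsKilling ℂ L] {H : LieSubalgebra ℂ L} [H.IsCartanSubalgebra]
  {P : Set (H → ℂ)} (hP : IsPositiveSystem H P)
  {M : Type*} [AddCommGroup M] [Module ℂ M]

lemma exists_mem_posCone_of_coeff_formalTrace_mul_ne_zero {I : Type*} [Fintype I]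
    {b : Module.Basis I ℂ M} {wt : I → IntegralWeight P} {T : Module.End ℂ M}
    {ν ρ : IntegralWeight P}
    (h : (formalTrace b wt T * hP.rootDatum.weylDenominator ρ).coeff (ν + ρ) ≠ 0) :
    ∃ i, T (b i) ≠ 0 ∧ wt i - ν ∈ hP.rootDatum.posCone := by
  rw [formalTrace_apply, Finset.sum_mul, AddMonoidAlgebra.coeff_sum, Finsupp.finsetSum_apply] at h
  obtain ⟨i, -, hi⟩ := Finset.exists_ne_zero_of_sum_ne_zero h
  rw [AddMonoidAlgebra.coeff_single_mul_apply, ← add_assoc] at hi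
  refine ⟨i, fun h0 => left_ne_zero_of_mul hi (by rw [h0, map_zero, Finsupp.zero_apply]), ?_⟩
  have hmem := hP.rootDatum.neg_mem_posCone_of_coeff_weylDenominator_ne_zero
    (right_ne_zero_of_mul hi)
  rwa [neg_add, neg_neg, ← sub_eq_add_neg] at hmem

variable [LieRingModule L M] [LieModule ℂ L M]

section Casimir

variable {I : Type*} [Fintype I] {b : Module.Basis I ℂ M} {wt : I → IntegralWeight P}
  (hb : ∀ i, IsWeightVec (wt i) (b i)) {T : Module.End ℂ M}
include hb

lemma single_neg_root_mul_formalTrace (hT : ∀ (x : L) m, T ⁅x, m⁆ = ⁅x, T m⁆) (β : PosRoot P) :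
    single (-hP.rootDatum.root β) 1 *
        formalTrace b wt (T * toEnd ℂ L M (hP.posVec β) * toEnd ℂ L M (hP.dualVec β)) =
      formalTrace b wt (T * toEnd ℂ L M (hP.dualVec β) * toEnd ℂ L M (hP.posVec β)) := by
  have hcomm : toEnd ℂ L M (hP.dualVec β) * (T * toEnd ℂ L M (hP.posVec β)) =
      T * toEnd ℂ L M (hP.dualVec β) * toEnd ℂ L M (hP.posVec β) := by
    ext m
    simp [hT]
  rw [← hcomm]
  exact (formalTrace_mul_comm b wt _ fun i j hij =>
    eq_of_repr_ne_zero hb (((hb i).posVec hP β).map hT) hij).symm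

lemma weightDeriv_formalTrace (β : PosRoot P) :
    hP.rootDatum.weightDeriv (hP.rootDatum.root β) (formalTrace b wt T) =
      formalTrace b wt (T * toEnd ℂ L M (hP.posVec β) * toEnd ℂ L M (hP.dualVec β)) -
        formalTrace b wt (T * toEnd ℂ L M (hP.dualVec β) * toEnd ℂ L M (hP.posVec β)) := by
  simp only [formalTrace_apply, map_sum, ← Finset.sum_sub_distrib]
  refine Finset.sum_congr rfl fun i _ => ?_
  have hlie := congrArg T ((hb i).lie_posVec_dualVec_sub hP β)
  rw [map_sub, map_smul] at hlie
  rw [PosRootDatum.weightDeriv_single, ← AddMonoidAlgebra.single_sub, ← Finsupp.sub_apply,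
    ← map_sub]
  simp only [Module.End.mul_apply, toEnd_apply_apply, hlie, map_smul, Finsupp.smul_apply,
    smul_eq_mul]

lemma formalTrace_mul_casimir :
    formalTrace b wt (T * hP.casimir M) = hP.rootDatum.laplacian (formalTrace b wt T) +
      ∑ β, (formalTrace b wt (T * toEnd ℂ L M (hP.posVec β) * toEnd ℂ L M (hP.dualVec β)) +
        formalTrace b wt (T * toEnd ℂ L M (hP.dualVec β) * toEnd ℂ L M (hP.posVec β))) := by
  simp only [← map_add]
  rw [← map_sum, formalTrace_apply, formalTrace_apply, formalTrace_apply, map_sum,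
    ← Finset.sum_add_distrib]
  refine Finset.sum_congr rfl fun i _ => ?_
  rw [PosRootDatum.laplacian_single, ← AddMonoidAlgebra.single_add, Module.End.mul_apply,
    (hb i).casimir_apply hP]
  simp [LinearMap.sum_apply]

lemma coeff_formalTrace_mul_casimir (hT : ∀ (x : L) m, T ⁅x, m⁆ = ⁅x, T m⁆)
    {ρ : IntegralWeight P} (hρ : hP.rootDatum.IsRho ρ) (ξ : IntegralWeight P) :
    (formalTrace b wt (T * hP.casimir M) * hP.rootDatum.weylDenominator ρ).coeff ξ =
      (hP.rootDatum.form ξ ξ - hP.rootDatum.form ρ ρ : ℂ) *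
        (formalTrace b wt T * hP.rootDatum.weylDenominator ρ).coeff ξ := by
  refine hρ.coeff_mul_weylDenominator_of_casimir
    (T := fun β => formalTrace b wt
      (T * toEnd ℂ L M (hP.posVec β) * toEnd ℂ L M (hP.dualVec β))) (fun β => ?_) ?_ ξ
  · rw [hP.single_neg_root_mul_formalTrace hb hT, hP.weightDeriv_formalTrace hb]
  · simp only [hP.single_neg_root_mul_formalTrace hb hT]
    exact hP.formalTrace_mul_casimir hb

lemma coeff_formalTrace_aeval_casimir {ρ : IntegralWeight P} (hρ : hP.rootDatum.IsRho ρ)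
    (p : Polynomial ℂ) (ξ : IntegralWeight P) :
    (formalTrace b wt (Polynomial.aeval (hP.casimir M) p) *
        hP.rootDatum.weylDenominator ρ).coeff ξ =
      p.eval (hP.rootDatum.form ξ ξ - hP.rootDatum.form ρ ρ : ℂ) *
        (formalCharacter wt * hP.rootDatum.weylDenominator ρ).coeff ξ := by
  induction p using Polynomial.induction_on with
  | C a =>
    rw [Polynomial.aeval_C, Algebra.algebraMap_eq_smul_one, map_smul, formalTrace_one,
      smul_mul_assoc, AddMonoidAlgebra.coeff_smul, Finsupp.smul_apply, smul_eq_mul,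
      Polynomial.eval_C]
  | add p q hp hq =>
    rw [map_add, map_add, add_mul, AddMonoidAlgebra.coeff_add, Finsupp.add_apply, hp, hq,
      Polynomial.eval_add, add_mul]
  | monomial n a ih =>
    rw [pow_succ, ← mul_assoc, map_mul, Polynomial.aeval_X,
      hP.coeff_formalTrace_mul_casimir hb (hP.aeval_casimir_lie _) hρ, ih, Polynomial.eval_mul_X]
    ring

end Casimir

/-- The highest weight vectors of integral weight: nonzero weight vectors killed by the chosen
positive root vectors. See `IsHighestWeightVec.isHWVec` for the comparison with `IsHWVec`. -/
structure IsHighestWeightVec (χ : IntegralWeight P) (v : M) : Prop where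
  ne_zero : v ≠ 0
  isWeightVec : IsWeightVec χ v
  lie_posVec : ∀ β, ⁅hP.posVec β, v⁆ = 0

namespace IsHighestWeightVec

variable {hP} {κ : IntegralWeight P} {v : M} (hv : hP.IsHighestWeightVec κ v)
include hv

lemma isHWVec : IsHWVec H P κ.1 v := by
  refine ⟨hv.ne_zero, weightSpace_le_genWeightSpace M _ ?_, fun α hα x hx => ?_⟩
  · rw [mem_weightSpace]
    exact hv.isWeightVec
  · obtain ⟨k, rfl⟩ := hP.exists_eq_smul_posVec (β := ⟨⟨α, (hP.1 α hα).2⟩, hα⟩) hx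
    rw [smul_lie, hv.lie_posVec, smul_zero]

variable {ρ : IntegralWeight P} (hρ : hP.rootDatum.IsRho ρ)
include hρ

lemma casimir_apply : hP.casimir M v =
    (hP.rootDatum.form (κ + ρ) (κ + ρ) - hP.rootDatum.form ρ ρ : ℂ) • v := by
  have hlie (β) : ⁅hP.posVec β, ⁅hP.dualVec β, v⁆⁆ + ⁅hP.dualVec β, ⁅hP.posVec β, v⁆⁆ =
      (hP.rootDatum.form (hP.rootDatum.root β) κ : ℂ) • v := by
    rw [← hv.isWeightVec.lie_posVec_dualVec_sub hP, hv.lie_posVec, lie_zero, add_zero, sub_zero]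
  rw [hv.isWeightVec.casimir_apply hP, Finset.sum_congr rfl fun β _ => hlie β, ← Finset.sum_smul,
    ← Rat.cast_sum, hρ.sum_form_root, ← add_smul]
  congr 1
  rw [map_add, map_add, LinearMap.add_apply, LinearMap.add_apply, hP.rootDatum.form_comm ρ κ]
  push_cast
  ring

lemma form_eq_of_aeval_casimir_eq_zero {c : ℂ} {k : ℕ}
    (hk : Polynomial.aeval (hP.casimir M) ((Polynomial.X - Polynomial.C c) ^ k) v = 0) :
    (hP.rootDatum.form (κ + ρ) (κ + ρ) - hP.rootDatum.form ρ ρ : ℂ) = c := by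
  rw [Module.End.aeval_apply_of_hasEigenvector
    ⟨Module.End.mem_eigenspace_iff.2 (hv.casimir_apply hρ), hv.ne_zero⟩,
    smul_eq_zero_iff_left hv.ne_zero, Polynomial.eval_pow, Polynomial.eval_sub,
    Polynomial.eval_X, Polynomial.eval_C] at hk
  exact sub_eq_zero.1 (eq_zero_of_pow_eq_zero hk)

end IsHighestWeightVec

section WeightBasis

variable {I : Type*} {b : Module.Basis I ℂ M} {wt : I → IntegralWeight P}
  (hb : ∀ i, IsWeightVec (wt i) (b i)) {ρ : IntegralWeight P} (hρ : hP.rootDatum.IsRho ρ)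
include hb

lemma exists_wt_eq {χ : IntegralWeight P} {v : M} (hv0 : v ≠ 0) (hv : IsWeightVec χ v) :
    ∃ i, wt i = χ := by
  obtain ⟨i, hi⟩ := Finsupp.ne_iff.1 ((b.repr.map_ne_zero_iff (x := v)).2 hv0)
  exact ⟨i, eq_of_repr_ne_zero hb hv hi⟩

include hρ

lemma exists_isHighestWeightVec_of_mem_ker [Finite I] {N : Module.End ℂ M}
    (hN : ∀ (x : L) m, N ⁅x, m⁆ = ⁅x, N m⁆) {χ : IntegralWeight P} {v : M} (hv0 : v ≠ 0)
    (hv : IsWeightVec χ v) (hNv : N v = 0) :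
    ∃ κ u, κ - χ ∈ hP.rootDatum.posCone ∧ hP.IsHighestWeightVec κ u ∧ N u = 0 := by
  classical
  set S := (Set.finite_range wt).toFinset.filter fun κ => κ - χ ∈ hP.rootDatum.posCone ∧
    ∃ u : M, u ≠ 0 ∧ IsWeightVec κ u ∧ N u = 0
  have hS {κ} {u : M} (hu0 : u ≠ 0) (hu : IsWeightVec κ u) (hκ : κ - χ ∈ hP.rootDatum.posCone)
      (hNu : N u = 0) : κ ∈ S := by
    obtain ⟨i, hi⟩ := exists_wt_eq hb hu0 hu
    exact Finset.mem_filter.2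
      ⟨(Set.finite_range wt).mem_toFinset.2 ⟨i, hi⟩, hκ, u, hu0, hu, hNu⟩
  have hχ : χ ∈ S := hS hv0 hv (by rw [sub_self]; exact zero_mem _) hNv
  obtain ⟨κ, hκ, hmax⟩ := S.exists_max_image (fun κ => hP.rootDatum.form κ ρ) ⟨χ, hχ⟩
  obtain ⟨-, hκχ, u, hu0, hu, hNu⟩ := Finset.mem_filter.1 hκ
  refine ⟨κ, u, hκχ, ⟨hu0, hu, fun β => ?_⟩, hNu⟩
  by_contra h0
  have hle := hmax (κ + hP.rootDatum.root β) (hS h0 (hu.posVec hP β) ?_ ?_)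
  · rw [map_add, LinearMap.add_apply] at hle
    linarith [hρ.form_root_pos β]
  · rw [add_sub_right_comm]
    exact add_mem hκχ (hP.rootDatum.root_mem_posCone β)
  · rw [hN, hNu, lie_zero]

-- The generalized Casimir eigenspaces split the formal character: only the one of eigenvalue
-- `(ν + ρ, ν + ρ) - (ρ, ρ)` contributes to the coefficient at `ν + ρ`, and among the weights above
-- a dominant `ν` only `ν` itself has this eigenvalue.
lemma exists_isHighestWeightVec [Fintype I] {ν : IntegralWeight P} (hν : hP.rootDatum.IsDom ν)
    (h : (formalCharacter wt * hP.rootDatum.weylDenominator ρ).coeff (ν + ρ) ≠ 0) :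
    ∃ v : M, hP.IsHighestWeightVec ν v := by
  have : FiniteDimensional ℂ M := b.finiteDimensional_of_finite
  set c : ℂ := hP.rootDatum.form (ν + ρ) (ν + ρ) - hP.rootDatum.form ρ ρ with hc
  obtain ⟨r, hr, hdvd⟩ := Polynomial.exists_eq_pow_rootMultiplicity_mul_and_not_dvd
    (minpoly ℂ (hP.casimir M)) (minpoly.ne_zero (Algebra.IsIntegral.isIntegral _)) c
  set N := Polynomial.aeval (hP.casimir M)
    ((Polynomial.X - Polynomial.C c) ^ (minpoly ℂ (hP.casimir M)).rootMultiplicity c)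
  have hrc : r.eval c ≠ 0 := fun h0 => hdvd (Polynomial.dvd_iff_isRoot.2 h0)
  obtain ⟨i, hi, hiν⟩ := hP.exists_mem_posCone_of_coeff_formalTrace_mul_ne_zero
    ((hP.coeff_formalTrace_aeval_casimir hb hρ r (ν + ρ)).trans_ne (mul_ne_zero hrc h))
  have hNr : N (Polynomial.aeval (hP.casimir M) r (b i)) = 0 := by
    rw [← Module.End.mul_apply, ← map_mul, ← hr, minpoly.aeval, LinearMap.zero_apply]
  obtain ⟨κ, u, hκ, hu, hNu⟩ := hP.exists_isHighestWeightVec_of_mem_ker hb hρ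
    (hP.aeval_casimir_lie _) hi ((hb i).map (hP.aeval_casimir_lie r)) hNr
  have hform : hP.rootDatum.form (κ + ρ) (κ + ρ) = hP.rootDatum.form (ν + ρ) (ν + ρ) := by
    have hsub := hu.form_eq_of_aeval_casimir_eq_zero hρ hNu
    exact_mod_cast sub_left_injective (hsub.trans hc)
  have hκν : κ - ν ∈ hP.rootDatum.posCone := by
    rw [← sub_add_sub_cancel]
    exact add_mem hκ hiν
  exact ⟨u, hρ.eq_of_form_add_eq hν hκν hform ▸ hu⟩

end WeightBasis

end IsPositiveSystem

/-! ## Weyl group invariance of weight multiplicities -/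

section Sl2

open LieModule

variable {K L M : Type*} [Field K] [CharZero K] [LieRing L] [LieAlgebra K L]
  [AddCommGroup M] [Module K M] [LieRingModule L M] [LieModule K L M]
  {h e f : L} (t : IsSl2Triple h e f) {v : M}
include t

omit [CharZero K] in
lemma lie_f_pow_succ_toEnd_e {a : K} (hv : ⁅h, v⁆ = a • v) (n : ℕ) :
    ⁅f, (toEnd K L M e ^ (n + 1)) v⁆ =
      (toEnd K L M e ^ (n + 1)) ⁅f, v⁆ - ((n + 1) * (a + n)) • (toEnd K L M e ^ n) v := by
  have hfe : ⁅f, e⁆ = -h := by rw [← lie_skew, t.lie_e_f]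
  induction n with
  | zero => simp [leibniz_lie f e, hfe, hv, neg_add_eq_sub]
  | succ n ih =>
    have hstep (m : M) : ⁅e, (toEnd K L M e ^ n) m⁆ = (toEnd K L M e ^ (n + 1)) m := by
      rw [pow_succ', Module.End.mul_apply, toEnd_apply_apply]
    rw [pow_succ', Module.End.mul_apply, toEnd_apply_apply, leibniz_lie f, hfe, neg_lie,
      t.lie_h_pow_toEnd_e hv, ih, lie_sub, lie_smul, hstep, Module.End.mul_apply,
      toEnd_apply_apply, neg_add_eq_sub, sub_sub, ← add_smul]
    congr 2
    push_cast
    ring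

lemma exists_nat_eq_neg_of_lie_e_lie_f_eq_zero [FiniteDimensional K M] {a : K} (h0 : v ≠ 0)
    (hv : ⁅h, v⁆ = a • v) (hef : ⁅e, ⁅f, v⁆⁆ = 0) : ∃ n : ℕ, a = -n := by
  have hpow (n : ℕ) : (toEnd K L M e ^ (n + 1)) ⁅f, v⁆ = 0 := by
    rw [pow_succ, Module.End.mul_apply, toEnd_apply_apply, hef, map_zero]
  have hnil : ∃ n : ℕ, (toEnd K L M e ^ n) v = 0 := by
    by_contra! hne
    have hinj : Function.Injective fun n : ℕ => a + 2 * (n : K) := fun n m hnm => by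
      simpa using hnm
    refine Set.infinite_range_of_injective hinj
      ((toEnd K L M h).finite_hasEigenvalue.subset ?_)
    rintro _ ⟨n, rfl⟩
    exact Module.End.hasEigenvalue_of_hasEigenvector
      ⟨Module.End.mem_eigenspace_iff.2 (t.lie_h_pow_toEnd_e hv n), hne n⟩
  obtain ⟨n, hn, hn'⟩ := Nat.exists_not_and_succ_of_not_zero_of_exists
    (p := fun n => (toEnd K L M e ^ n) v = 0) (by simpa using h0) hnil
  have hlie := lie_f_pow_succ_toEnd_e t hv n
  rw [hn', lie_zero, hpow, zero_sub, eq_comm, neg_eq_zero, smul_eq_zero_iff_left hn,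
    mul_eq_zero] at hlie
  exact ⟨n, eq_neg_of_add_eq_zero_left (hlie.resolve_left (Nat.cast_add_one_ne_zero n))⟩

omit [CharZero K] in
lemma pow_toEnd_e_lie_f_eq_zero {k : ℕ} (hv : ⁅h, v⁆ = (1 - k : K) • v)
    (hk : (toEnd K L M e ^ k) v = 0) : (toEnd K L M e ^ k) ⁅f, v⁆ = 0 := by
  cases k with
  | zero => rw [pow_zero, Module.End.one_apply] at hk ⊢; rw [hk, lie_zero]
  | succ k =>
    have hlie := lie_f_pow_succ_toEnd_e t hv k
    rw [hk, lie_zero] at hlie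
    simpa using hlie.symm

lemma eq_zero_of_pow_toEnd_e_eq_zero [FiniteDimensional K M] {k : ℕ} {m : ℤ} (hm : m + k ≤ 0)
    (hv : ⁅h, v⁆ = (m : K) • v) (hk : (toEnd K L M e ^ k) v = 0) : v = 0 := by
  induction k generalizing m v with
  | zero => simpa using hk
  | succ k ih =>
    by_contra h0
    have hev : ⁅h, ⁅e, v⁆⁆ = ((m + 2 : ℤ) : K) • ⁅e, v⁆ := by
      simpa using t.lie_h_pow_toEnd_e hv 1
    rw [pow_succ, Module.End.mul_apply, toEnd_apply_apply] at hk
    have hfe : ⁅f, ⁅e, v⁆⁆ = 0 := by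
      by_cases hmk : m + 2 + k ≤ 0
      · rw [ih hmk hev hk, lie_zero]
      · have hmk : m = -1 - k := by push_cast at hm; lia
        refine ih (m := m) (by lia) ?_ (pow_toEnd_e_lie_f_eq_zero t ?_ hk)
        · rw [leibniz_lie, t.lie_lie_smul_f K, hev, neg_lie, smul_lie, lie_smul, ← neg_smul,
            ← add_smul]
          push_cast
          ring_nf
        · rw [hev, hmk]
          push_cast
          ring_nf
    obtain ⟨n, hn⟩ := exists_nat_eq_neg_of_lie_e_lie_f_eq_zero (K := K) t.symm (a := -m) h0
      (by rw [neg_lie, hv, neg_smul]) hfe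
    have hmn : m = n := by exact_mod_cast neg_injective hn
    push_cast at hm
    lia

end Sl2

namespace IsPositiveSystem

open LieAlgebra LieAlgebra.IsKilling LieModule
open AddMonoidAlgebra (single)

variable {L : Type*} [LieRing L] [LieAlgebra ℂ L] [FiniteDimensional ℂ L]
  [LieAlgebra.IsKilling ℂ L] {H : LieSubalgebra ℂ L} [H.IsCartanSubalgebra]
  {P : Set (H → ℂ)} (hP : IsPositiveSystem H P)
  {M : Type*} [AddCommGroup M] [Module ℂ M] [LieRingModule L M] [LieModule ℂ L M]

namespace IsWeightVec

variable {χ : IntegralWeight P} {v : M} (hv : IsWeightVec χ v)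
include hv

omit [LieModule ℂ L M] in
lemma lie_coroot (β : PosRoot P) :
    ⁅(coroot β.1 : L), v⁆ = ((hP.rootDatum.coroot β χ : ℤ) : ℂ) • v :=
  (hv _).trans (congrArg (· • v) (cast_pairing β χ).symm)

lemma pow_posVec (β : PosRoot P) (n : ℕ) : IsWeightVec (χ + n • hP.rootDatum.root β)
    ((toEnd ℂ L M (hP.posVec β) ^ n) v) := by
  induction n with
  | zero => simpa using hv
  | succ n ih =>
    rw [succ_nsmul, ← add_assoc, pow_succ', Module.End.mul_apply, toEnd_apply_apply]
    exact ih.posVec hP β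

lemma pow_negVec (β : PosRoot P) (n : ℕ) : IsWeightVec (χ - n • hP.rootDatum.root β)
    ((toEnd ℂ L M (hP.negVec β) ^ n) v) := by
  induction n with
  | zero => simpa using hv
  | succ n ih =>
    rw [succ_nsmul, ← sub_sub, pow_succ', Module.End.mul_apply, toEnd_apply_apply]
    exact ih.negVec hP β

end IsWeightVec

section WeightBasis

variable {I : Type*} {b : Module.Basis I ℂ M} {wt : I → IntegralWeight P}
  (hb : ∀ i, IsWeightVec (wt i) (b i))
include hb

lemma weightSpace_eq_span (χ : IntegralWeight P) :
    (weightSpace M (χ.1 : H → ℂ)).toSubmodule =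
      Submodule.span ℂ (Set.range fun i : {i // wt i = χ} => b i) := by
  refine le_antisymm (fun v hv => ?_) (Submodule.span_le.2 ?_)
  · rw [← b.linearCombination_repr v]
    refine Submodule.sum_mem _ fun i hi => Submodule.smul_mem _ _ (Submodule.subset_span ?_)
    exact ⟨⟨i, eq_of_repr_ne_zero hb ((mem_weightSpace _ _).1 hv) (Finsupp.mem_support_iff.1 hi)⟩,
      rfl⟩
  · rintro _ ⟨⟨i, rfl⟩, rfl⟩
    exact (mem_weightSpace _ _).2 (hb i)

lemma coeff_formalCharacter [Fintype I] (χ : IntegralWeight P) :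
    (formalCharacter wt).coeff χ = Module.finrank ℂ (weightSpace M (χ.1 : H → ℂ)) := by
  classical
  have hfinrank : Module.finrank ℂ (weightSpace M (χ.1 : H → ℂ)).toSubmodule =
      Fintype.card {i // wt i = χ} := by
    rw [weightSpace_eq_span hb]
    exact finrank_span_eq_card (b.linearIndependent.comp _ Subtype.val_injective)
  change _ = ((Module.finrank ℂ (weightSpace M (χ.1 : H → ℂ)).toSubmodule : ℕ) : ℂ)
  rw [hfinrank, formalCharacter, AddMonoidAlgebra.coeff_sum, Finsupp.finsetSum_apply,
    Fintype.card_subtype, Finset.card_filter]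
  push_cast
  exact Finset.sum_congr rfl fun i _ => by
    rw [AddMonoidAlgebra.coeff_single, Finsupp.single_apply]

end WeightBasis

variable [FiniteDimensional ℂ M]

lemma exists_injOn_isWeightVec_refl (β : PosRoot P) (χ : IntegralWeight P) :
    ∃ T : Module.End ℂ M, (∀ v, IsWeightVec χ v → IsWeightVec (hP.rootDatum.refl β χ) (T v)) ∧
      ∀ v, IsWeightVec χ v → T v = 0 → v = 0 := by
  obtain ⟨n, hn | hn⟩ := Int.eq_nat_or_neg (hP.rootDatum.coroot β χ)
  · refine ⟨toEnd ℂ L M (hP.negVec β) ^ n, fun v hv => ?_, fun v hv h0 => ?_⟩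
    · rw [PosRootDatum.refl_apply, hn, natCast_zsmul]
      exact hv.pow_negVec hP β n
    · refine eq_zero_of_pow_toEnd_e_eq_zero (hP.isSl2Triple β).symm
        (neg_add_cancel (n : ℤ)).le ?_ h0
      rw [neg_lie, hv.lie_coroot hP, hn, Int.cast_neg, neg_smul]
  · refine ⟨toEnd ℂ L M (hP.posVec β) ^ n, fun v hv => ?_, fun v hv h0 => ?_⟩
    · rw [PosRootDatum.refl_apply, hn, neg_smul, sub_neg_eq_add, natCast_zsmul]
      exact hv.pow_posVec hP β n
    · exact eq_zero_of_pow_toEnd_e_eq_zero (hP.isSl2Triple β) (neg_add_cancel (n : ℤ)).le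
        (by rw [hv.lie_coroot hP, hn]) h0

variable (M) in
lemma finrank_weightSpace_le_refl (β : PosRoot P) (χ : IntegralWeight P) :
    Module.finrank ℂ (weightSpace M (χ.1 : H → ℂ)) ≤
      Module.finrank ℂ (weightSpace M ((hP.rootDatum.refl β χ).1 : H → ℂ)) := by
  obtain ⟨T, hT, hT0⟩ := hP.exists_injOn_isWeightVec_refl (M := M) β χ
  have hmaps : ∀ v ∈ (weightSpace M (χ.1 : H → ℂ)).toSubmodule,
      T v ∈ (weightSpace M ((hP.rootDatum.refl β χ).1 : H → ℂ)).toSubmodule := fun v hv =>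
    (mem_weightSpace _ _).2 (hT v ((mem_weightSpace _ _).1 hv))
  refine LinearMap.finrank_le_finrank_of_injective (f := T.restrict hmaps)
    ((injective_iff_map_eq_zero _).2 fun v hv => Subtype.ext ?_)
  exact hT0 v ((mem_weightSpace _ _).1 v.2) (congrArg Subtype.val hv)

variable (M) in
lemma finrank_weightSpace_refl (β : PosRoot P) (χ : IntegralWeight P) :
    Module.finrank ℂ (weightSpace M ((hP.rootDatum.refl β χ).1 : H → ℂ)) =
      Module.finrank ℂ (weightSpace M (χ.1 : H → ℂ)) := by
  refine le_antisymm ?_ (hP.finrank_weightSpace_le_refl M β χ)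
  have hle := hP.finrank_weightSpace_le_refl M β (hP.rootDatum.refl β χ)
  rwa [PosRootDatum.refl_refl] at hle

lemma isSkew_formalCharacter_mul_weylDenominator {I : Type*} [Fintype I]
    {b : Module.Basis I ℂ M} {wt : I → IntegralWeight P} (hb : ∀ i, IsWeightVec (wt i) (b i))
    {ρ : IntegralWeight P} (hρ : hP.rootDatum.IsRho ρ) :
    hP.rootDatum.IsSkew (formalCharacter wt * hP.rootDatum.weylDenominator ρ).coeff :=
  hρ.isSkew_mul_weylDenominator fun i _ χ => by
    rw [coeff_formalCharacter hb, coeff_formalCharacter hb, hP.finrank_weightSpace_refl]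

end IsPositiveSystem

/-! ## Irreducible representations -/

namespace IsPositiveSystem

open LieAlgebra LieAlgebra.IsKilling LieModule

variable {L : Type*} [LieRing L] [LieAlgebra ℂ L] [FiniteDimensional ℂ L]
  [LieAlgebra.IsKilling ℂ L] {H : LieSubalgebra ℂ L} [H.IsCartanSubalgebra]
  {P : Set (H → ℂ)} (hP : IsPositiveSystem H P)
  {V : Type*} [AddCommGroup V] [Module ℂ V] [LieRingModule L V] [LieModule ℂ L V]

variable (V) in
/-- The vectors killed by all positive root vectors, as a representation of the Cartan
subalgebra. -/
noncomputable def positiveNilradicalInvariants : LieSubmodule ℂ H V where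
  carrier := {v | ∀ β, ⁅hP.posVec β, v⁆ = 0}
  add_mem' {a b} ha hb β := by rw [lie_add, ha, hb, add_zero]
  zero_mem' β := lie_zero _
  smul_mem' c v hv β := by rw [lie_smul, hv, smul_zero]
  lie_mem {h v} hv β := by
    have hroot : ⁅(h : L), hP.posVec β⁆ = _ := lie_eq_smul_of_mem_rootSpace (hP.posVec_mem β) h
    change ⁅hP.posVec β, ⁅(h : L), v⁆⁆ = 0
    rw [leibniz_lie, hv, lie_zero, add_zero, ← lie_skew, hroot, neg_lie, smul_lie, hv, smul_zero,
      neg_zero]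

variable [FiniteDimensional ℂ V]

-- Membership in a generalized weight space is upgraded to a weight vector by applying Lie's theorem
-- inside the invariants of the positive root vectors.
lemma exists_weightVec_of_isHWVec {lam : H → ℂ} {v : V} (hv : IsHWVec H P lam v) :
    ∃ χ : Module.Dual ℂ H, χ = lam ∧ ∃ u : V, u ≠ 0 ∧ (∀ h : H, ⁅(h : L), u⁆ = χ h • u) ∧
      ∀ β, ⁅hP.posVec β, u⁆ = 0 := by
  obtain ⟨hv0, hv, hpos⟩ := hv
  set N := hP.positiveNilradicalInvariants V
  have hvN : v ∈ N := fun β => hpos _ β.2 _ (hP.posVec_mem β)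
  have hne : genWeightSpace N lam ≠ ⊥ := fun hbot => by
    have hmem : (⟨v, hvN⟩ : N) ∈ genWeightSpace N lam := by
      rw [← comap_genWeightSpace_eq_of_injective (f := N.incl) N.injective_incl]
      exact hv
    rw [hbot, LieSubmodule.mem_bot] at hmem
    exact hv0 (congrArg Subtype.val hmem)
  let χ : Weight ℂ H N := ⟨lam, hne⟩
  obtain ⟨⟨u, hu⟩, hu0, hχ⟩ := exists_forall_lie_eq_smul ℂ H N χ
  exact ⟨Weight.toLinear ℂ H N χ, rfl, u, fun h0 => hu0 (Subtype.ext h0),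
    fun h => congrArg Subtype.val (hχ h), hu⟩

lemma exists_nat_eq_apply_coroot {χ : Module.Dual ℂ H} {v : V} (hv0 : v ≠ 0)
    (hv : ∀ h : H, ⁅(h : L), v⁆ = χ h • v) {β : PosRoot P} (hβ : ⁅hP.posVec β, v⁆ = 0) :
    ∃ n : ℕ, χ (coroot β.1) = n :=
  IsSl2Triple.HasPrimitiveVectorWith.exists_nat (t := hP.isSl2Triple β) ⟨hv0, hv _, hβ⟩

lemma exists_isHighestWeightVec_of_isHWVec {lam : H → ℂ} {v : V} (hv : IsHWVec H P lam v) :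
    ∃ χ : IntegralWeight P, χ.1 = lam ∧ ∃ u : V, hP.IsHighestWeightVec χ u := by
  obtain ⟨χ, rfl, u, hu0, hu, hpos⟩ := hP.exists_weightVec_of_isHWVec hv
  have hintegral (β : PosRoot P) : ∃ k : ℤ, (k : ℂ) = χ (coroot β.1) := by
    obtain ⟨n, hn⟩ := hP.exists_nat_eq_apply_coroot hu0 hu (hpos β)
    exact ⟨n, by rw [hn, Int.cast_natCast]⟩
  exact ⟨⟨χ, hintegral⟩, rfl, u, hu0, hu, hpos⟩

variable {hP} in
lemma IsHighestWeightVec.isDom {χ : IntegralWeight P} {v : V} (hv : hP.IsHighestWeightVec χ v) :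
    hP.rootDatum.IsDom χ :=
  hP.isDom_of_forall_exists_nat fun β =>
    hP.exists_nat_eq_apply_coroot hv.ne_zero hv.isWeightVec (hv.lie_posVec β)

omit [FiniteDimensional ℂ V]

/-- `hP.IsLowered χ v ψ u` says that `u` arises from `v` by applying negative root vectors one
after the other, which changes the weight `χ` into `ψ`. -/
inductive IsLowered (χ : IntegralWeight P) (v : V) : IntegralWeight P → V → Prop
  | refl : IsLowered χ v χ v
  | lie_negVec {ψ : IntegralWeight P} {u : V} (β : PosRoot P) :
      IsLowered χ v ψ u → IsLowered χ v (ψ - hP.rootDatum.root β) ⁅hP.negVec β, u⁆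

variable {hP} {χ κ : IntegralWeight P} {v : V}

namespace IsLowered

variable {ψ : IntegralWeight P} {u : V}

lemma isWeightVec (h : hP.IsLowered χ v ψ u) (hv : IsWeightVec χ v) : IsWeightVec ψ u := by
  induction h with
  | refl => exact hv
  | lie_negVec β _ ih => exact ih.negVec hP β

omit [Module ℂ V] [LieModule ℂ L V] in
lemma sub_mem_posCone (h : hP.IsLowered χ v ψ u) : χ - ψ ∈ hP.rootDatum.posCone := by
  induction h with
  | refl => rw [sub_self]; exact zero_mem _
  | lie_negVec β _ ih =>
    rw [← sub_add]
    exact add_mem ih (hP.rootDatum.root_mem_posCone β)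

end IsLowered

lemma lie_negVec_mem_span_isLowered (β : PosRoot P) {u : V}
    (hu : u ∈ Submodule.span ℂ {u | ∃ ψ, hP.IsLowered χ v ψ u}) :
    ⁅hP.negVec β, u⁆ ∈ Submodule.span ℂ {u | ∃ ψ, hP.IsLowered χ v ψ u} := by
  suffices Submodule.span ℂ {u | ∃ ψ, hP.IsLowered χ v ψ u} ≤
      (Submodule.span ℂ {u | ∃ ψ, hP.IsLowered χ v ψ u}).comap (toEnd ℂ L V (hP.negVec β)) from
    this hu
  exact Submodule.span_le.2 fun u ⟨_, hu⟩ => Submodule.subset_span ⟨_, hu.lie_negVec β⟩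

namespace IsHighestWeightVec

variable (hv : hP.IsHighestWeightVec χ v)
include hv

lemma lie_mem_span_isLowered {ψ : IntegralWeight P} {u : V} (hu : hP.IsLowered χ v ψ u) (x : L) :
    ⁅x, u⁆ ∈ Submodule.span ℂ {u | ∃ ψ, hP.IsLowered χ v ψ u} := by
  set S := Submodule.span ℂ {u | ∃ ψ, hP.IsLowered χ v ψ u}
  have hvS : v ∈ S := Submodule.subset_span ⟨χ, .refl⟩
  induction hu generalizing x with
  | refl =>
    have htop : S.comap ((toEnd ℂ L V : L →ₗ[ℂ] Module.End ℂ V).flip v) = ⊤ := by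
      refine hP.eq_top_of_posVec_mem_of_negVec_mem (fun h hh => ?_) (fun β => ?_)
        fun β => lie_negVec_mem_span_isLowered β hvS
      · have hlie : ⁅h, v⁆ = χ.1 ⟨h, hh⟩ • v := hv.isWeightVec ⟨h, hh⟩
        change ⁅h, v⁆ ∈ S
        exact hlie ▸ S.smul_mem _ hvS
      · change ⁅hP.posVec β, v⁆ ∈ S
        exact hv.lie_posVec β ▸ S.zero_mem
    exact htop.ge (Submodule.mem_top : x ∈ ⊤)
  | lie_negVec β _ ih =>
    rw [leibniz_lie]
    exact S.add_mem (ih _) (lie_negVec_mem_span_isLowered β (ih x))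

variable [IsIrreducible ℂ L V]

lemma span_isLowered_eq_top : Submodule.span ℂ {u | ∃ ψ, hP.IsLowered χ v ψ u} = ⊤ := by
  set S := Submodule.span ℂ {u | ∃ ψ, hP.IsLowered χ v ψ u}
  have hlie (x : L) : S ≤ S.comap (toEnd ℂ L V x) :=
    Submodule.span_le.2 fun u ⟨_, hu⟩ => hv.lie_mem_span_isLowered hu x
  let N : LieSubmodule ℂ L V := { S with lie_mem := fun {x _} hu => hlie x hu }
  have hvN : v ∈ N := Submodule.subset_span ⟨χ, .refl⟩
  have hN : N = ⊤ := (eq_bot_or_eq_top N).resolve_left fun hbot => by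
    rw [hbot, LieSubmodule.mem_bot] at hvN
    exact hv.ne_zero hvN
  exact congrArg LieSubmodule.toSubmodule hN

variable [FiniteDimensional ℂ V]

lemma exists_basis : ∃ (n : ℕ) (b : Module.Basis (Fin n) ℂ V) (wt : Fin n → IntegralWeight P),
    (∀ i, IsWeightVec (wt i) (b i)) ∧ ∀ i, χ - wt i ∈ hP.rootDatum.posCone := by
  let b := Module.Basis.ofSpan hv.span_isLowered_eq_top.ge
  have : Finite _ := Module.Finite.finite_basis b
  obtain ⟨n, ⟨e⟩⟩ := Finite.exists_equiv_fin
    ((linearIndepOn_empty ℂ id).extend (Set.empty_subset {u : V | ∃ ψ, hP.IsLowered χ v ψ u}))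
  have hb (i : Fin n) : ∃ ψ, hP.IsLowered χ v ψ (b.reindex e i) := by
    rw [Module.Basis.reindex_apply]
    exact Module.Basis.ofSpan_subset hv.span_isLowered_eq_top.ge ⟨_, rfl⟩
  choose wt hwt using hb
  exact ⟨n, b.reindex e, wt, fun i => (hwt i).isWeightVec hv.isWeightVec,
    fun i => (hwt i).sub_mem_posCone⟩

lemma sub_mem_posCone {u : V} (hu0 : u ≠ 0) (hu : IsWeightVec κ u) :
    χ - κ ∈ hP.rootDatum.posCone := by
  obtain ⟨n, b, wt, hb, hwt⟩ := hv.exists_basis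
  obtain ⟨i, rfl⟩ := exists_wt_eq hb hu0 hu
  exact hwt i

lemma eq_of_isHighestWeightVec {u : V} (hu : hP.IsHighestWeightVec κ u) : κ = χ := by
  have hχκ := hv.sub_mem_posCone hu.ne_zero hu.isWeightVec
  have hκχ := hu.sub_mem_posCone hv.ne_zero hv.isWeightVec
  exact sub_eq_zero.1 (hP.rootDatum.eq_zero_of_mem_of_neg_mem hκχ (by rwa [neg_sub]))

end IsHighestWeightVec

section FormalCharacter

variable {I : Type*} [Fintype I] {wt : I → IntegralWeight P}

lemma coeff_formalCharacter_mul_weylDenominator (ρ : IntegralWeight P)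
    (hwt : ∀ i, χ - wt i ∈ hP.rootDatum.posCone) :
    (formalCharacter wt * hP.rootDatum.weylDenominator ρ).coeff (χ + ρ) =
      (formalCharacter wt).coeff χ := by
  classical
  simp only [formalCharacter, Finset.sum_mul, AddMonoidAlgebra.coeff_sum, Finsupp.finsetSum_apply]
  refine Finset.sum_congr rfl fun i _ => ?_
  rw [AddMonoidAlgebra.coeff_single_mul_apply, one_mul, AddMonoidAlgebra.coeff_single,
    Finsupp.single_apply]
  split_ifs with hi
  · rw [hi, neg_add_cancel_left, PosRootDatum.coeff_weylDenominator_self]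
  · by_contra hne
    rw [← add_assoc] at hne
    have hmem := hP.rootDatum.neg_mem_posCone_of_coeff_weylDenominator_ne_zero hne
    rw [neg_add_eq_sub] at hmem
    exact hi (sub_eq_zero.1 (hP.rootDatum.eq_zero_of_mem_of_neg_mem (hwt i) hmem)).symm

lemma coeff_formalCharacter_ne_zero {b : Module.Basis I ℂ V}
    (hb : ∀ i, IsWeightVec (wt i) (b i)) (hv0 : v ≠ 0) (hv : IsWeightVec χ v) :
    (formalCharacter wt).coeff χ ≠ 0 := by
  have : FiniteDimensional ℂ V := b.finiteDimensional_of_finite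
  have hmem : v ∈ weightSpace V (χ.1 : H → ℂ) := (mem_weightSpace _ _).2 hv
  have : Nontrivial (weightSpace V (χ.1 : H → ℂ)) :=
    ⟨⟨v, hmem⟩, 0, fun h0 => hv0 (congrArg Subtype.val h0)⟩
  rw [coeff_formalCharacter hb]
  exact Nat.cast_ne_zero.2 Module.finrank_pos.ne'

end FormalCharacter

lemma IsHighestWeightVec.exists_isWeylCharacter [FiniteDimensional ℂ V] [IsIrreducible ℂ L V]
    (hv : hP.IsHighestWeightVec χ v) {ρ : IntegralWeight P} (hρ : hP.rootDatum.IsRho ρ) :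
    ∃ (n : ℕ) (b : Module.Basis (Fin n) ℂ V) (wt : Fin n → IntegralWeight P),
      (∀ i, IsWeightVec (wt i) (b i)) ∧
        hP.rootDatum.IsWeylCharacter ρ χ (formalCharacter wt) := by
  obtain ⟨n, b, wt, hb, hwt⟩ := hv.exists_basis
  refine ⟨n, b, wt, hb, hP.isSkew_formalCharacter_mul_weylDenominator hb hρ, ?_,
    fun κ hκ hne => ?_⟩
  · rw [coeff_formalCharacter_mul_weylDenominator ρ hwt]
    exact coeff_formalCharacter_ne_zero hb hv.ne_zero hv.isWeightVec
  · by_contra h0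
    obtain ⟨u, hu⟩ := hP.exists_isHighestWeightVec hb hρ hκ h0
    exact hne (hv.eq_of_isHighestWeightVec hu)

variable (hP) in
lemma exists_isWeylCharacter_of_isHWModule [FiniteDimensional ℂ V] {lam : H → ℂ}
    (hV : IsHWModule H P lam V) {ρ : IntegralWeight P} (hρ : hP.rootDatum.IsRho ρ) :
    ∃ χ : IntegralWeight P, χ.1 = lam ∧ hP.rootDatum.IsDom χ ∧
      ∃ (n : ℕ) (b : Module.Basis (Fin n) ℂ V) (wt : Fin n → IntegralWeight P),
        (∀ i, IsWeightVec (wt i) (b i)) ∧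
          hP.rootDatum.IsWeylCharacter ρ χ (formalCharacter wt) := by
  obtain ⟨hirr, v, hv⟩ := hV
  obtain ⟨χ, hχ, u, hu⟩ := hP.exists_isHighestWeightVec_of_isHWVec hv
  exact ⟨χ, hχ, hu.isDom, hu.exists_isWeylCharacter hρ⟩

lemma IsWeightVec.tensorProduct {W : Type*} [AddCommGroup W] [Module ℂ W] [LieRingModule L W]
    [LieModule ℂ L W] {w : W} (hv : IsWeightVec χ v) (hw : IsWeightVec κ w) :
    IsWeightVec (χ + κ) (v ⊗ₜ[ℂ] w) := fun h => by
  rw [TensorProduct.LieModule.lie_tmul_right, hv, hw, TensorProduct.tmul_smul,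
    ← TensorProduct.smul_tmul', ← add_smul]
  rfl

end IsPositiveSystem

theorem PRV_component {L : Type*} [LieRing L] [LieAlgebra ℂ L]
    [FiniteDimensional ℂ L] [LieAlgebra.IsKilling ℂ L]
    (H : LieSubalgebra ℂ L) [H.IsCartanSubalgebra]
    (P : Set (H → ℂ)) (hP : IsPositiveSystem H P)
    {V W : Type*} [AddCommGroup V] [Module ℂ V] [LieRingModule L V] [LieModule ℂ L V]
    [FiniteDimensional ℂ V]
    [AddCommGroup W] [Module ℂ W] [LieRingModule L W] [LieModule ℂ L W]
    [FiniteDimensional ℂ W]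
    (lam mu : H → ℂ)
    (hV : IsHWModule H P lam V) (hW : IsHWModule H P mu W)
    -- `w` is an element of the Weyl group
    (w : (H → ℂ) →ₗ[ℂ] (H → ℂ)) (hw : w ∈ WeylMonoid H)
    -- `ν` is the dominant representative of `λ + wμ`
    (ν : H → ℂ)
    (hν_orbit : ∃ u ∈ WeylMonoid H, u (lam + w mu) = ν)
    (hν_dom : ∀ α : LieModule.Weight ℂ H L, ⇑α ∈ P →
      ∃ k : ℕ, ν (LieAlgebra.IsKilling.coroot α) = (k : ℂ)) :
    -- `V(ν)` occurs in `V(λ) ⊗ V(μ)`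
    ∃ v : V ⊗[ℂ] W, IsHWVec H P ν v := by
  obtain ⟨ρ, hρ⟩ := hP.exists_isRho
  obtain ⟨χ, rfl, hχ, _, b, wt, hb, hcharV⟩ := hP.exists_isWeylCharacter_of_isHWModule hV hρ
  obtain ⟨ψ, rfl, hψ, _, c, wt', hc, hcharW⟩ := hP.exists_isWeylCharacter_of_isHWModule hW hρ
  obtain ⟨u, hu, rfl⟩ := hν_orbit
  obtain ⟨s, hs, hsw⟩ := hP.exists_conj_of_mem_weylMonoid hw
  obtain ⟨t, ht, htu⟩ := hP.exists_conj_of_mem_weylMonoid hu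
  have hν : u (χ.1 + w ψ.1) = (t (χ + s ψ)).1 := by
    rw [hsw, ← htu]
    rfl
  rw [hν] at hν_dom ⊢
  have hdom : hP.rootDatum.IsDom (t (χ + s ψ)) :=
    hP.isDom_of_forall_exists_nat fun β => hν_dom β.1 β.2
  have hconjψ : hP.rootDatum.Conj (-ψ) (-t (s ψ)) := ((hs ψ).trans (ht _)).neg
  have hconjχ : hP.rootDatum.Conj (t (χ + s ψ) + -t (s ψ)) χ := by
    rw [map_add, add_neg_cancel_right]
    exact (ht χ).symm
  have hcoeff := hcharV.coeff_mul_ne_zero hcharW hρ hχ hψ hdom hconjψ hconjχ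
  rw [← IsPositiveSystem.formalCharacter_add_eq_mul] at hcoeff
  obtain ⟨v, hv⟩ := hP.exists_isHighestWeightVec (b := b.tensorProduct c)
    (fun x => Module.Basis.tensorProduct_apply' b c x ▸ (hb x.1).tensorProduct (hc x.2))
    hρ hdom hcoeff
  exact ⟨v, hv.isHWVec⟩
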